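/- Fix real κ > 0 and η > 0. For every ε > 0 there exists f₀ > 0 such that for all f ∈ (0, f₀) and all real R_l, R_u with f^{1/100} < R_l and 2R_l < R_u, the number N of zeros of D_f, counted with multiplicity (each zero weighted by its order of vanishing), lying in the set {z ∈ ℂ : Re z > 0, R_l ≤ |z| < R_u}, is finite and satisfies ((1−ε)/(2πf))·(R_u^{3/2} − (5/3)·R_l^{3/2}) < N < ((1+ε)/(2πf))·((5/3)·R_u^{3/2} − R_l^{3/2}). -/

import Mathlib

open Real

/-- Taylor coefficients of the Airy function `Ai`:
`a₀ = 3^{−2/3}/Γ(2/3)`, `a₁ = −3^{−1/3}/Γ(1/3)`, `a₂ = 0`,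
`a_{k+3} = a_k/((k+3)(k+2))`. -/
noncomputable def airyCoeff : ℕ → ℂ
  | 0 => (3 : ℂ) ^ (-(2 : ℂ) / 3) / Complex.Gamma (2 / 3)
  | 1 => -((3 : ℂ) ^ (-(1 : ℂ) / 3) / Complex.Gamma (1 / 3))
  | 2 => 0
  | (k + 3) => airyCoeff k / (((k : ℂ) + 3) * ((k : ℂ) + 2))

/-- The Airy function `Ai`, as the entire function with the above Taylor
coefficients at `0`. -/
noncomputable def Ai (z : ℂ) : ℂ := ∑' k : ℕ, airyCoeff k * z ^ k

/-- `ω = e^{2πi/3}` -/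
noncomputable def ωc : ℂ := Complex.exp (2 * π * Complex.I / 3)

/-- `W = f^{1/3}·e^{−iπ/6}/(2π)` -/
noncomputable def Wf (f : ℝ) : ℂ :=
  ((f ^ ((1 : ℝ) / 3) : ℝ) : ℂ) * Complex.exp (-(π : ℂ) * Complex.I / 6) / (2 * π)

/-- `α₊(z) = Ai(−ω(z − κf)f^{−2/3})·Ai(−(z − κf)f^{−2/3})` -/
noncomputable def alphaP (κ f : ℝ) (z : ℂ) : ℂ :=
  Ai (-ωc * (z - κ * f) * ((f ^ (-(2 : ℝ) / 3) : ℝ) : ℂ)) *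
    Ai (-(z - κ * f) * ((f ^ (-(2 : ℝ) / 3) : ℝ) : ℂ))

/-- `α₋(z) = Ai(−ω(z + κf)f^{−2/3})·Ai(−(z + κf)f^{−2/3})` -/
noncomputable def alphaM (κ f : ℝ) (z : ℂ) : ℂ :=
  Ai (-ωc * (z + κ * f) * ((f ^ (-(2 : ℝ) / 3) : ℝ) : ℂ)) *
    Ai (-(z + κ * f) * ((f ^ (-(2 : ℝ) / 3) : ℝ) : ℂ))

/-- `β₊(z) = Ai(−ω(z + κf)f^{−2/3})·Ai(−(z − κf)f^{−2/3})` -/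
noncomputable def betaP (κ f : ℝ) (z : ℂ) : ℂ :=
  Ai (-ωc * (z + κ * f) * ((f ^ (-(2 : ℝ) / 3) : ℝ) : ℂ)) *
    Ai (-(z - κ * f) * ((f ^ (-(2 : ℝ) / 3) : ℝ) : ℂ))

/-- `β₋(z) = Ai(−ω(z − κf)f^{−2/3})·Ai(−(z + κf)f^{−2/3})` -/
noncomputable def betaM (κ f : ℝ) (z : ℂ) : ℂ :=
  Ai (-ωc * (z - κ * f) * ((f ^ (-(2 : ℝ) / 3) : ℝ) : ℂ)) *
    Ai (-(z + κ * f) * ((f ^ (-(2 : ℝ) / 3) : ℝ) : ℂ))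

/-- The resonance determinant `D_f` of the Stark Hamiltonian
`p² + fx + η⁻¹(δ_κ + δ_{−κ})`:
`D_f(z) = 1 + (α₊ + α₋)/(ηW) + β₊(β₋ − β₊)/(η²W²)`. -/
noncomputable def Df (κ η f : ℝ) (z : ℂ) : ℂ :=
  1 + (alphaP κ f z + alphaM κ f z) / (η * Wf f)
    + betaP κ f z * (betaM κ f z - betaP κ f z) / (η ^ 2 * (Wf f) ^ 2)

/-- The order of vanishing of `g` at `z`: the least `n` with
`(d/dz)ⁿ g(z) ≠ 0` (for an analytic function not vanishing identically near
`z`, this is the multiplicity of `z` as a zero of `g`). -/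
noncomputable def vanishingOrder (g : ℂ → ℂ) (z : ℂ) : ℕ :=
  sInf {n : ℕ | iteratedDeriv n g z ≠ 0}

/-! ### Integral representation of the Airy function -/

/-- The moments `∫₀^∞ sⁿ e^{-s³/3} ds`. -/
noncomputable def cubicMoment (n : ℕ) : ℝ :=
  ∫ s in Set.Ioi (0 : ℝ), s ^ n * Real.exp (-(s ^ 3 / 3))

/-- The Laplace transform of `e^{-s³/3}`. -/
noncomputable def cubicLaplace (x : ℂ) : ℂ :=
  ∫ s in Set.Ioi (0 : ℝ), Complex.exp (-(s : ℂ) ^ 3 / 3 - x * s)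

theorem cubicMoment_eq (n : ℕ) :
    cubicMoment n = (1 / 3 : ℝ) ^ (-((n : ℝ) + 1) / 3) * (1 / 3) * Real.Gamma (((n : ℝ) + 1) / 3) := by
  have h := integral_rpow_mul_exp_neg_mul_rpow (p := 3) (q := n) (b := 1 / 3) (by norm_num)
    (by have : (0 : ℝ) ≤ n := n.cast_nonneg
        linarith) (by norm_num)
  rw [← h, cubicMoment]
  refine MeasureTheory.setIntegral_congr_fun measurableSet_Ioi fun s hs => ?_
  have : s ^ (3 : ℝ) = s ^ 3 := by exact_mod_cast Real.rpow_natCast s 3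
  simp only [this, Real.rpow_natCast]
  ring_nf

theorem cubicMoment_add_three (n : ℕ) : cubicMoment (n + 3) = (n + 1) * cubicMoment n := by
  have hn : (0 : ℝ) < ((n : ℝ) + 1) / 3 := by positivity
  rw [cubicMoment_eq, cubicMoment_eq]
  have e1 : ((((n + 3 : ℕ) : ℝ)) + 1) / 3 = ((n : ℝ) + 1) / 3 + 1 := by push_cast; ring
  have e2 : -((((n + 3 : ℕ) : ℝ)) + 1) / 3 = -((n : ℝ) + 1) / 3 - 1 := by push_cast; ring
  rw [e1, e2, Real.Gamma_add_one hn.ne', Real.rpow_sub_one (by norm_num)]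
  ring

/-- `e^{rs - s³/3}` is dominated by a multiple of `e^{-s}` on the positive half line. -/
theorem integrableOn_exp_linear_sub_cube (r : ℝ) :
    MeasureTheory.IntegrableOn (fun s : ℝ => Real.exp (r * s - s ^ 3 / 3)) (Set.Ioi 0) := by
  have h1 : MeasureTheory.IntegrableOn
      (fun s : ℝ => Real.exp ((|r| + 2) ^ 2) * Real.exp (-s)) (Set.Ioi 0) :=
    (exp_neg_integrableOn_Ioi 0 one_pos |>.congr_fun (fun s _ => by simp) measurableSet_Ioi).const_mul _
  refine MeasureTheory.Integrable.mono' h1 (by fun_prop) ?_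
  filter_upwards [MeasureTheory.ae_restrict_mem measurableSet_Ioi] with s hs
  have hs : 0 < s := hs
  rw [Real.norm_eq_abs, Real.abs_exp, ← Real.exp_add]
  apply Real.exp_le_exp.2
  have hr := le_abs_self r
  have hr0 := abs_nonneg r
  nlinarith [mul_le_mul_of_nonneg_right hr hs.le, mul_nonneg hs.le (sq_nonneg (s - 2)),
    mul_nonneg hr0 hs.le, sq_nonneg (s - (|r| + 2)), sq_nonneg (s-2), sq_nonneg (s - 1)]

theorem hasSum_cubicLaplace (x : ℂ) :
    HasSum (fun n : ℕ => (-x) ^ n / (n.factorial : ℂ) * cubicMoment n) (cubicLaplace x) := by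
  have hterm : ∀ n : ℕ, (∫ s in Set.Ioi (0 : ℝ),
      (-x * s) ^ n / (n.factorial : ℂ) * Complex.exp (-(s : ℂ) ^ 3 / 3)) =
      (-x) ^ n / (n.factorial : ℂ) * cubicMoment n := by
    intro n
    rw [cubicMoment, ← integral_complex_ofReal, ← MeasureTheory.integral_const_mul]
    refine MeasureTheory.setIntegral_congr_fun measurableSet_Ioi fun s hs => ?_
    push_cast
    rw [mul_pow, neg_div]
    ring
  have key := MeasureTheory.hasSum_integral_of_dominated_convergence
    (μ := MeasureTheory.volume.restrict (Set.Ioi (0 : ℝ)))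
    (F := fun (n : ℕ) (s : ℝ) => (-x * s) ^ n / (n.factorial : ℂ) * Complex.exp (-(s : ℂ) ^ 3 / 3))
    (f := fun s : ℝ => Complex.exp (-(s : ℂ) ^ 3 / 3 - x * s))
    (fun n s => (‖x‖ * s) ^ n / n.factorial * Real.exp (-(s ^ 3 / 3)))
    (fun n => by fun_prop) ?_ ?_ ?_ ?_
  · simp only [hterm] at key
    exact key
  · intro n
    filter_upwards [MeasureTheory.ae_restrict_mem measurableSet_Ioi] with s hs
    have hs : 0 < s := hs
    rw [norm_mul, Complex.norm_exp, norm_div, norm_pow, norm_mul, norm_neg, Complex.norm_real,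
      Real.norm_of_nonneg hs.le, Complex.norm_natCast]
    norm_cast
    rw [neg_div]
  · filter_upwards with s
    exact (NormedSpace.expSeries_div_summable (𝔸 := ℝ) (‖x‖ * s)).mul_right _
  · have : (fun s : ℝ => ∑' n : ℕ, (‖x‖ * s) ^ n / n.factorial * Real.exp (-(s ^ 3 / 3))) =
        fun s => Real.exp (‖x‖ * s - s ^ 3 / 3) := by
      funext s
      rw [tsum_mul_right, sub_eq_add_neg, Real.exp_add, Real.exp_eq_exp_ℝ,
        NormedSpace.exp_eq_tsum_div]
    rw [this]
    exact integrableOn_exp_linear_sub_cube ‖x‖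
  · filter_upwards with s
    have h := NormedSpace.expSeries_div_hasSum_exp (𝔸 := ℂ) (-x * s)
    rw [← Complex.exp_eq_exp_ℂ] at h
    have h2 := h.mul_right (Complex.exp (-(s : ℂ) ^ 3 / 3))
    rwa [← Complex.exp_add, show -x * (s : ℂ) + -(s : ℂ) ^ 3 / 3 = -(s : ℂ) ^ 3 / 3 - x * s by ring]
      at h2

/-- The sixth root of unity `e^{iπ/3}`. -/
noncomputable def sixthRoot : ℂ := Complex.exp (π * Complex.I / 3)

theorem sixthRoot_eq : sixthRoot = 1 / 2 + (Real.sqrt 3 / 2 : ℝ) * Complex.I := by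
  rw [sixthRoot, show (π : ℂ) * Complex.I / 3 = ((π / 3 : ℝ) : ℂ) * Complex.I by push_cast; ring,
    Complex.exp_mul_I, ← Complex.ofReal_cos, ← Complex.ofReal_sin, Real.cos_pi_div_three,
    Real.sin_pi_div_three]
  push_cast
  ring

theorem sixthRoot_cube : sixthRoot ^ 3 = -1 := by
  rw [sixthRoot, ← Complex.exp_nat_mul]
  rw [show ((3 : ℕ) : ℂ) * (π * Complex.I / 3) = π * Complex.I by push_cast; ring, Complex.exp_pi_mul_I]

theorem sixthRoot_inv : sixthRoot⁻¹ = 1 / 2 - (Real.sqrt 3 / 2 : ℝ) * Complex.I := by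
  have h3 : ((Real.sqrt 3 : ℝ) : ℂ) ^ 2 = 3 := by
    norm_cast
    rw [Real.sq_sqrt (by norm_num)]
  rw [inv_eq_iff_eq_inv, eq_comm, inv_eq_of_mul_eq_one_left]
  rw [sixthRoot_eq]
  push_cast
  linear_combination (-1 / 4 : ℂ) * Complex.I ^ 2 * h3 - (3 / 4 : ℂ) * Complex.I_sq

theorem airyCoeff_eq (n : ℕ) :
    airyCoeff n = (sixthRoot * (-sixthRoot) ^ n - sixthRoot⁻¹ * (-sixthRoot⁻¹) ^ n) /
      (2 * π * Complex.I) / (n.factorial : ℂ) * cubicMoment n := by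
  have hpi : (π : ℂ) ≠ 0 := by exact_mod_cast Real.pi_ne_zero
  have hI := Complex.I_ne_zero
  have h3 : ((Real.sqrt 3 : ℝ) : ℂ) ^ 2 = 3 := by
    norm_cast
    rw [Real.sq_sqrt (by norm_num)]
  have hG := Real.Gamma_mul_Gamma_one_sub (1 / 3)
  rw [show (1 : ℝ) - 1 / 3 = 2 / 3 by norm_num, show π * (1 / 3) = π / 3 by ring,
    Real.sin_pi_div_three] at hG
  have hs3 : Real.sqrt 3 ≠ 0 := by positivity
  have hG1 : Real.Gamma (1 / 3) ≠ 0 := (Real.Gamma_pos_of_pos (by norm_num)).ne'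
  have hG2 : Real.Gamma (2 / 3) ≠ 0 := (Real.Gamma_pos_of_pos (by norm_num)).ne'
  have hG' : Real.Gamma (1 / 3) * Real.Gamma (2 / 3) * Real.sqrt 3 = 2 * π := by
    rw [hG]; field_simp
  induction n using airyCoeff.induct with
  | case1 =>
    have e : airyCoeff 0 = ((3 ^ (-(2 : ℝ) / 3) / Real.Gamma (2 / 3) : ℝ) : ℂ) := by
      rw [airyCoeff]
      push_cast
      rw [Complex.ofReal_cpow (by norm_num), ← Complex.Gamma_ofReal]
      push_cast
      rfl
    have hm : cubicMoment 0 = 3 ^ (-(2 : ℝ) / 3) * Real.Gamma (1 / 3) := by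
      rw [cubicMoment_eq, one_div, Real.inv_rpow (by norm_num), ← Real.rpow_neg (by norm_num),
        ← Real.rpow_neg_one, ← Real.rpow_add (by norm_num)]
      norm_num
    rw [e, hm, sixthRoot_inv, sixthRoot_eq]
    have : (3 : ℝ) ^ (-(2 : ℝ) / 3) / Real.Gamma (2 / 3) =
        Real.sqrt 3 / (2 * π) * (3 ^ (-(2 : ℝ) / 3) * Real.Gamma (1 / 3)) := by
      rw [← hG']; field_simp
    rw [this]
    push_cast
    field_simp
    simp
    ring
  | case2 =>
    have e : airyCoeff 1 = ((-(3 ^ (-(1 : ℝ) / 3) / Real.Gamma (1 / 3)) : ℝ) : ℂ) := by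
      rw [airyCoeff]
      push_cast
      rw [Complex.ofReal_cpow (by norm_num), ← Complex.Gamma_ofReal]
      push_cast
      rfl
    have hm : cubicMoment 1 = 3 ^ (-(1 : ℝ) / 3) * Real.Gamma (2 / 3) := by
      rw [cubicMoment_eq, one_div, Real.inv_rpow (by norm_num), ← Real.rpow_neg (by norm_num),
        ← Real.rpow_neg_one, ← Real.rpow_add (by norm_num)]
      norm_num
    rw [e, hm, sixthRoot_inv, sixthRoot_eq]
    have : (3 : ℝ) ^ (-(1 : ℝ) / 3) / Real.Gamma (1 / 3) =
        Real.sqrt 3 / (2 * π) * (3 ^ (-(1 : ℝ) / 3) * Real.Gamma (2 / 3)) := by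
      rw [← hG']; field_simp
    rw [this]
    push_cast
    field_simp
    simp
    ring
  | case3 =>
    have : sixthRoot * (-sixthRoot) ^ 2 - sixthRoot⁻¹ * (-sixthRoot⁻¹) ^ 2 = 0 := by
      rw [show sixthRoot * (-sixthRoot) ^ 2 = sixthRoot ^ 3 by ring,
        show sixthRoot⁻¹ * (-sixthRoot⁻¹) ^ 2 = (sixthRoot ^ 3)⁻¹ by rw [← inv_pow]; ring,
        sixthRoot_cube]
      norm_num
    rw [this]
    simp [airyCoeff]
  | case4 k ih =>
    rw [airyCoeff, ih, cubicMoment_add_three]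
    have c1 : (-sixthRoot) ^ (k + 3) = (-sixthRoot) ^ k := by
      rw [pow_add, show (-sixthRoot) ^ 3 = -sixthRoot ^ 3 by ring, sixthRoot_cube]; ring
    have c2 : (-sixthRoot⁻¹) ^ (k + 3) = (-sixthRoot⁻¹) ^ k := by
      rw [pow_add, show (-sixthRoot⁻¹) ^ 3 = -(sixthRoot ^ 3)⁻¹ by rw [← inv_pow]; ring,
        sixthRoot_cube]; ring
    rw [c1, c2]
    have hk : ((k.factorial : ℕ) : ℂ) ≠ 0 := by exact_mod_cast k.factorial_ne_zero
    have k1 : (k : ℂ) + 1 ≠ 0 := by exact_mod_cast k.succ_ne_zero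
    have k2 : (k : ℂ) + 2 ≠ 0 := by exact_mod_cast (k + 1).succ_ne_zero
    have k3 : (k : ℂ) + 3 ≠ 0 := by exact_mod_cast (k + 2).succ_ne_zero
    simp only [Nat.factorial_succ]
    push_cast
    rw [show (k : ℂ) + 2 + 1 = k + 3 by ring, show (k : ℂ) + 1 + 1 = k + 2 by ring]
    field_simp

theorem hasSum_Ai (w : ℂ) : HasSum (fun n : ℕ => airyCoeff n * w ^ n)
    ((sixthRoot * cubicLaplace (sixthRoot * w) - sixthRoot⁻¹ * cubicLaplace (sixthRoot⁻¹ * w)) /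
      (2 * π * Complex.I)) := by
  have h := (((hasSum_cubicLaplace (sixthRoot * w)).mul_left sixthRoot).sub
    ((hasSum_cubicLaplace (sixthRoot⁻¹ * w)).mul_left sixthRoot⁻¹)).div_const (2 * π * Complex.I)
  refine h.congr_fun fun n => ?_
  rw [airyCoeff_eq, show -(sixthRoot * w) = -sixthRoot * w by ring,
    show -(sixthRoot⁻¹ * w) = -sixthRoot⁻¹ * w by ring, mul_pow, mul_pow]
  ring

theorem Ai_eq_cubicLaplace (w : ℂ) : Ai w =
    (sixthRoot * cubicLaplace (sixthRoot * w) - sixthRoot⁻¹ * cubicLaplace (sixthRoot⁻¹ * w)) /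
      (2 * π * Complex.I) :=
  (hasSum_Ai w).tsum_eq

theorem differentiable_Ai : Differentiable ℂ Ai := by
  intro z
  have hd : DifferentiableOn ℂ (fun w => ∑' n : ℕ, airyCoeff n * w ^ n)
      (Metric.ball 0 (‖z‖ + 1)) := by
    refine Complex.differentiableOn_tsum_of_summable_norm
      (u := fun n => ‖airyCoeff n * ((‖z‖ + 1 : ℝ) : ℂ) ^ n‖) (hasSum_Ai _).summable.norm
      (fun n => by fun_prop) Metric.isOpen_ball ?_
    intro n w hw
    rw [norm_mul, norm_mul, norm_pow, norm_pow, Complex.norm_real, Real.norm_of_nonneg (by positivity)]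
    have : ‖w‖ ≤ ‖z‖ + 1 := by simpa using (mem_ball_zero_iff.1 hw).le
    gcongr
  exact (hd z (by simp)).differentiableAt (Metric.isOpen_ball.mem_nhds (by simp))

/-- The connection formula between the three rotated Airy functions. -/
theorem Ai_connection (z : ℂ) : Ai z + ωc * Ai (ωc * z) + ωc⁻¹ * Ai (ωc⁻¹ * z) = 0 := by
  have hω : ωc ^ 3 = 1 := by
    rw [ωc, ← Complex.exp_nat_mul]
    rw [show ((3 : ℕ) : ℂ) * (2 * π * Complex.I / 3) = 2 * π * Complex.I by push_cast; ring,
      Complex.exp_two_pi_mul_I]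
  have hω1 : 1 + ωc + ωc ^ 2 = 0 := by
    have hne : ωc ≠ 1 := by
      rw [ωc, Ne, Complex.exp_eq_one_iff]
      rintro ⟨n, hn⟩
      have h2 : (2 * π * Complex.I : ℂ) ≠ 0 := by
        simp [Real.pi_ne_zero]
      have : (1 : ℂ) = 3 * n := by
        apply mul_right_cancel₀ h2
        linear_combination 3 * hn
      have h3 : (1 : ℤ) = 3 * n := by exact_mod_cast this
      omega
    apply mul_left_cancel₀ (sub_ne_zero.2 hne)
    linear_combination hω
  have hinv : ωc⁻¹ = ωc ^ 2 := by
    rw [inv_eq_of_mul_eq_one_left]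
    linear_combination hω
  have hs := fun w => (hasSum_Ai w).summable.hasSum
  have h := ((hs z).add ((hs (ωc * z)).mul_left ωc)).add ((hs (ωc⁻¹ * z)).mul_left ωc⁻¹)
  refine h.unique ?_
  refine hasSum_zero.congr_fun fun n => ?_
  rw [hinv, mul_pow, mul_pow]
  have : ∀ m : ℕ, airyCoeff m * (1 + ωc ^ (m + 1) + (ωc ^ 2) ^ (m + 1)) = 0 := by
    intro m
    induction m using airyCoeff.induct with
    | case1 => linear_combination airyCoeff 0 * hω1
    | case2 => linear_combination airyCoeff 1 * hω1 + airyCoeff 1 * ωc * hω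
    | case3 => simp [airyCoeff]
    | case4 k ih =>
      rw [airyCoeff]
      have e1 : ωc ^ (k + 3 + 1) = ωc ^ (k + 1) := by
        rw [show k + 3 + 1 = k + 1 + 3 by ring, pow_add, hω, mul_one]
      have e2 : (ωc ^ 2) ^ (k + 3 + 1) = (ωc ^ 2) ^ (k + 1) := by
        rw [← pow_mul, mul_comm 2, pow_mul, e1, ← pow_mul, ← pow_mul, mul_comm]
      rw [e1, e2, div_mul_eq_mul_div, ih, zero_div]
  linear_combination z ^ n * this n

/-! ### Saddle point form of the Airy function -/

theorem norm_exp_cube_le {s Y : ℝ} (hs : 0 < s) (hY : 2 * s ≤ Y) {t : ℂ}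
    (ht : t ∈ segment ℝ (sixthRoot * Y) (s + Complex.I * Y)) :
    ‖Complex.exp (t ^ 3 / 3 - (s : ℂ) ^ 2 * t)‖ ≤ Real.exp (-(2 / 3 * s * Y ^ 2)) := by
  obtain ⟨a, b, ha, hb, hab, rfl⟩ := ht
  have hb' : b = 1 - a := by linarith
  have ha1 : a ≤ 1 := by linarith
  subst hb'
  have hY0 : 0 < Y := by linarith
  set x : ℝ := a * (Y / 2) + (1 - a) * s with hx
  set v : ℝ := a * (Real.sqrt 3 / 2 * Y) + (1 - a) * Y with hv
  have e : a • (sixthRoot * (Y : ℂ)) + (1 - a) • ((s : ℂ) + Complex.I * Y) =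
      (x : ℂ) + v * Complex.I := by
    rw [sixthRoot_eq, hx, hv, Complex.real_smul, Complex.real_smul]
    push_cast
    ring
  have hre : ((((x : ℂ) + v * Complex.I) ^ 3 / 3 - (s : ℂ) ^ 2 * (x + v * Complex.I))).re =
      x ^ 3 / 3 - x * v ^ 2 - s ^ 2 * x := by
    have : (((x : ℂ) + v * Complex.I) ^ 3 / 3 - (s : ℂ) ^ 2 * (x + v * Complex.I)) =
        ((x ^ 3 / 3 - x * v ^ 2 - s ^ 2 * x : ℝ) : ℂ) +
          ((x ^ 2 * v - v ^ 3 / 3 - s ^ 2 * v : ℝ) : ℂ) * Complex.I := by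
      push_cast
      linear_combination ((x : ℂ) * v ^ 2 + (v : ℂ) ^ 3 * Complex.I / 3) * Complex.I_sq
    rw [this, Complex.add_re, Complex.ofReal_re, Complex.re_ofReal_mul, Complex.I_re]
    ring
  rw [e, Complex.norm_exp, hre]
  apply Real.exp_le_exp.2
  have h3 : Real.sqrt 3 ^ 2 = 3 := Real.sq_sqrt (by norm_num)
  have h3' : Real.sqrt 3 ≤ 2 := by nlinarith [Real.sqrt_nonneg 3]
  have hx1 : s ≤ x := by rw [hx]; nlinarith
  have hx2 : x ≤ Y / 2 := by rw [hx]; nlinarith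
  have hv1 : Real.sqrt 3 / 2 * Y ≤ v := by
    rw [hv]; nlinarith [mul_nonneg (sub_nonneg.2 ha1) hY0.le]
  have hv2 : 3 / 4 * Y ^ 2 ≤ v ^ 2 := by
    have : (Real.sqrt 3 / 2 * Y) ^ 2 ≤ v ^ 2 := by gcongr
    nlinarith
  have hx3 : x ^ 2 ≤ Y ^ 2 / 4 := by nlinarith
  have : x * (x ^ 2 / 3 - v ^ 2) ≤ x * (-(2 / 3 * Y ^ 2)) := by
    apply mul_le_mul_of_nonneg_left _ (by linarith)
    linarith
  nlinarith [mul_nonneg (sq_nonneg s) (hs.le.trans hx1),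
    mul_le_mul_of_nonneg_right hx1 (sq_nonneg Y)]

theorem integrableOn_exp_neg_mul_sq {s : ℝ} (hs : 0 < s) :
    MeasureTheory.IntegrableOn (fun r : ℝ => Real.exp (-s * r ^ 2)) (Set.Ioi 0) :=
  (integrable_exp_neg_mul_sq hs).integrableOn

theorem integrableOn_cexp_ray (w : ℂ) :
    MeasureTheory.IntegrableOn (fun r : ℝ => Complex.exp (-(r : ℂ) ^ 3 / 3 - w * r))
      (Set.Ioi 0) := by
  refine MeasureTheory.Integrable.mono' (integrableOn_exp_linear_sub_cube ‖w‖) (by fun_prop) ?_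
  filter_upwards [MeasureTheory.ae_restrict_mem measurableSet_Ioi] with r hr
  have hr : 0 < r := hr
  rw [Complex.norm_exp]
  apply Real.exp_le_exp.2
  have h1 : (-(r : ℂ) ^ 3 / 3 - w * r).re = -r ^ 3 / 3 - w.re * r := by
    rw [Complex.sub_re, Complex.re_mul_ofReal]
    norm_cast
  have := neg_abs_le w.re
  have h2 := Complex.abs_re_le_norm w
  rw [h1]
  nlinarith

/-- Moving the contour of the Airy integral from a ray through the origin to a vertical
half line through the saddle point. -/
theorem contour_shift {s : ℝ} (hs : 0 < s) :
    (sixthRoot * cubicLaplace (sixthRoot * (s : ℂ) ^ 2)).im =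
      (∫ r in Set.Ioi (0 : ℝ), Complex.I * Complex.exp (-(2 / 3) * (s : ℂ) ^ 3 -
        s * (r : ℂ) ^ 2 - Complex.I * (r : ℂ) ^ 3 / 3)).im := by
  set g : ℂ → ℂ := fun t => Complex.exp (t ^ 3 / 3 - (s : ℂ) ^ 2 * t) with hg
  have hgc : Continuous g := by fun_prop
  have hg0 : ∀ r : ℝ, sixthRoot * g (sixthRoot * r) =
      sixthRoot * Complex.exp (-(r : ℂ) ^ 3 / 3 - sixthRoot * (s : ℂ) ^ 2 * r) := by
    intro r
    simp only [hg]
    rw [mul_pow, sixthRoot_cube]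
    ring_nf
  have hg1 : ∀ r : ℝ, Complex.I * g (s + Complex.I * r) =
      Complex.I * Complex.exp (-(2 / 3) * (s : ℂ) ^ 3 -
        s * (r : ℂ) ^ 2 - Complex.I * (r : ℂ) ^ 3 / 3) := by
    intro r
    simp only [hg]
    congr 2
    linear_combination ((s : ℂ) * r ^ 2 + Complex.I * (r : ℂ) ^ 3 / 3) * Complex.I_sq
  have hlim0 : Filter.Tendsto (fun Y : ℝ => ∫ r in (0 : ℝ)..Y, sixthRoot * g (sixthRoot * r))
      Filter.atTop (nhds (sixthRoot * cubicLaplace (sixthRoot * (s : ℂ) ^ 2))) := by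
    have h := MeasureTheory.intervalIntegral_tendsto_integral_Ioi (0 : ℝ)
      ((integrableOn_cexp_ray (sixthRoot * (s : ℂ) ^ 2)).const_mul sixthRoot) Filter.tendsto_id
    simp only [hg0]
    rwa [MeasureTheory.integral_const_mul] at h
  have hlim1 : Filter.Tendsto (fun Y : ℝ => ∫ r in (0 : ℝ)..Y, Complex.I * g (s + Complex.I * r))
      Filter.atTop (nhds (∫ r in Set.Ioi (0 : ℝ), Complex.I * Complex.exp (-(2 / 3) * (s : ℂ) ^ 3 -
        s * (r : ℂ) ^ 2 - Complex.I * (r : ℂ) ^ 3 / 3))) := by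
    simp only [hg1]
    refine MeasureTheory.intervalIntegral_tendsto_integral_Ioi (0 : ℝ) ?_ Filter.tendsto_id
    refine MeasureTheory.Integrable.mono'
      ((integrableOn_exp_neg_mul_sq hs).const_mul (Real.exp (-(2 / 3) * s ^ 3))) (by fun_prop) ?_
    filter_upwards with r
    rw [norm_mul, Complex.norm_I, one_mul, Complex.norm_exp, ← Real.exp_add]
    apply Real.exp_le_exp.2
    apply le_of_eq
    have : (-(2 / 3) * (s : ℂ) ^ 3 - s * (r : ℂ) ^ 2 - Complex.I * (r : ℂ) ^ 3 / 3) =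
        ((-(2 / 3) * s ^ 3 + -s * r ^ 2 : ℝ) : ℂ) + ((- r ^ 3 / 3 : ℝ) : ℂ) * Complex.I := by
      push_cast; ring
    rw [this, Complex.add_re, Complex.ofReal_re, Complex.re_ofReal_mul, Complex.I_re]
    ring
  set J : ℝ → ℂ := fun Y => (∫ r in (0 : ℝ)..Y, Complex.I * g (s + Complex.I * r)) -
    (∫ r in (0 : ℝ)..Y, sixthRoot * g (sixthRoot * r)) + ∫ x in (0 : ℝ)..s, g x with hJ
  have hbound : ∀ Y : ℝ, 2 * s ≤ Y →
      ‖J Y‖ ≤ Real.exp (-(2 / 3 * s * Y ^ 2)) * (3 * Y) := by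
    intro Y hY
    have hY0 : 0 < Y := by linarith
    obtain ⟨G, hG⟩ := (show Differentiable ℂ g by fun_prop).differentiableOn.isExactOn_ball
      (c := 0) (r := s + 3 * Y)
    have hsix : ‖sixthRoot‖ = 1 := by
      rw [sixthRoot, show (π : ℂ) * Complex.I / 3 = ((π / 3 : ℝ) : ℂ) * Complex.I by push_cast; ring,
        Complex.norm_exp_ofReal_mul_I]
    have ball0 : ∀ r ∈ Set.uIcc 0 Y, sixthRoot * (r : ℂ) ∈ Metric.ball (0 : ℂ) (s + 3 * Y) := by
      intro r hr
      rw [Set.uIcc_of_le hY0.le] at hr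
      rw [mem_ball_zero_iff, norm_mul, hsix, Complex.norm_real, Real.norm_of_nonneg hr.1]
      linarith [hr.2]
    have ball1 : ∀ r ∈ Set.uIcc 0 Y, (s : ℂ) + Complex.I * r ∈ Metric.ball (0 : ℂ) (s + 3 * Y) := by
      intro r hr
      rw [Set.uIcc_of_le hY0.le] at hr
      rw [mem_ball_zero_iff]
      refine (norm_add_le _ _).trans_lt ?_
      rw [norm_mul, Complex.norm_I, Complex.norm_real, Complex.norm_real,
        Real.norm_of_nonneg hr.1, Real.norm_of_nonneg hs.le]
      linarith [hr.2]
    have ball2 : ∀ r ∈ Set.uIcc 0 s, (r : ℂ) ∈ Metric.ball (0 : ℂ) (s + 3 * Y) := by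
      intro r hr
      rw [Set.uIcc_of_le hs.le] at hr
      rw [mem_ball_zero_iff, Complex.norm_real, Real.norm_of_nonneg hr.1]
      linarith [hr.2]
    have i0 : ∫ r in (0 : ℝ)..Y, sixthRoot * g (sixthRoot * r) = G (sixthRoot * Y) - G 0 := by
      rw [intervalIntegral.integral_eq_sub_of_hasDerivAt (f := fun r : ℝ => G (sixthRoot * r))]
      · simp
      · intro r hr
        have h1 : HasDerivAt (fun r : ℝ => sixthRoot * (r : ℂ)) sixthRoot r := by
          simpa using (Complex.ofRealCLM.hasDerivAt (x := r)).const_mul sixthRoot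
        have h2 := (hG _ (ball0 r hr)).comp r h1
        rwa [mul_comm] at h2
      · exact (by fun_prop : Continuous fun r : ℝ => sixthRoot * g (sixthRoot * r)).intervalIntegrable _ _
    have i1 : ∫ r in (0 : ℝ)..Y, Complex.I * g (s + Complex.I * r) =
        G (s + Complex.I * Y) - G s := by
      rw [intervalIntegral.integral_eq_sub_of_hasDerivAt (f := fun r : ℝ => G (s + Complex.I * r))]
      · simp
      · intro r hr
        have h1 : HasDerivAt (fun r : ℝ => (s : ℂ) + Complex.I * (r : ℂ)) Complex.I r := by
          simpa using ((Complex.ofRealCLM.hasDerivAt (x := r)).const_mul Complex.I).const_add (s : ℂ)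
        have h2 := (hG _ (ball1 r hr)).comp r h1
        rwa [mul_comm] at h2
      · exact (by fun_prop :
          Continuous fun r : ℝ => Complex.I * g (s + Complex.I * r)).intervalIntegrable _ _
    have i2 : ∫ x in (0 : ℝ)..s, g x = G s - G 0 := by
      rw [intervalIntegral.integral_eq_sub_of_hasDerivAt (f := fun r : ℝ => G r)]
      · simp
      · intro r hr
        exact (hG _ (ball2 r hr)).comp_ofReal
      · exact (by fun_prop : Continuous fun r : ℝ => g r).intervalIntegrable _ _
    have hJY : J Y = G (s + Complex.I * Y) - G (sixthRoot * Y) := by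
      simp only [hJ]
      rw [i0, i1, i2]
      ring
    have hseg : segment ℝ (sixthRoot * (Y : ℂ)) (s + Complex.I * Y) ⊆
        Metric.ball (0 : ℂ) (s + 3 * Y) :=
      (convex_ball (0 : ℂ) _).segment_subset (ball0 Y (by simp)) (ball1 Y (by simp))
    have hmv := (convex_segment (𝕜 := ℝ) (sixthRoot * (Y : ℂ)) (s + Complex.I * Y)).norm_image_sub_le_of_norm_hasDerivWithin_le
      (f := G) (f' := g) (C := Real.exp (-(2 / 3 * s * Y ^ 2)))
      (fun t ht => (hG t (hseg ht)).hasDerivWithinAt) (fun t ht => norm_exp_cube_le hs hY ht)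
      (left_mem_segment ℝ _ _) (right_mem_segment ℝ _ _)
    rw [hJY]
    refine hmv.trans ?_
    gcongr
    refine (norm_sub_le _ _).trans ?_
    refine (add_le_add_left (norm_add_le _ _) _).trans ?_
    rw [norm_mul, norm_mul, hsix, Complex.norm_I, Complex.norm_real, Complex.norm_real,
        Real.norm_of_nonneg hY0.le, Real.norm_of_nonneg hs.le]
    linarith
  have hJ0 : Filter.Tendsto J Filter.atTop (nhds 0) := by
    refine squeeze_zero_norm' (a := fun Y => 9 / (2 * s) * Y⁻¹) ?_ ?_
    · filter_upwards [Filter.eventually_ge_atTop (2 * s)] with Y hY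
      have hY0 : 0 < Y := by linarith
      refine (hbound Y hY).trans ?_
      have h1 : 2 / 3 * s * Y ^ 2 ≤ Real.exp (2 / 3 * s * Y ^ 2) := by
        linarith [Real.add_one_le_exp (2 / 3 * s * Y ^ 2)]
      rw [Real.exp_neg]
      have h2 : (Real.exp (2 / 3 * s * Y ^ 2))⁻¹ ≤ (2 / 3 * s * Y ^ 2)⁻¹ :=
        inv_anti₀ (by positivity) h1
      refine (mul_le_mul_of_nonneg_right h2 (by positivity)).trans (le_of_eq ?_)
      field_simp
      ring
    · simpa using tendsto_inv_atTop_zero.const_mul (9 / (2 * s))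
  have hlim := (hlim1.sub hlim0).add_const (∫ x in (0 : ℝ)..s, g x)
  have heq := tendsto_nhds_unique hlim hJ0
  have him : (∫ x in (0 : ℝ)..s, g x).im = 0 := by
    have : ∀ x : ℝ, g x = ((Real.exp (x ^ 3 / 3 - s ^ 2 * x) : ℝ) : ℂ) := by
      intro x; simp only [hg]; push_cast; rfl
    simp only [this]
    rw [intervalIntegral.integral_ofReal, Complex.ofReal_im]
  have := congrArg Complex.im heq
  rw [Complex.add_im, Complex.sub_im, him, Complex.zero_im] at this
  linarith

/-- The integral `∫₀^∞ e^{-sr²} cos(r³/3) dr`, for `Re s > 0`. -/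
noncomputable def saddleIntegral (s : ℂ) : ℂ :=
  ∫ r in Set.Ioi (0 : ℝ), Complex.exp (-s * (r : ℂ) ^ 2) * (Real.cos (r ^ 3 / 3) : ℂ)

theorem Ai_sq_of_pos {s : ℝ} (hs : 0 < s) :
    Ai ((s : ℂ) ^ 2) = Complex.exp (-(2 / 3) * (s : ℂ) ^ 3) / π * saddleIntegral s := by
  have hconj : (starRingEnd ℂ) sixthRoot = sixthRoot⁻¹ := by
    rw [sixthRoot_inv, sixthRoot_eq]
    simp [sub_eq_add_neg, Complex.conj_ofNat]
  have hL : sixthRoot⁻¹ * cubicLaplace (sixthRoot⁻¹ * (s : ℂ) ^ 2) =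
      (starRingEnd ℂ) (sixthRoot * cubicLaplace (sixthRoot * (s : ℂ) ^ 2)) := by
    rw [map_mul, hconj, cubicLaplace, cubicLaplace, ← integral_conj]
    congr 2
    funext r
    rw [← Complex.exp_conj]
    simp [hconj, Complex.conj_ofNat]
  have hexp : ∀ r : ℝ, (-(2 / 3) * (s : ℂ) ^ 3 - s * (r : ℂ) ^ 2 - Complex.I * (r : ℂ) ^ 3 / 3) =
      ((-(2 / 3) * s ^ 3 + -s * r ^ 2 : ℝ) : ℂ) + ((-r ^ 3 / 3 : ℝ) : ℂ) * Complex.I := by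
    intro r
    push_cast
    ring
  have hintegrable : MeasureTheory.IntegrableOn
      (fun r : ℝ => Complex.I * Complex.exp (-(2 / 3) * (s : ℂ) ^ 3 -
        s * (r : ℂ) ^ 2 - Complex.I * (r : ℂ) ^ 3 / 3)) (Set.Ioi 0) := by
    refine MeasureTheory.Integrable.mono'
      ((integrableOn_exp_neg_mul_sq hs).const_mul (Real.exp (-(2 / 3) * s ^ 3))) (by fun_prop) ?_
    filter_upwards with r
    rw [norm_mul, Complex.norm_I, one_mul, Complex.norm_exp, ← Real.exp_add]
    apply Real.exp_le_exp.2
    apply le_of_eq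
    rw [hexp r, Complex.add_re, Complex.ofReal_re, Complex.re_ofReal_mul, Complex.I_re]
    ring
  have him : (∫ r in Set.Ioi (0 : ℝ), Complex.I * Complex.exp (-(2 / 3) * (s : ℂ) ^ 3 -
        s * (r : ℂ) ^ 2 - Complex.I * (r : ℂ) ^ 3 / 3)).im =
      Real.exp (-(2 / 3) * s ^ 3) *
        ∫ r in Set.Ioi (0 : ℝ), Real.exp (-s * r ^ 2) * Real.cos (r ^ 3 / 3) := by
    rw [show (∫ r in Set.Ioi (0 : ℝ), Complex.I * Complex.exp (-(2 / 3) * (s : ℂ) ^ 3 -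
        s * (r : ℂ) ^ 2 - Complex.I * (r : ℂ) ^ 3 / 3)).im = ∫ r in Set.Ioi (0 : ℝ),
        (Complex.I * Complex.exp (-(2 / 3) * (s : ℂ) ^ 3 -
        s * (r : ℂ) ^ 2 - Complex.I * (r : ℂ) ^ 3 / 3)).im from (integral_im hintegrable).symm,
      ← MeasureTheory.integral_const_mul]
    congr 1
    funext r
    rw [Complex.I_mul_im, hexp r, Complex.exp_re, Complex.add_re, Complex.add_im,
      Complex.ofReal_re, Complex.re_ofReal_mul, Complex.im_ofReal_mul, Complex.I_re, Complex.I_im,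
      Complex.ofReal_im, mul_zero, add_zero, mul_one, zero_add, Real.exp_add,
      show -r ^ 3 / 3 = -(r ^ 3 / 3) by ring, Real.cos_neg]
    ring
  have hsad : saddleIntegral s =
      ((∫ r in Set.Ioi (0 : ℝ), Real.exp (-s * r ^ 2) * Real.cos (r ^ 3 / 3) : ℝ) : ℂ) := by
    rw [saddleIntegral, ← integral_complex_ofReal]
    congr 1
    funext r
    push_cast
    rfl
  have hpi : (π : ℂ) ≠ 0 := by exact_mod_cast Real.pi_ne_zero
  rw [Ai_eq_cubicLaplace, hL, Complex.sub_conj, contour_shift hs, him, hsad]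
  have hI := Complex.I_ne_zero
  push_cast
  field_simp

theorem saddleIntegrand_norm_le (s : ℂ) (r : ℝ) :
    ‖Complex.exp (-s * (r : ℂ) ^ 2) * (Real.cos (r ^ 3 / 3) : ℂ)‖ ≤ Real.exp (-s.re * r ^ 2) := by
  have h : ‖Complex.exp (-s * (r : ℂ) ^ 2)‖ = Real.exp (-s.re * r ^ 2) := by
    rw [Complex.norm_exp, ← Complex.ofReal_pow, Complex.re_mul_ofReal, Complex.neg_re]
  rw [norm_mul, h, Complex.norm_real]
  exact mul_le_of_le_one_right (Real.exp_pos _).le (Real.abs_cos_le_one _)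

theorem sq_mul_exp_le {c : ℝ} (hc : 0 < c) (r : ℝ) :
    r ^ 2 * Real.exp (-c * r ^ 2) ≤ 2 / c * Real.exp (-(c / 2) * r ^ 2) := by
  have h1 : c / 2 * r ^ 2 ≤ Real.exp (c / 2 * r ^ 2) := by
    linarith [Real.add_one_le_exp (c / 2 * r ^ 2)]
  have h2 : Real.exp (-(c / 2) * r ^ 2) = Real.exp (-c * r ^ 2) * Real.exp (c / 2 * r ^ 2) := by
    rw [← Real.exp_add]; ring_nf
  rw [h2]
  have : r ^ 2 ≤ 2 / c * Real.exp (c / 2 * r ^ 2) := by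
    rw [div_mul_eq_mul_div, le_div_iff₀ hc]; linarith
  nlinarith [Real.exp_pos (-c * r ^ 2)]

theorem differentiableAt_saddleIntegral {s : ℂ} (hs : 0 < s.re) :
    DifferentiableAt ℂ saddleIntegral s := by
  have hball : {t : ℂ | s.re / 2 < t.re} ∈ nhds s :=
    (isOpen_lt continuous_const Complex.continuous_re).mem_nhds (show s.re / 2 < s.re by linarith)
  refine (hasDerivAt_integral_of_dominated_loc_of_deriv_le
    (F := fun (t : ℂ) (r : ℝ) => Complex.exp (-t * (r : ℂ) ^ 2) * (Real.cos (r ^ 3 / 3) : ℂ))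
    (F' := fun (t : ℂ) (r : ℝ) => -(r : ℂ) ^ 2 *
      (Complex.exp (-t * (r : ℂ) ^ 2) * (Real.cos (r ^ 3 / 3) : ℂ)))
    (bound := fun r => 2 / (s.re / 2) * Real.exp (-(s.re / 2 / 2) * r ^ 2))
    hball ?_ ?_ ?_ ?_ ?_ ?_).2.differentiableAt
  · exact Filter.Eventually.of_forall fun t => by fun_prop
  · exact MeasureTheory.Integrable.mono' (integrableOn_exp_neg_mul_sq hs) (by fun_prop)
      (Filter.Eventually.of_forall fun r => saddleIntegrand_norm_le s r)
  · fun_prop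
  · refine Filter.Eventually.of_forall fun r t ht => ?_
    have ht : s.re / 2 < t.re := ht
    refine le_trans ?_ (sq_mul_exp_le (by linarith) r)
    rw [norm_mul, norm_neg, norm_pow, Complex.norm_real, Real.norm_eq_abs, sq_abs]
    refine mul_le_mul_of_nonneg_left ((saddleIntegrand_norm_le t r).trans ?_) (sq_nonneg r)
    apply Real.exp_le_exp.2
    nlinarith [sq_nonneg r]
  · exact (integrableOn_exp_neg_mul_sq (by linarith)).const_mul _
  · refine Filter.Eventually.of_forall fun r t _ => ?_
    have h1 : HasDerivAt (fun t : ℂ => -t * (r : ℂ) ^ 2) (-(r : ℂ) ^ 2) t := by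
      simpa using (hasDerivAt_id t).neg.mul_const ((r : ℂ) ^ 2)
    have h2 := h1.cexp.mul_const (Real.cos (r ^ 3 / 3) : ℂ)
    exact h2.congr_deriv (by ring)

theorem Ai_sq {s : ℂ} (hs : 0 < s.re) :
    Ai (s ^ 2) = Complex.exp (-(2 / 3) * s ^ 3) / π * saddleIntegral s := by
  have hU : IsOpen {t : ℂ | 0 < t.re} := isOpen_lt continuous_const Complex.continuous_re
  have hUc : IsPreconnected {t : ℂ | 0 < t.re} := (convex_halfSpace_re_gt 0).isPreconnected
  have hf : AnalyticOnNhd ℂ (fun t : ℂ => Ai (t ^ 2)) {t : ℂ | 0 < t.re} :=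
    (differentiable_Ai.comp (by fun_prop)).differentiableOn.analyticOnNhd hU
  have hg : AnalyticOnNhd ℂ (fun t : ℂ => Complex.exp (-(2 / 3) * t ^ 3) / π * saddleIntegral t)
      {t : ℂ | 0 < t.re} := by
    refine DifferentiableOn.analyticOnNhd (fun t ht => ?_) hU
    exact (DifferentiableAt.mul (by fun_prop)
      (differentiableAt_saddleIntegral ht)).differentiableWithinAt
  refine hf.eqOn_of_preconnected_of_frequently_eq hg hUc (z₀ := 1) (by simp) ?_ hs
  have htend : Filter.Tendsto (fun n : ℕ => ((1 + 1 / ((n : ℝ) + 1) : ℝ) : ℂ)) Filter.atTop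
      (nhdsWithin 1 {1}ᶜ) := by
    refine tendsto_nhdsWithin_iff.2 ⟨?_, Filter.Eventually.of_forall fun n => ?_⟩
    · have := (tendsto_one_div_add_atTop_nhds_zero_nat (𝕜 := ℝ)).const_add 1
      rw [add_zero] at this
      exact (Complex.continuous_ofReal.tendsto 1).comp this
    · have : (0 : ℝ) < 1 / ((n : ℝ) + 1) := by positivity
      simp only [Set.mem_compl_iff, Set.mem_singleton_iff]
      intro h
      have h' : 1 + 1 / ((n : ℝ) + 1) = 1 := by exact_mod_cast h
      linarith
  exact htend.frequently (Filter.Frequently.of_forall fun n => Ai_sq_of_pos (by positivity))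

theorem pow_six_mul_exp_le {c : ℝ} (hc : 0 < c) (r : ℝ) :
    r ^ 6 * Real.exp (-c * r ^ 2) ≤ 48 / c ^ 3 * Real.exp (-(c / 2) * r ^ 2) := by
  have h1 : (c / 2 * r ^ 2) ^ 3 / 6 ≤ Real.exp (c / 2 * r ^ 2) := by
    simpa [Nat.factorial] using Real.pow_div_factorial_le_exp (c / 2 * r ^ 2) (by positivity) 3
  have h2 : Real.exp (-(c / 2) * r ^ 2) = Real.exp (-c * r ^ 2) * Real.exp (c / 2 * r ^ 2) := by
    rw [← Real.exp_add]; ring_nf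
  rw [h2]
  have : r ^ 6 ≤ 48 / c ^ 3 * Real.exp (c / 2 * r ^ 2) := by
    rw [div_mul_eq_mul_div, le_div_iff₀ (by positivity)]
    nlinarith
  nlinarith [Real.exp_pos (-c * r ^ 2)]

theorem norm_saddleIntegral_sub_le {s : ℂ} (hs : 0 < s.re) :
    ‖saddleIntegral s - (π / s) ^ (1 / 2 : ℂ) / 2‖ ≤
      48 / s.re ^ 3 * (Real.sqrt (π / (s.re / 2)) / 2) := by
  have hi1 : MeasureTheory.IntegrableOn
      (fun r : ℝ => Complex.exp (-s * (r : ℂ) ^ 2) * (Real.cos (r ^ 3 / 3) : ℂ)) (Set.Ioi 0) :=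
    MeasureTheory.Integrable.mono' (integrableOn_exp_neg_mul_sq hs) (by fun_prop)
      (Filter.Eventually.of_forall fun r => saddleIntegrand_norm_le s r)
  have hi2 : MeasureTheory.IntegrableOn
      (fun r : ℝ => Complex.exp (-s * (r : ℂ) ^ 2)) (Set.Ioi 0) :=
    (integrable_cexp_neg_mul_sq hs).integrableOn
  rw [← integral_gaussian_complex_Ioi hs, saddleIntegral, ← MeasureTheory.integral_sub hi1 hi2,
    ← integral_gaussian_Ioi, ← MeasureTheory.integral_const_mul]
  refine MeasureTheory.norm_integral_le_of_norm_le
    ((integrableOn_exp_neg_mul_sq (by linarith)).const_mul _)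
    (Filter.Eventually.of_forall fun r => ?_)
  refine le_trans ?_ (pow_six_mul_exp_le hs r)
  have h : ‖Complex.exp (-s * (r : ℂ) ^ 2)‖ = Real.exp (-s.re * r ^ 2) := by
    rw [Complex.norm_exp, ← Complex.ofReal_pow, Complex.re_mul_ofReal, Complex.neg_re]
  rw [show Complex.exp (-s * (r : ℂ) ^ 2) * (Real.cos (r ^ 3 / 3) : ℂ) -
      Complex.exp (-s * (r : ℂ) ^ 2) =
      Complex.exp (-s * (r : ℂ) ^ 2) * ((Real.cos (r ^ 3 / 3) - 1 : ℝ) : ℂ) by push_cast; ring,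
    norm_mul, h, Complex.norm_real, mul_comm]
  refine mul_le_mul_of_nonneg_right ?_ (Real.exp_pos _).le
  rw [Real.norm_eq_abs, abs_le]
  have h1 := Real.one_sub_sq_div_two_le_cos (x := r ^ 3 / 3)
  have h2 := Real.cos_le_one (r ^ 3 / 3)
  constructor <;> nlinarith [sq_nonneg (r ^ 3)]

/-- Leading asymptotics of `Ai` away from the negative axis, written with the logarithm
`q` of the square root of the argument. -/
theorem Ai_exp_asymptotics {c : ℝ} (hc : 0 < c) : ∃ C > 0, ∀ q : ℂ,
    c ≤ Real.cos q.im → |q.im| < π / 2 → ∃ ρ : ℂ, ‖ρ‖ ≤ C * Real.exp (-3 * q.re) ∧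
      Ai (Complex.exp q ^ 2) =
        Complex.exp (-(2 / 3) * Complex.exp q ^ 3) * Complex.exp (-q / 2) / (2 * Real.sqrt π) *
          (1 + ρ) := by
  refine ⟨48 / c ^ 3 * Real.sqrt (2 * π / c) / Real.sqrt π, by positivity, fun q hq hq2 => ?_⟩
  set s := Complex.exp q with hs_def
  have hre : s.re = Real.exp q.re * Real.cos q.im := Complex.exp_re q
  have hre2 : c * Real.exp q.re ≤ s.re := by
    rw [hre, mul_comm]
    exact mul_le_mul_of_nonneg_left hq (Real.exp_pos _).le
  have hs : 0 < s.re := lt_of_lt_of_le (by positivity) hre2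
  have hsp : (0 : ℝ) < Real.sqrt π := Real.sqrt_pos.2 Real.pi_pos
  have hspc : ((Real.sqrt π : ℝ) : ℂ) ≠ 0 := by exact_mod_cast hsp.ne'
  have hsq : ((Real.sqrt π : ℝ) : ℂ) ^ 2 = π := by
    norm_cast
    exact Real.sq_sqrt Real.pi_pos.le
  have hpow : (π / s) ^ (1 / 2 : ℂ) = Real.sqrt π * Complex.exp (-q / 2) := by
    have h1 : (π : ℂ) / s = Complex.exp ((Real.log π : ℝ) - q) := by
      rw [Complex.exp_sub, ← Complex.ofReal_exp, Real.exp_log Real.pi_pos]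
    have h2 : Complex.log (Complex.exp ((Real.log π : ℝ) - q)) = (Real.log π : ℝ) - q := by
      have := abs_lt.1 hq2
      apply Complex.log_exp <;> simp <;> linarith [Real.pi_pos]
    have h3 : ((Real.sqrt π : ℝ) : ℂ) = Complex.exp ((Real.log π : ℝ) / 2) := by
      rw [Real.sqrt_eq_rpow, Real.rpow_def_of_pos Real.pi_pos, Complex.ofReal_exp]
      congr 1
      push_cast
      ring
    rw [h1, Complex.cpow_def_of_ne_zero (Complex.exp_ne_zero _), h2, h3, ← Complex.exp_add]
    congr 1
    ring
  have hE : Complex.exp (q / 2) * Complex.exp (-q / 2) = 1 := by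
    rw [← Complex.exp_add, ← Complex.exp_zero]
    congr 1
    ring
  have hb := norm_saddleIntegral_sub_le hs
  rw [hpow] at hb
  refine ⟨(saddleIntegral s - Real.sqrt π * Complex.exp (-q / 2) / 2) *
    (2 / Real.sqrt π * Complex.exp (q / 2)), ?_, ?_⟩
  · rw [norm_mul, norm_mul, norm_div, Complex.norm_real, Real.norm_of_nonneg hsp.le,
      Complex.norm_exp, Complex.norm_ofNat, show (q / 2).re = q.re / 2 by simp]
    have hsqrt : Real.sqrt (π / (s.re / 2)) ≤ Real.sqrt (2 * π / c) * Real.exp (-(q.re / 2)) := by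
      have : Real.exp (-(q.re / 2)) = Real.sqrt (Real.exp (-q.re)) := by
        rw [show -q.re = -(q.re / 2) + -(q.re / 2) by ring, Real.exp_add,
          Real.sqrt_mul_self (Real.exp_pos _).le]
      rw [this, ← Real.sqrt_mul (by positivity)]
      apply Real.sqrt_le_sqrt
      rw [Real.exp_neg, ← div_eq_mul_inv, div_div, div_div_eq_mul_div, mul_comm π 2]
      gcongr
    have hcube : 48 / s.re ^ 3 ≤ 48 / c ^ 3 * Real.exp (-3 * q.re) := by
      have : Real.exp (-3 * q.re) = (Real.exp q.re ^ 3)⁻¹ := by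
        rw [← Real.exp_nat_mul, ← Real.exp_neg]
        push_cast
        ring_nf
      rw [this, ← div_eq_mul_inv, div_div, ← mul_pow]
      gcongr
    have hexp : Real.exp (-(q.re / 2)) * Real.exp (q.re / 2) = 1 := by
      rw [← Real.exp_add]; simp
    calc _ ≤ (48 / c ^ 3 * Real.exp (-3 * q.re) *
          (Real.sqrt (2 * π / c) * Real.exp (-(q.re / 2)) / 2)) *
          (2 / Real.sqrt π * Real.exp (q.re / 2)) := by
          refine mul_le_mul_of_nonneg_right (hb.trans ?_) (by positivity)
          gcongr
      _ = 48 / c ^ 3 * Real.sqrt (2 * π / c) / Real.sqrt π * Real.exp (-3 * q.re) *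
          (Real.exp (-(q.re / 2)) * Real.exp (q.re / 2)) := by ring
      _ = _ := by rw [hexp, mul_one]
  · rw [Ai_sq hs, ← hsq]
    clear hb hpow hsq
    generalize Complex.exp (-q / 2) = y at hE ⊢
    generalize Complex.exp (q / 2) = x at hE ⊢
    generalize Complex.exp (-(2 / 3) * s ^ 3) = e
    generalize saddleIntegral s = S
    generalize (Real.sqrt π : ℂ) = w at hspc ⊢
    field_simp
    linear_combination e * (w * y - 2 * S) * hE

lemma norm_half_log_le {μ : ℂ} (hμ : ‖μ‖ ≤ 1 / 2) :
    ‖Complex.log (1 - μ) / 2‖ ≤ ‖μ‖ := by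
  have h := Complex.norm_log_one_add_half_le_self (z := -μ) (by simpa using hμ)
  rw [norm_neg, ← sub_eq_add_neg] at h
  rw [norm_div, Complex.norm_ofNat]
  linarith [norm_nonneg μ]

lemma exp_half_log_sq {μ : ℂ} (hμ : ‖μ‖ ≤ 1 / 2) :
    Complex.exp (Complex.log (1 - μ) / 2) ^ 2 = 1 - μ := by
  have h0 : (1 : ℂ) - μ ≠ 0 := by
    intro h
    rw [← sub_eq_zero.1 h, norm_one] at hμ
    linarith
  rw [← Complex.exp_nat_mul, Nat.cast_ofNat, mul_div_cancel₀ _ two_ne_zero,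
    Complex.exp_log h0]

/-- Second-order Taylor estimate for `(1 - μ)^{3/2}`. -/
lemma norm_cube_sub_le {x μ : ℂ} (hx : 0 ≤ x.re) (hx2 : x ^ 2 = 1 - μ) (hμ : ‖μ‖ ≤ 1 / 2) :
    ‖x ^ 3 - (1 - 3 / 2 * μ)‖ ≤ 2 * ‖μ‖ ^ 2 := by
  have h1 : 1 ≤ ‖x + 1‖ := by
    refine le_trans ?_ (Complex.re_le_norm _)
    simpa using hx
  have h2 : ‖x - 1‖ ≤ ‖μ‖ := by
    have : (x - 1) * (x + 1) = -μ := by linear_combination hx2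
    have h3 := congrArg norm this
    rw [norm_mul, norm_neg] at h3
    nlinarith [norm_nonneg (x - 1)]
  have h4 : ‖x + 1 / 2‖ ≤ 2 := by
    calc ‖x + 1 / 2‖ = ‖(x - 1) + 3 / 2‖ := by congr 1; ring
      _ ≤ ‖x - 1‖ + ‖(3 / 2 : ℂ)‖ := norm_add_le _ _
      _ ≤ 2 := by norm_num; linarith
  have h5 : x ^ 3 - (1 - 3 / 2 * μ) = (x - 1) ^ 2 * (x + 1 / 2) := by
    linear_combination (3 / 2) * hx2
  rw [h5, norm_mul, norm_pow]
  nlinarith [norm_nonneg (x - 1), norm_nonneg μ, pow_le_pow_left₀ (norm_nonneg _) h2 2,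
    norm_nonneg (x + 1/2)]

lemma norm_exp_mul_one_add_sub_one_le {y ρ : ℂ} {d : ℝ} (hy : ‖y‖ ≤ d) (hρ : ‖ρ‖ ≤ d)
    (hd : d ≤ 1) : ‖Complex.exp y * (1 + ρ) - 1‖ ≤ 5 * d := by
  have h1 := Complex.norm_exp_sub_one_le (hy.trans hd)
  have : Complex.exp y * (1 + ρ) - 1 = (Complex.exp y - 1) * (1 + ρ) + ρ := by ring
  rw [this]
  have h2 : ‖1 + ρ‖ ≤ 2 := by
    refine (norm_add_le _ _).trans ?_
    rw [norm_one]; linarith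
  calc _ ≤ ‖Complex.exp y - 1‖ * ‖1 + ρ‖ + ‖ρ‖ := by
        refine (norm_add_le _ _).trans ?_
        rw [norm_mul]
    _ ≤ (2 * d) * 2 + d := by
        have hd0 : 0 ≤ d := (norm_nonneg _).trans hy
        gcongr
        linarith
    _ = _ := by ring

/-- The relative size of the corrections to the semiclassical Airy asymptotics at wave
number of modulus `r`. -/
noncomputable def relError (f r : ℝ) : ℝ := f / r + f / r ^ 2 + f / r ^ 3

set_option maxHeartbeats 1000000 in
/-- Uniform asymptotics of the two recessive Airy functions at a slightly shifted energy. -/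
lemma Ai_shifted_asymptotics {κ₀ : ℝ} (hκ₀ : 0 < κ₀) :
    ∃ C > 0, ∃ c > 0, ∀ κ' : ℝ, |κ'| ≤ κ₀ → ∀ σ : ℝ, σ = 1 ∨ σ = -1 → ∀ f : ℝ, 0 < f →
      ∀ p : ℂ, |p.im| ≤ π / 4 → relError f (Real.exp p.re) ≤ c →
      ∃ X : ℂ, ‖X - 1‖ ≤ C * relError f (Real.exp p.re) ∧
        Ai (Complex.exp (-(σ * π * Complex.I / 3)) * (Complex.exp p ^ 2 - κ' * f) *
            ((f ^ (-(2 : ℝ) / 3) : ℝ) : ℂ)) =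
          Complex.exp (σ * π * Complex.I / 12) * ((f ^ ((1 : ℝ) / 6) : ℝ) : ℂ) *
            Complex.exp (-p / 2) * Complex.exp (σ * (2 / 3 * Complex.exp p ^ 3 / f -
              κ' * Complex.exp p) * Complex.I) / (2 * (Real.sqrt π : ℂ)) * X := by
  have hcos : 0 < Real.cos (11 * π / 24) :=
    Real.cos_pos_of_mem_Ioo ⟨by linarith [Real.pi_pos], by linarith [Real.pi_pos]⟩
  obtain ⟨C₁, hC₁, hAi⟩ := Ai_exp_asymptotics hcos
  set M : ℝ := 2 * κ₀ ^ 2 + κ₀ + C₁ * Real.exp 3 with hM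
  have hMpos : 0 < M := by positivity
  refine ⟨5 * M, by positivity, min (1 / (20 * κ₀)) (1 / M), by positivity, ?_⟩
  intro κ' hκ' σ hσ f hf p hp hd
  set r := Real.exp p.re with hr_def
  set k := Complex.exp p with hk_def
  have hr : 0 < r := Real.exp_pos _
  have hkr : ‖k‖ = r := Complex.norm_exp p
  have hk0 : k ≠ 0 := Complex.exp_ne_zero p
  have hf0 : (f : ℂ) ≠ 0 := by exact_mod_cast hf.ne'
  set μ : ℂ := κ' * f / k ^ 2 with hμ_def
  have e1 : 0 < f / r := by positivity
  have e2 : 0 < f / r ^ 2 := by positivity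
  have e3 : 0 < f / r ^ 3 := by positivity
  set d := relError f r with hd_def
  have hdval : d = f / r + f / r ^ 2 + f / r ^ 3 := rfl
  have hd0 : 0 < d := by rw [hdval]; positivity
  have hμn : ‖μ‖ = |κ'| * (f / r ^ 2) := by
    rw [hμ_def, norm_div, norm_mul, Complex.norm_real, Complex.norm_real, norm_pow, hkr,
      Real.norm_eq_abs, Real.norm_of_nonneg hf.le]
    ring
  have hμd : ‖μ‖ ≤ κ₀ * d := by
    rw [hμn]
    have : f / r ^ 2 ≤ d := by rw [hdval]; linarith
    gcongr
  have hμ20 : ‖μ‖ ≤ 1 / 20 := by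
    have : κ₀ * d ≤ κ₀ * (1 / (20 * κ₀)) := by
      have := hd.trans (min_le_left _ _)
      gcongr
    have h2 : κ₀ * (1 / (20 * κ₀)) = 1 / 20 := by field_simp
    linarith
  have hμ2 : ‖μ‖ ≤ 1 / 2 := by linarith
  set m := Complex.log (1 - μ) / 2 with hm_def
  have hm : ‖m‖ ≤ ‖μ‖ := norm_half_log_le hμ2
  have hmim : |m.im| ≤ 1 / 20 := (Complex.abs_im_le_norm m).trans (hm.trans hμ20)
  have hmre : |m.re| ≤ 1 / 20 := (Complex.abs_re_le_norm m).trans (hm.trans hμ20)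
  have hx2 : Complex.exp m ^ 2 = 1 - μ := exp_half_log_sq hμ2
  have hxre : 0 ≤ (Complex.exp m).re := by
    rw [Complex.exp_re]
    have := abs_le.1 hmim
    have : 0 ≤ Real.cos m.im := Real.cos_nonneg_of_mem_Icc
      ⟨by linarith [Real.pi_gt_three], by linarith [Real.pi_gt_three]⟩
    positivity
  have hx3 := norm_cube_sub_le hxre hx2 hμ2
  set q : ℂ := p - σ * π * Complex.I / 6 - (Real.log f / 3 : ℝ) + m with hq_def
  have hqim : q.im = p.im - σ * (π / 6) + m.im := by
    simp [hq_def]; ring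
  have hqre : q.re = p.re - Real.log f / 3 + m.re := by
    simp [hq_def]
  have hqabs : |q.im| ≤ 11 * π / 24 := by
    have h1 := abs_le.1 hp
    have h2 := abs_le.1 hmim
    have := Real.pi_gt_three
    rw [hqim, abs_le]
    rcases hσ with rfl | rfl <;> constructor <;> linarith
  obtain ⟨ρ, hρ, hA⟩ := hAi q (by
      rw [← Real.cos_abs q.im]
      exact Real.cos_le_cos_of_nonneg_of_le_pi (abs_nonneg _)
        (by linarith [Real.pi_pos]) hqabs) (by linarith [Real.pi_pos])
  have hlog : Complex.exp ((Real.log f : ℝ) : ℂ) = f := by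
    rw [← Complex.ofReal_exp, Real.exp_log hf]
  have hexpre : Real.exp (-3 * q.re) ≤ Real.exp 3 * (f / r ^ 3) := by
    have : Real.exp 3 * (f / r ^ 3) = Real.exp (3 + (Real.log f - 3 * p.re)) := by
      rw [Real.exp_add, Real.exp_sub, Real.exp_log hf, hr_def, ← Real.exp_nat_mul]
      norm_num
    rw [this, hqre]
    apply Real.exp_le_exp.2
    have := abs_le.1 hmre
    linarith
  have hρd : ‖ρ‖ ≤ M * d := by
    have h3 : f / r ^ 3 ≤ d := by rw [hdval]; linarith
    calc ‖ρ‖ ≤ C₁ * (Real.exp 3 * (f / r ^ 3)) := by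
          refine hρ.trans ?_
          gcongr
      _ ≤ C₁ * (Real.exp 3 * d) := by gcongr
      _ ≤ M * d := by
          rw [hM]
          have : 0 ≤ (2 * κ₀ ^ 2 + κ₀) * d := by positivity
          nlinarith
  set y : ℂ := σ * (2 / 3 * (k ^ 3 / f)) * (Complex.exp m ^ 3 - (1 - 3 / 2 * μ)) * Complex.I
    - m / 2 with hy_def
  have hσn : ‖(σ : ℂ)‖ = 1 := by
    rcases hσ with rfl | rfl <;> simp
  have hyd : ‖y‖ ≤ M * d := by
    have h1 : ‖y‖ ≤ 2 / 3 * (r ^ 3 / f) * (2 * ‖μ‖ ^ 2) + ‖m‖ / 2 := by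
      refine (norm_sub_le _ _).trans ?_
      rw [norm_mul, norm_mul, norm_mul, norm_mul, Complex.norm_I, hσn, norm_div, norm_div,
        norm_pow, hkr, Complex.norm_real, Real.norm_of_nonneg hf.le, norm_div,
        Complex.norm_ofNat, Complex.norm_ofNat, mul_one, one_mul]
      gcongr
    have h2 : r ^ 3 / f * ‖μ‖ ^ 2 ≤ κ₀ ^ 2 * (f / r) := by
      rw [hμn]
      calc r ^ 3 / f * (|κ'| * (f / r ^ 2)) ^ 2 = |κ'| ^ 2 * (f / r) := by field_simp
        _ ≤ _ := by gcongr
    have h3 : f / r ≤ d := by rw [hdval]; linarith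
    have h4 : κ₀ ^ 2 * (f / r) ≤ κ₀ ^ 2 * d := by gcongr
    have h5 : 0 ≤ C₁ * Real.exp 3 * d := by positivity
    have h6 : 0 ≤ κ₀ ^ 2 * d := by positivity
    have h7 : 0 ≤ κ₀ * d := by positivity
    have h8 : M * d = 2 * (κ₀ ^ 2 * d) + κ₀ * d + C₁ * Real.exp 3 * d := by rw [hM]; ring
    have h9 : 2 / 3 * (r ^ 3 / f) * (2 * ‖μ‖ ^ 2) = 4 / 3 * (r ^ 3 / f * ‖μ‖ ^ 2) := by ring
    rw [h9] at h1
    rw [h8]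
    linarith
  have hMd : M * d ≤ 1 := by
    have h1 := hd.trans (min_le_right _ _)
    calc M * d ≤ M * (1 / M) := by gcongr
      _ = 1 := by field_simp
  refine ⟨Complex.exp y * (1 + ρ), ?_, ?_⟩
  · rw [mul_assoc]
    exact norm_exp_mul_one_add_sub_one_le hyd hρd hMd
  · have hq2 : Complex.exp (-(σ * π * Complex.I / 3)) * (k ^ 2 - κ' * f) *
            ((f ^ (-(2 : ℝ) / 3) : ℝ) : ℂ) = Complex.exp q ^ 2 := by
      have h1 : k ^ 2 - κ' * f = k ^ 2 * Complex.exp m ^ 2 := by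
        rw [hx2, hμ_def]; field_simp
      rw [h1, Real.rpow_def_of_pos hf, Complex.ofReal_exp, hk_def, ← Complex.exp_nat_mul,
        ← Complex.exp_nat_mul, ← Complex.exp_nat_mul, ← Complex.exp_add, ← Complex.exp_add,
        ← Complex.exp_add]
      congr 1
      rw [hq_def]
      push_cast
      ring
    have hq3 : Complex.exp q ^ 3 = -σ * Complex.I * (k ^ 3 / f) * Complex.exp m ^ 3 := by
      have h1 : Complex.exp (-(σ * π * Complex.I / 2)) = -σ * Complex.I := by
        rcases hσ with rfl | rfl
        · rw [show -(((1 : ℝ) : ℂ) * π * Complex.I / 2) = -(π / 2 * Complex.I) by push_cast; ring,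
            Complex.exp_neg, Complex.exp_pi_div_two_mul_I]
          simp
        · rw [show -(((-1 : ℝ) : ℂ) * π * Complex.I / 2) = π / 2 * Complex.I by push_cast; ring,
            Complex.exp_pi_div_two_mul_I]
          simp
      rw [← h1, ← hlog, hk_def, ← Complex.exp_nat_mul,
        ← Complex.exp_nat_mul, ← Complex.exp_nat_mul, ← Complex.exp_sub, ← Complex.exp_add,
        ← Complex.exp_add]
      congr 1
      rw [hq_def]
      push_cast
      ring
    rw [hq2, hA, hq3, Real.rpow_def_of_pos hf, Complex.ofReal_exp]
    have : Complex.exp (-(2 / 3) * (-σ * Complex.I * (k ^ 3 / f) * Complex.exp m ^ 3)) *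
          Complex.exp (-q / 2) =
        Complex.exp (σ * π * Complex.I / 12) * Complex.exp ((Real.log f * (1 / 6) : ℝ) : ℂ) *
            Complex.exp (-p / 2) * Complex.exp (σ * (2 / 3 * k ^ 3 / f -
              κ' * k) * Complex.I) * Complex.exp y := by
      rw [← Complex.exp_add, ← Complex.exp_add, ← Complex.exp_add, ← Complex.exp_add,
        ← Complex.exp_add]
      congr 1
      have h1 : k ^ 3 / f * μ = κ' * k := by rw [hμ_def]; field_simp
      rw [hy_def, hq_def]
      push_cast
      linear_combination (-σ * Complex.I) * h1
    rw [this]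
    ring

/-- The non-oscillating part of `D_f`, with `K = 2ηk`, `Λ = exp(2iκk)` and amplitude
corrections `x₁, x₂, y₁, y₂`. -/
noncomputable def steadyPart (K Λ x₁ x₂ y₁ y₂ : ℂ) : ℂ :=
  1 + Complex.I / K * (x₁ * y₁ + x₂ * y₂) - x₂ * y₁ * (x₁ * y₂ - Λ ^ 2 * x₂ * y₁) / K ^ 2

/-- The coefficient of the rapidly oscillating factor `exp(4ik³/(3f))` in `D_f`. -/
noncomputable def oscPart (K Λ x₁ x₂ y₁ y₂ : ℂ) : ℂ :=
  (Λ⁻¹ * x₁ ^ 2 + Λ * x₂ ^ 2) / K +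
    Complex.I / K ^ 2 * (x₁ * x₂ * (Λ⁻¹ * x₁ * y₂ - Λ * x₂ * y₁))

lemma steadyPart_one (K Λ : ℂ) (hK : K ≠ 0) :
    steadyPart K Λ 1 1 1 1 = ((K + Complex.I) ^ 2 + Λ ^ 2) / K ^ 2 := by
  unfold steadyPart
  field_simp
  linear_combination (-1 : ℂ) * Complex.I_sq

lemma oscPart_one (K Λ : ℂ) (hK : K ≠ 0) :
    oscPart K Λ 1 1 1 1 = (Λ⁻¹ * (K + Complex.I) + Λ * (K - Complex.I)) / K ^ 2 := by
  unfold oscPart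
  field_simp
  ring

/-- The Airy parametrix inserted in `D_f`: a purely algebraic identity.  Here `τ = exp(iπ/12)`,
`w = f^{1/6}`, `h = k^{-1/2}`, `s = √π`. -/
lemma determinant_eq_parts {τ w h s e lam k η x₁ x₂ y₁ y₂ u₁ u₂ v₁ v₂ : ℂ}
    (hτ : τ ^ 6 = Complex.I) (hw : w ≠ 0) (hhk : h ^ 2 * k = 1) (hs : s ≠ 0) (he : e ≠ 0)
    (hlam : lam ≠ 0) (hη : η ≠ 0)
    (hu₁ : u₁ = τ * w * h * (e * lam⁻¹) / (2 * s) * x₁)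
    (hu₂ : u₂ = τ * w * h * (e * lam) / (2 * s) * x₂)
    (hv₁ : v₁ = τ⁻¹ * w * h * (e⁻¹ * lam) / (2 * s) * y₁)
    (hv₂ : v₂ = τ⁻¹ * w * h * (e⁻¹ * lam⁻¹) / (2 * s) * y₂) :
    1 + (u₁ * (-τ ^ 8 * u₁ + τ ^ 4 * v₁) + u₂ * (-τ ^ 8 * u₂ + τ ^ 4 * v₂)) /
        (η * (w ^ 2 * (τ ^ 2)⁻¹ / (2 * s ^ 2))) +
      u₂ * (-τ ^ 8 * u₁ + τ ^ 4 * v₁) * (u₁ * (-τ ^ 8 * u₂ + τ ^ 4 * v₂) -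
        u₂ * (-τ ^ 8 * u₁ + τ ^ 4 * v₁)) / (η ^ 2 * (w ^ 2 * (τ ^ 2)⁻¹ / (2 * s ^ 2)) ^ 2) =
    steadyPart (2 * η * k) (lam ^ 2) x₁ x₂ y₁ y₂ +
      e ^ 2 * oscPart (2 * η * k) (lam ^ 2) x₁ x₂ y₁ y₂ := by
  have hτ0 : τ ≠ 0 := by
    rintro rfl
    simp at hτ
    exact Complex.I_ne_zero hτ.symm
  have hh0 : h ≠ 0 := by
    rintro rfl
    simp at hhk
  have hk : k = (h ^ 2)⁻¹ := eq_inv_of_mul_eq_one_right hhk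
  have hτ12 : τ ^ 12 = -1 := by
    rw [show τ ^ 12 = (τ ^ 6) ^ 2 by ring, hτ, Complex.I_sq]
  have h1 : (u₁ * (-τ ^ 8 * u₁ + τ ^ 4 * v₁) + u₂ * (-τ ^ 8 * u₂ + τ ^ 4 * v₂)) /
        (η * (w ^ 2 * (τ ^ 2)⁻¹ / (2 * s ^ 2))) =
      Complex.I / (2 * η * k) * (x₁ * y₁ + x₂ * y₂) +
        e ^ 2 * (((lam ^ 2)⁻¹ * x₁ ^ 2 + lam ^ 2 * x₂ ^ 2) / (2 * η * k)) := by
    rw [← hτ, hu₁, hu₂, hv₁, hv₂, hk]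
    field_simp
    linear_combination (-e^2*(x₁^2+lam^4*x₂^2)) * hτ12
  have h2 : u₂ * (-τ ^ 8 * u₁ + τ ^ 4 * v₁) * (u₁ * (-τ ^ 8 * u₂ + τ ^ 4 * v₂) -
        u₂ * (-τ ^ 8 * u₁ + τ ^ 4 * v₁)) / (η ^ 2 * (w ^ 2 * (τ ^ 2)⁻¹ / (2 * s ^ 2)) ^ 2) =
      -(x₂ * y₁ * (x₁ * y₂ - (lam ^ 2) ^ 2 * x₂ * y₁) / (2 * η * k) ^ 2) +
      e ^ 2 * (Complex.I / (2 * η * k) ^ 2 *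
        (x₁ * x₂ * ((lam ^ 2)⁻¹ * x₁ * y₂ - lam ^ 2 * x₂ * y₁))) := by
    rw [← hτ, hu₁, hu₂, hv₁, hv₂, hk]
    field_simp
    linear_combination (x₂ * x₁ * lam ^ 2 * y₁ * y₂ - x₂ ^ 2 * lam ^ 6 * y₁ ^ 2 +
      τ ^ 6 * (x₂ ^ 2 * e ^ 2 * x₁ * lam ^ 4 * y₁ - x₂ * e ^ 2 * x₁ ^ 2 * y₂)) * hτ12
  rw [h1, h2, steadyPart, oscPart]
  ring

set_option maxHeartbeats 1000000 in
/-- Semiclassical decomposition of `D_f` in the variable `z = exp(2p)`. -/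
lemma Df_eq_steadyPart_add_oscPart {κ η : ℝ} (hκ : 0 < κ) (hη : 0 < η) :
    ∃ C > 0, ∃ c > 0, ∀ f : ℝ, 0 < f → ∀ p : ℂ, |p.im| ≤ π / 4 →
      relError f (Real.exp p.re) ≤ c → ∃ x₁ x₂ y₁ y₂ : ℂ,
        ‖x₁ - 1‖ ≤ C * relError f (Real.exp p.re) ∧ ‖x₂ - 1‖ ≤ C * relError f (Real.exp p.re) ∧
        ‖y₁ - 1‖ ≤ C * relError f (Real.exp p.re) ∧ ‖y₂ - 1‖ ≤ C * relError f (Real.exp p.re) ∧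
        Df κ η f (Complex.exp p ^ 2) =
          steadyPart (2 * η * Complex.exp p) (Complex.exp (2 * κ * Complex.exp p * Complex.I))
            x₁ x₂ y₁ y₂ + Complex.exp (4 / 3 * Complex.exp p ^ 3 / f * Complex.I) *
          oscPart (2 * η * Complex.exp p) (Complex.exp (2 * κ * Complex.exp p * Complex.I))
            x₁ x₂ y₁ y₂ := by
  obtain ⟨C, hC, c, hc, H⟩ := Ai_shifted_asymptotics hκ
  refine ⟨C, hC, c, hc, fun f hf p hp hd => ?_⟩
  set k := Complex.exp p with hk_def
  have hk0 : k ≠ 0 := Complex.exp_ne_zero p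
  obtain ⟨x₁, hx₁, hu₁⟩ := H κ (abs_of_pos hκ).le 1 (Or.inl rfl) f hf p hp hd
  obtain ⟨x₂, hx₂, hu₂⟩ := H (-κ) (by rw [abs_neg, abs_of_pos hκ]) 1 (Or.inl rfl) f hf p hp hd
  obtain ⟨y₁, hy₁, hv₁⟩ := H κ (abs_of_pos hκ).le (-1) (Or.inr rfl) f hf p hp hd
  obtain ⟨y₂, hy₂, hv₂⟩ := H (-κ) (by rw [abs_neg, abs_of_pos hκ]) (-1) (Or.inr rfl) f hf p hp hd
  refine ⟨x₁, x₂, y₁, y₂, hx₁, hx₂, hy₁, hy₂, ?_⟩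
  set τ := Complex.exp (π * Complex.I / 12) with hτ_def
  have hτ6 : τ ^ 6 = Complex.I := by
    rw [hτ_def, ← Complex.exp_nat_mul,
      show ((6 : ℕ) : ℂ) * (π * Complex.I / 12) = π / 2 * Complex.I by push_cast; ring,
      Complex.exp_pi_div_two_mul_I]
  have hω : ωc = τ ^ 8 := by
    rw [hτ_def, ← Complex.exp_nat_mul, ωc]
    congr 1; push_cast; ring
  have hωi : ωc⁻¹ = -τ ^ 4 := by
    rw [hω]
    apply inv_eq_of_mul_eq_one_right
    linear_combination (-τ ^ 6 - Complex.I) * hτ6 - Complex.I_sq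
  have hneg : Complex.exp (-(((1 : ℝ) : ℂ) * π * Complex.I / 3)) = -ωc := by
    rw [show -(((1 : ℝ) : ℂ) * π * Complex.I / 3) = 2 * π * Complex.I / 3 - π * Complex.I by
      push_cast; ring, Complex.exp_sub, Complex.exp_pi_mul_I, div_neg, div_one, ωc]
  have hneg' : Complex.exp (-(((-1 : ℝ) : ℂ) * π * Complex.I / 3)) = -ωc⁻¹ := by
    rw [show -(((-1 : ℝ) : ℂ) * π * Complex.I / 3) = -(2 * π * Complex.I / 3) + π * Complex.I by
      push_cast; ring, Complex.exp_add, Complex.exp_pi_mul_I, Complex.exp_neg, ωc, mul_neg_one]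
  have hτ1 : Complex.exp (((1 : ℝ) : ℂ) * π * Complex.I / 12) = τ := by
    rw [hτ_def]; congr 1; push_cast; ring
  have hτ2 : Complex.exp (((-1 : ℝ) : ℂ) * π * Complex.I / 12) = τ⁻¹ := by
    rw [hτ_def, ← Complex.exp_neg]; congr 1; push_cast; ring
  set e := Complex.exp (2 / 3 * k ^ 3 / f * Complex.I) with he_def
  set lam := Complex.exp (κ * k * Complex.I) with hlam_def
  rw [hneg, hτ1, ← hk_def] at hu₁ hu₂
  rw [hneg', hτ2, ← hk_def] at hv₁ hv₂
  have e1 : Complex.exp (((1 : ℝ) : ℂ) * (2 / 3 * k ^ 3 / f - κ * k) * Complex.I) =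
      e * lam⁻¹ := by
    rw [he_def, hlam_def, ← Complex.exp_neg, ← Complex.exp_add]
    congr 1; push_cast; ring
  have e2 : Complex.exp (((1 : ℝ) : ℂ) * (2 / 3 * k ^ 3 / f - (-κ : ℝ) * k) * Complex.I) =
      e * lam := by
    rw [he_def, hlam_def, ← Complex.exp_add]
    congr 1; push_cast; ring
  have e3 : Complex.exp (((-1 : ℝ) : ℂ) * (2 / 3 * k ^ 3 / f - κ * k) * Complex.I) =
      e⁻¹ * lam := by
    rw [he_def, hlam_def, ← Complex.exp_neg, ← Complex.exp_add]
    congr 1; push_cast; ring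
  have e4 : Complex.exp (((-1 : ℝ) : ℂ) * (2 / 3 * k ^ 3 / f - (-κ : ℝ) * k) * Complex.I) =
      e⁻¹ * lam⁻¹ := by
    rw [he_def, hlam_def, ← Complex.exp_neg, ← Complex.exp_neg, ← Complex.exp_add]
    congr 1; push_cast; ring
  rw [e1] at hu₁
  rw [e2] at hu₂
  rw [e3] at hv₁
  rw [e4] at hv₂
  have hsp : (Real.sqrt π : ℂ) ≠ 0 := by exact_mod_cast (Real.sqrt_pos.2 Real.pi_pos).ne'
  have hwpos : 0 < f ^ ((1 : ℝ) / 6) := Real.rpow_pos_of_pos hf _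
  have key := determinant_eq_parts (k := k) (η := η) hτ6 (by exact_mod_cast hwpos.ne')
    (by
      rw [← Complex.exp_nat_mul, hk_def, ← Complex.exp_add, ← Complex.exp_zero]
      congr 1; push_cast; ring) hsp (Complex.exp_ne_zero _) (Complex.exp_ne_zero _)
    (by exact_mod_cast hη.ne') hu₁ hu₂ hv₁ hv₂
  have hW : Wf f = ((f ^ ((1 : ℝ) / 6) : ℝ) : ℂ) ^ 2 * (τ ^ 2)⁻¹ / (2 * (Real.sqrt π : ℂ) ^ 2) := by
    have h1 : ((f ^ ((1 : ℝ) / 6) : ℝ) : ℂ) ^ 2 = ((f ^ ((1 : ℝ) / 3) : ℝ) : ℂ) := by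
      rw [← Complex.ofReal_pow, ← Real.rpow_natCast, ← Real.rpow_mul hf.le]
      norm_num
    have h2 : (Real.sqrt π : ℂ) ^ 2 = π := by
      rw [← Complex.ofReal_pow, Real.sq_sqrt Real.pi_pos.le]
    rw [h1, h2, Wf, hτ_def, ← Complex.exp_nat_mul, ← Complex.exp_neg]
    congr 3
    push_cast; ring_nf
  have ha : ∀ κ' : ℝ, Ai (-(k ^ 2 - κ' * f) * ((f ^ (-(2 : ℝ) / 3) : ℝ) : ℂ)) =
      -τ ^ 8 * Ai (-ωc * (k ^ 2 - κ' * f) * ((f ^ (-(2 : ℝ) / 3) : ℝ) : ℂ)) +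
      τ ^ 4 * Ai (-ωc⁻¹ * (k ^ 2 - κ' * f) * ((f ^ (-(2 : ℝ) / 3) : ℝ) : ℂ)) := by
    intro κ'
    have h := Ai_connection (-(k ^ 2 - κ' * f) * ((f ^ (-(2 : ℝ) / 3) : ℝ) : ℂ))
    rw [show ωc * (-(k ^ 2 - κ' * f) * ((f ^ (-(2 : ℝ) / 3) : ℝ) : ℂ)) =
        -ωc * (k ^ 2 - κ' * f) * ((f ^ (-(2 : ℝ) / 3) : ℝ) : ℂ) by ring,
      show ωc⁻¹ * (-(k ^ 2 - κ' * f) * ((f ^ (-(2 : ℝ) / 3) : ℝ) : ℂ)) =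
        -ωc⁻¹ * (k ^ 2 - κ' * f) * ((f ^ (-(2 : ℝ) / 3) : ℝ) : ℂ) by ring] at h
    generalize Ai (-ωc * (k ^ 2 - κ' * f) * ((f ^ (-(2 : ℝ) / 3) : ℝ) : ℂ)) = A at h ⊢
    generalize Ai (-ωc⁻¹ * (k ^ 2 - κ' * f) * ((f ^ (-(2 : ℝ) / 3) : ℝ) : ℂ)) = B at h ⊢
    rw [hωi, hω] at h
    linear_combination h
  have hm : k ^ 2 + κ * f = k ^ 2 - (-κ : ℝ) * f := by push_cast; ring
  have hlam2 : lam ^ 2 = Complex.exp (2 * κ * k * Complex.I) := by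
    rw [hlam_def, ← Complex.exp_nat_mul]
    congr 1; push_cast; ring
  have he2 : e ^ 2 = Complex.exp (4 / 3 * k ^ 3 / f * Complex.I) := by
    rw [he_def, ← Complex.exp_nat_mul]
    congr 1; push_cast; ring
  rw [hlam2, he2] at key
  rw [← key, Df, alphaP, alphaM, betaP, betaM, hm, ha, ha, hW]

lemma norm_mul_sub_one_le {a b : ℂ} {d e : ℝ} (ha : ‖a - 1‖ ≤ d) (hb : ‖b - 1‖ ≤ e) :
    ‖a * b - 1‖ ≤ d + e + d * e := by
  have h : a * b - 1 = (a - 1) + (b - 1) + (a - 1) * (b - 1) := by ring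
  rw [h]
  refine (norm_add₃_le).trans ?_
  rw [norm_mul]
  have := (norm_nonneg _).trans ha
  gcongr

lemma norm_mul_sub_one_le_three {a b : ℂ} {d : ℝ} (hd : d ≤ 1) (ha : ‖a - 1‖ ≤ d)
    (hb : ‖b - 1‖ ≤ d) : ‖a * b - 1‖ ≤ 3 * d := by
  have h0 := (norm_nonneg _).trans ha
  have := norm_mul_sub_one_le ha hb
  nlinarith

lemma norm_mul_mul_mul_sub_one_le {a b c e : ℂ} {d : ℝ} (hd : d ≤ 1) (ha : ‖a - 1‖ ≤ d)
    (hb : ‖b - 1‖ ≤ d) (hc : ‖c - 1‖ ≤ d) (he : ‖e - 1‖ ≤ d) :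
    ‖(a * b) * (c * e) - 1‖ ≤ 15 * d := by
  have h0 := (norm_nonneg _).trans ha
  have := norm_mul_sub_one_le (norm_mul_sub_one_le_three hd ha hb)
    (norm_mul_sub_one_le_three hd hc he)
  nlinarith

lemma norm_steadyPart_sub_le {K Λ x₁ x₂ y₁ y₂ : ℂ} {d : ℝ} (hd : d ≤ 1)
    (hx₁ : ‖x₁ - 1‖ ≤ d) (hx₂ : ‖x₂ - 1‖ ≤ d) (hy₁ : ‖y₁ - 1‖ ≤ d) (hy₂ : ‖y₂ - 1‖ ≤ d) :
    ‖steadyPart K Λ x₁ x₂ y₁ y₂ - steadyPart K Λ 1 1 1 1‖ ≤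
      15 * d * ((1 + ‖Λ‖ ^ 2) * (1 / ‖K‖ + 1 / ‖K‖ ^ 2)) := by
  have h0 := (norm_nonneg _).trans hx₁
  have h : steadyPart K Λ x₁ x₂ y₁ y₂ - steadyPart K Λ 1 1 1 1 =
      Complex.I / K * ((x₁ * y₁ - 1) + (x₂ * y₂ - 1)) -
        ((x₂ * y₁) * (x₁ * y₂) - 1 - Λ ^ 2 * ((x₂ * y₁) * (x₂ * y₁) - 1)) / K ^ 2 := by
    unfold steadyPart; ring
  rw [h]
  calc _ ≤ 1 / ‖K‖ * (3 * d + 3 * d) + (15 * d + ‖Λ‖ ^ 2 * (15 * d)) / ‖K‖ ^ 2 := by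
        refine (norm_sub_le _ _).trans ?_
        rw [norm_mul, norm_div, norm_div, Complex.norm_I, norm_pow]
        gcongr
        · exact (norm_add_le _ _).trans (add_le_add (norm_mul_sub_one_le_three hd hx₁ hy₁)
            (norm_mul_sub_one_le_three hd hx₂ hy₂))
        · refine (norm_sub_le _ _).trans ?_
          rw [norm_mul, norm_pow]
          gcongr
          · exact norm_mul_mul_mul_sub_one_le hd hx₂ hy₁ hx₁ hy₂
          · exact norm_mul_mul_mul_sub_one_le hd hx₂ hy₁ hx₂ hy₁
    _ = 15 * d * ((1 + ‖Λ‖ ^ 2) * (1 / ‖K‖ + 1 / ‖K‖ ^ 2)) -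
        (9 * d + 15 * d * ‖Λ‖ ^ 2) * (1 / ‖K‖) := by ring
    _ ≤ _ := by
        have : 0 ≤ (9 * d + 15 * d * ‖Λ‖ ^ 2) * (1 / ‖K‖) := by positivity
        linarith

lemma norm_oscPart_sub_le {K Λ x₁ x₂ y₁ y₂ : ℂ} {d : ℝ} (hd : d ≤ 1)
    (hx₁ : ‖x₁ - 1‖ ≤ d) (hx₂ : ‖x₂ - 1‖ ≤ d) (hy₁ : ‖y₁ - 1‖ ≤ d) (hy₂ : ‖y₂ - 1‖ ≤ d) :
    ‖oscPart K Λ x₁ x₂ y₁ y₂ - oscPart K Λ 1 1 1 1‖ ≤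
      15 * d * ((‖Λ‖⁻¹ + ‖Λ‖) * (1 / ‖K‖ + 1 / ‖K‖ ^ 2)) := by
  have h0 := (norm_nonneg _).trans hx₁
  have h : oscPart K Λ x₁ x₂ y₁ y₂ - oscPart K Λ 1 1 1 1 =
      (Λ⁻¹ * (x₁ * x₁ - 1) + Λ * (x₂ * x₂ - 1)) / K +
        Complex.I / K ^ 2 * (Λ⁻¹ * ((x₁ * x₂) * (x₁ * y₂) - 1) -
          Λ * ((x₁ * x₂) * (x₂ * y₁) - 1)) := by
    unfold oscPart; ring
  rw [h]
  calc _ ≤ (‖Λ‖⁻¹ * (3 * d) + ‖Λ‖ * (3 * d)) / ‖K‖ +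
        1 / ‖K‖ ^ 2 * (‖Λ‖⁻¹ * (15 * d) + ‖Λ‖ * (15 * d)) := by
        refine (norm_add_le _ _).trans ?_
        rw [norm_mul, norm_div, norm_div, Complex.norm_I, norm_pow]
        gcongr
        · refine (norm_add_le _ _).trans ?_
          rw [norm_mul, norm_mul, norm_inv]
          gcongr
          · exact norm_mul_sub_one_le_three hd hx₁ hx₁
          · exact norm_mul_sub_one_le_three hd hx₂ hx₂
        · refine (norm_sub_le _ _).trans ?_
          rw [norm_mul, norm_mul, norm_inv]
          gcongr
          · exact norm_mul_mul_mul_sub_one_le hd hx₁ hx₂ hx₁ hy₂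
          · exact norm_mul_mul_mul_sub_one_le hd hx₁ hx₂ hx₂ hy₁
    _ = 15 * d * ((‖Λ‖⁻¹ + ‖Λ‖) * (1 / ‖K‖ + 1 / ‖K‖ ^ 2)) -
        12 * d * ((‖Λ‖⁻¹ + ‖Λ‖) / ‖K‖) := by ring
    _ ≤ _ := by
        have : 0 ≤ 12 * d * ((‖Λ‖⁻¹ + ‖Λ‖) / ‖K‖) := by positivity
        linarith

lemma norm_steadyPart_le {K Λ x₁ x₂ y₁ y₂ : ℂ}
    (hx₁ : ‖x₁ - 1‖ ≤ 1) (hx₂ : ‖x₂ - 1‖ ≤ 1) (hy₁ : ‖y₁ - 1‖ ≤ 1) (hy₂ : ‖y₂ - 1‖ ≤ 1) :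
    ‖steadyPart K Λ x₁ x₂ y₁ y₂‖ ≤
      1 + 17 * ((1 + ‖Λ‖ ^ 2) * (1 / ‖K‖ + 1 / ‖K‖ ^ 2)) := by
  have h1 := norm_steadyPart_sub_le (K := K) (Λ := Λ) le_rfl hx₁ hx₂ hy₁ hy₂
  have h2 : ‖steadyPart K Λ 1 1 1 1‖ ≤ 1 + 2 * ((1 + ‖Λ‖ ^ 2) * (1 / ‖K‖ + 1 / ‖K‖ ^ 2)) := by
    have h : steadyPart K Λ 1 1 1 1 = 1 + (Complex.I / K * 2 - (1 - Λ ^ 2) / K ^ 2) := by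
      unfold steadyPart; ring
    rw [h]
    calc _ ≤ 1 + (1 / ‖K‖ * 2 + (1 + ‖Λ‖ ^ 2) / ‖K‖ ^ 2) := by
          refine (norm_add_le _ _).trans ?_
          rw [norm_one]
          gcongr
          refine (norm_sub_le _ _).trans ?_
          rw [norm_mul, norm_div, norm_div, Complex.norm_I, norm_pow, Complex.norm_ofNat]
          gcongr
          refine (norm_sub_le _ _).trans ?_
          rw [norm_one, norm_pow]
      _ = 1 + 2 * ((1 + ‖Λ‖ ^ 2) * (1 / ‖K‖ + 1 / ‖K‖ ^ 2)) -
          (‖Λ‖ ^ 2 * 2 / ‖K‖ + (1 + ‖Λ‖ ^ 2) / ‖K‖ ^ 2) := by ring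
      _ ≤ _ := by
          have : 0 ≤ ‖Λ‖ ^ 2 * 2 / ‖K‖ + (1 + ‖Λ‖ ^ 2) / ‖K‖ ^ 2 := by positivity
          linarith
  have h3 := norm_sub_norm_le (steadyPart K Λ x₁ x₂ y₁ y₂) (steadyPart K Λ 1 1 1 1)
  linarith

lemma norm_oscPart_le {K Λ x₁ x₂ y₁ y₂ : ℂ}
    (hx₁ : ‖x₁ - 1‖ ≤ 1) (hx₂ : ‖x₂ - 1‖ ≤ 1) (hy₁ : ‖y₁ - 1‖ ≤ 1) (hy₂ : ‖y₂ - 1‖ ≤ 1) :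
    ‖oscPart K Λ x₁ x₂ y₁ y₂‖ ≤ 16 * ((‖Λ‖⁻¹ + ‖Λ‖) * (1 / ‖K‖ + 1 / ‖K‖ ^ 2)) := by
  have h1 := norm_oscPart_sub_le (K := K) (Λ := Λ) le_rfl hx₁ hx₂ hy₁ hy₂
  have h2 : ‖oscPart K Λ 1 1 1 1‖ ≤ (‖Λ‖⁻¹ + ‖Λ‖) * (1 / ‖K‖ + 1 / ‖K‖ ^ 2) := by
    have h : oscPart K Λ 1 1 1 1 = (Λ⁻¹ + Λ) / K + Complex.I / K ^ 2 * (Λ⁻¹ - Λ) := by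
      unfold oscPart; ring
    rw [h]
    calc _ ≤ (‖Λ‖⁻¹ + ‖Λ‖) / ‖K‖ + 1 / ‖K‖ ^ 2 * (‖Λ‖⁻¹ + ‖Λ‖) := by
          refine (norm_add_le _ _).trans ?_
          rw [norm_mul, norm_div, norm_div, Complex.norm_I, norm_pow, ← norm_inv]
          gcongr
          · exact norm_add_le _ _
          · exact norm_sub_le _ _
      _ = _ := by ring
  have h3 := norm_sub_norm_le (oscPart K Λ x₁ x₂ y₁ y₂) (oscPart K Λ 1 1 1 1)
  linarith

/-- The steady coefficient of the model determinant is bounded below in the upper half plane. -/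
lemma one_le_norm_steadyPart_one {K Λ : ℂ} (hK : K ≠ 0) (hKi : 0 ≤ K.im) (hΛ : ‖Λ‖ ≤ 1) :
    1 ≤ ‖steadyPart K Λ 1 1 1 1‖ := by
  rw [steadyPart_one K Λ hK, norm_div, norm_pow]
  have hKp : 0 < ‖K‖ := norm_pos_iff.2 hK
  rw [one_le_div (by positivity)]
  have h1 : ‖K + Complex.I‖ ^ 2 = ‖K‖ ^ 2 + 2 * K.im + 1 := by
    rw [← Complex.normSq_eq_norm_sq, ← Complex.normSq_eq_norm_sq, Complex.normSq_apply,
      Complex.normSq_apply]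
    simp; ring
  have h2 := norm_sub_norm_le ((K + Complex.I) ^ 2) (-Λ ^ 2)
  rw [sub_neg_eq_add, norm_neg, norm_pow, norm_pow, h1] at h2
  have h3 : ‖Λ‖ ^ 2 ≤ 1 := pow_le_one₀ (norm_nonneg _) hΛ
  linarith

lemma norm_add_I_le_norm_sub_I {K : ℂ} (hK : K.im ≤ 0) : ‖K + Complex.I‖ ≤ ‖K - Complex.I‖ := by
  apply le_of_sq_le_sq _ (norm_nonneg _)
  rw [← Complex.normSq_eq_norm_sq, ← Complex.normSq_eq_norm_sq, Complex.normSq_apply,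
      Complex.normSq_apply]
  simp
  linarith

lemma one_add_norm_le_norm_sub_I {K : ℂ} (hK : K.im ≤ 0) : (1 + ‖K‖) / 2 ≤ ‖K - Complex.I‖ := by
  apply le_of_sq_le_sq _ (norm_nonneg _)
  have h : ‖K - Complex.I‖ ^ 2 = ‖K‖ ^ 2 - 2 * K.im + 1 := by
    rw [← Complex.normSq_eq_norm_sq, ← Complex.normSq_eq_norm_sq, Complex.normSq_apply,
      Complex.normSq_apply]
    simp; ring
  rw [h]
  nlinarith [sq_nonneg (‖K‖ - 1), norm_nonneg K]

/-- The oscillating coefficient of the model determinant is bounded below in the lower half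
plane. -/
lemma le_norm_oscPart_one {K Λ : ℂ} (hK : K ≠ 0) (hKi : K.im ≤ 0) (hΛ : 1 ≤ ‖Λ‖) :
    ‖Λ‖ * (1 - (‖Λ‖ ^ 2)⁻¹) * ((1 / ‖K‖ + 1 / ‖K‖ ^ 2) / 2) ≤ ‖oscPart K Λ 1 1 1 1‖ := by
  have hKp : 0 < ‖K‖ := norm_pos_iff.2 hK
  have hΛp : 0 < ‖Λ‖ := by linarith
  rw [oscPart_one K Λ hK, norm_div, norm_pow]
  have h1 := norm_add_I_le_norm_sub_I hKi
  have h2 := one_add_norm_le_norm_sub_I hKi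
  have h3 := norm_sub_norm_le (Λ * (K - Complex.I)) (-(Λ⁻¹ * (K + Complex.I)))
  rw [sub_neg_eq_add, norm_neg, norm_mul, norm_mul, norm_inv, add_comm (Λ * _)] at h3
  rw [show (1 / ‖K‖ + 1 / ‖K‖ ^ 2) / 2 = (1 + ‖K‖) / 2 / ‖K‖ ^ 2 by
    field_simp; ring, ← mul_div_assoc]
  gcongr
  have h4 : ‖Λ‖ * (1 - (‖Λ‖ ^ 2)⁻¹) = ‖Λ‖ - ‖Λ‖⁻¹ := by field_simp
  have h5 : 0 ≤ ‖Λ‖ - ‖Λ‖⁻¹ := by linarith [inv_le_one_of_one_le₀ hΛ]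
  have h6 : ‖Λ‖⁻¹ * ‖K + Complex.I‖ ≤ ‖Λ‖⁻¹ * ‖K - Complex.I‖ := by gcongr
  rw [h4]
  nlinarith

/-- The model for the steady part of `D_f` at wave number `k`. -/
noncomputable def modelSteady (κ η : ℝ) (k : ℂ) : ℂ :=
  steadyPart (2 * η * k) (Complex.exp (2 * κ * k * Complex.I)) 1 1 1 1

/-- The model for the oscillating part of `D_f` at wave number `k`. -/
noncomputable def modelOsc (κ η : ℝ) (k : ℂ) : ℂ :=
  oscPart (2 * η * k) (Complex.exp (2 * κ * k * Complex.I)) 1 1 1 1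

/-- The rapidly oscillating factor `exp(4ik³/(3f))`. -/
noncomputable def fastPhase (f : ℝ) (k : ℂ) : ℂ :=
  Complex.exp (4 / 3 * k ^ 3 / f * Complex.I)

lemma norm_exp_two_mul_I (κ : ℝ) (k : ℂ) :
    ‖Complex.exp (2 * κ * k * Complex.I)‖ = Real.exp (-(2 * κ * k.im)) := by
  rw [Complex.norm_exp]
  congr 1
  simp

lemma norm_fastPhase (f : ℝ) (k : ℂ) :
    ‖fastPhase f k‖ = Real.exp (-(4 / 3 * (k ^ 3).im / f)) := by
  rw [fastPhase, Complex.norm_exp]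
  congr 1
  rw [show (4 / 3 * k ^ 3 / f * Complex.I : ℂ) = ((4 / 3 / f : ℝ) : ℂ) * k ^ 3 * Complex.I by
    push_cast; ring]
  rw [Complex.mul_I_re, Complex.im_ofReal_mul]
  ring

lemma im_cube (k : ℂ) : (k ^ 3).im = k.im * (3 * k.re ^ 2 - k.im ^ 2) := by
  simp [pow_succ]; ring

lemma norm_sq_mul_abs_im_le {k : ℂ} (hk : |k.im| ≤ k.re) :
    ‖k‖ ^ 2 * |k.im| ≤ |(k ^ 3).im| := by
  have h1 : k.im ^ 2 ≤ k.re ^ 2 := sq_le_sq' (abs_le.1 hk).1 (abs_le.1 hk).2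
  rw [im_cube, abs_mul, mul_comm, ← Complex.normSq_eq_norm_sq, Complex.normSq_apply]
  refine mul_le_mul_of_nonneg_left ?_ (abs_nonneg _)
  rw [abs_of_nonneg (by nlinarith)]
  nlinarith

lemma inv_wave_le {η t : ℝ} {k : ℂ} (hη : 0 < η) (ht : 0 < t) (ht1 : t ≤ 1) (hk : t ≤ ‖k‖) :
    1 / ‖2 * η * k‖ + 1 / ‖2 * η * k‖ ^ 2 ≤ (1 / (2 * η) + 1 / (4 * η ^ 2)) / t ^ 2 := by
  have hn : ‖2 * (η : ℂ) * k‖ = 2 * η * ‖k‖ := by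
    rw [norm_mul, norm_mul, Complex.norm_ofNat, Complex.norm_real, Real.norm_of_nonneg hη.le]
  rw [hn]
  calc _ ≤ 1 / (2 * η * t) + 1 / (2 * η * t) ^ 2 := by gcongr
    _ ≤ 1 / (2 * η * t ^ 2) + 1 / (2 * η * t) ^ 2 := by
        gcongr
        nlinarith
    _ = _ := by field_simp; ring

lemma sq_div_one_add_ge {t r : ℝ} (ht : 0 < t) (ht1 : t ≤ 1) (hr : t ≤ r) :
    t ^ 2 / 2 ≤ r ^ 2 / (1 + r) := by
  rw [div_le_div_iff₀ (by norm_num) (by linarith)]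
  nlinarith [mul_nonneg (sub_nonneg.2 hr) (sub_nonneg.2 ht1), mul_nonneg (sub_nonneg.2 hr) ht.le,
    mul_nonneg (mul_nonneg (sub_nonneg.2 hr) ht.le) (sub_nonneg.2 ht1), sq_nonneg (r - t)]

/-- Above the real axis, `D_f` is dominated by its steady part. -/
lemma norm_sub_modelSteady_lt {κ η : ℝ} (hκ : 0 < κ) (hη : 0 < η) :
    ∃ M > 0, ∀ t > 0, M * t ≤ 1 → ∀ k : ℂ, t ≤ ‖k‖ → t ^ 80 / (1 + ‖k‖) ≤ k.im →
      k.im ≤ k.re → ∀ x₁ x₂ y₁ y₂ : ℂ,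
      ‖x₁ - 1‖ ≤ t ^ 96 / (1 + ‖k‖) → ‖x₂ - 1‖ ≤ t ^ 96 / (1 + ‖k‖) →
      ‖y₁ - 1‖ ≤ t ^ 96 / (1 + ‖k‖) → ‖y₂ - 1‖ ≤ t ^ 96 / (1 + ‖k‖) →
      ‖steadyPart (2 * η * k) (Complex.exp (2 * κ * k * Complex.I)) x₁ x₂ y₁ y₂ +
        fastPhase (t ^ 100) k *
          oscPart (2 * η * k) (Complex.exp (2 * κ * k * Complex.I)) x₁ x₂ y₁ y₂ -
        modelSteady κ η k‖ < ‖modelSteady κ η k‖ := by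
  set h₀ : ℝ := 1 / (2 * η) + 1 / (4 * η ^ 2) with hh₀
  have hh₀p : 0 < h₀ := by positivity
  refine ⟨1 + 6 * κ + 300 * h₀, by positivity, ?_⟩
  intro t ht hMt k hk hy hxy x₁ x₂ y₁ y₂ hx₁ hx₂ hy₁ hy₂
  have ht1 : t ≤ 1 := by nlinarith [mul_pos hκ ht, mul_pos hh₀p ht]
  have htκ : 6 * κ * t ≤ 1 := by nlinarith [mul_pos hκ ht, mul_pos hh₀p ht]
  have hth : 300 * (h₀ * t) ≤ 1 := by nlinarith [mul_pos hκ ht, mul_pos hh₀p ht]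
  have hkp : 0 < ‖k‖ := ht.trans_le hk
  have hk0 : k ≠ 0 := norm_pos_iff.1 hkp
  have hyp : 0 < k.im := lt_of_lt_of_le (by positivity) hy
  have hK0 : 2 * (η : ℂ) * k ≠ 0 := mul_ne_zero (mul_ne_zero two_ne_zero
    (by exact_mod_cast hη.ne')) hk0
  set Λ := Complex.exp (2 * κ * k * Complex.I) with hΛ_def
  set H := 1 / ‖2 * (η : ℂ) * k‖ + 1 / ‖2 * (η : ℂ) * k‖ ^ 2 with hH_def
  have hH : H ≤ h₀ / t ^ 2 := inv_wave_le hη ht ht1 hk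
  have hHp : 0 ≤ H := by positivity
  have hΛn : ‖Λ‖ = Real.exp (-(2 * κ * k.im)) := norm_exp_two_mul_I κ k
  have hΛ1 : ‖Λ‖ ≤ 1 := by
    rw [hΛn]
    apply Real.exp_le_one_iff.2
    have : 0 < κ * k.im := by positivity
    linarith
  have hΛp : 0 < ‖Λ‖ := by rw [hΛn]; exact Real.exp_pos _
  have hd : t ^ 96 / (1 + ‖k‖) ≤ t ^ 96 := div_le_self (by positivity) (by linarith)
  have hd1 : t ^ 96 / (1 + ‖k‖) ≤ 1 := hd.trans (pow_le_one₀ ht.le ht1)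
  have hA : 1 ≤ ‖modelSteady κ η k‖ := by
    apply one_le_norm_steadyPart_one hK0 _ hΛ1
    rw [show 2 * (η : ℂ) * k = ((2 * η : ℝ) : ℂ) * k by push_cast; ring, Complex.im_ofReal_mul]
    positivity
  have hS := norm_steadyPart_sub_le (K := 2 * η * k) (Λ := Λ) hd1 hx₁ hx₂ hy₁ hy₂
  have hS' : ‖steadyPart (2 * η * k) Λ x₁ x₂ y₁ y₂ - modelSteady κ η k‖ ≤ 1 / 4 := by
    refine hS.trans ?_
    have h1 : 1 + ‖Λ‖ ^ 2 ≤ 2 := by nlinarith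
    calc _ ≤ 15 * t ^ 96 * (2 * (h₀ / t ^ 2)) := by gcongr
      _ = 30 * (h₀ * t) * t ^ 93 := by field_simp; ring
      _ ≤ 30 * (h₀ * t) * 1 := by
          gcongr
          exact pow_le_one₀ ht.le ht1
      _ ≤ 1 / 4 := by linarith
  have hO := norm_oscPart_le (K := 2 * η * k) (Λ := Λ) (hx₁.trans hd1) (hx₂.trans hd1)
    (hy₁.trans hd1) (hy₂.trans hd1)
  have hE : ‖fastPhase (t ^ 100) k‖ * ‖Λ‖⁻¹ ≤ 2 * t ^ 18 := by
    rw [norm_fastPhase, hΛn, ← Real.exp_neg, ← Real.exp_add]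
    have h1 := norm_sq_mul_abs_im_le (k := k) (by rwa [abs_of_pos hyp])
    have h0 : 0 ≤ (k ^ 3).im := by
      rw [im_cube]
      have : k.im ^ 2 ≤ k.re ^ 2 := pow_le_pow_left₀ hyp.le hxy 2
      have : 0 ≤ 3 * k.re ^ 2 - k.im ^ 2 := by nlinarith
      positivity
    rw [abs_of_pos hyp, abs_of_nonneg h0] at h1
    have h2 : 6 * κ ≤ ‖k‖ ^ 2 / t ^ 100 := by
      rw [le_div_iff₀ (by positivity)]
      calc 6 * κ * t ^ 100 = (6 * κ * t) * t ^ 97 * t ^ 2 := by ring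
        _ ≤ 1 * 1 * t ^ 2 := by
            gcongr
            exact pow_le_one₀ ht.le ht1
        _ ≤ ‖k‖ ^ 2 := by
            rw [one_mul, one_mul]
            gcongr
    have h3 : ‖k‖ ^ 2 * k.im / t ^ 100 ≤ (k ^ 3).im / t ^ 100 := by gcongr
    have h4 : t ^ 80 / (1 + ‖k‖) * (‖k‖ ^ 2 / t ^ 100) ≤ k.im * (‖k‖ ^ 2 / t ^ 100) := by
      gcongr
    have h5 := sq_div_one_add_ge ht ht1 hk
    have h6 : (2 * t ^ 18)⁻¹ ≤ t ^ 80 / (1 + ‖k‖) * (‖k‖ ^ 2 / t ^ 100) := by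
      calc (2 * t ^ 18)⁻¹ = t ^ 2 / 2 / t ^ 20 := by field_simp
        _ ≤ ‖k‖ ^ 2 / (1 + ‖k‖) / t ^ 20 := by gcongr
        _ = _ := by field_simp
    have h7 : -(4 / 3 * (k ^ 3).im / t ^ 100) + - -(2 * κ * k.im) ≤ -(2 * t ^ 18)⁻¹ := by
      have e1 : 4 / 3 * (k ^ 3).im / t ^ 100 = 4 / 3 * ((k ^ 3).im / t ^ 100) := by ring
      have e2 : ‖k‖ ^ 2 * k.im / t ^ 100 = k.im * (‖k‖ ^ 2 / t ^ 100) := by ring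
      have e3 : 6 * κ * k.im ≤ k.im * (‖k‖ ^ 2 / t ^ 100) := by
        rw [mul_comm]; gcongr
      rw [e1]
      rw [e2] at h3
      linarith
    refine (Real.exp_le_exp.2 h7).trans ?_
    rw [Real.exp_neg]
    apply inv_le_of_inv_le₀ (by positivity)
    linarith [Real.add_one_le_exp ((2 * t ^ 18)⁻¹)]
  have hEO : ‖fastPhase (t ^ 100) k * oscPart (2 * η * k) Λ x₁ x₂ y₁ y₂‖ ≤ 1 / 4 := by
    have h1 : ‖Λ‖⁻¹ + ‖Λ‖ ≤ 2 * ‖Λ‖⁻¹ := by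
      have := one_le_inv_iff₀.2 ⟨hΛp, hΛ1⟩
      linarith
    rw [norm_mul]
    calc _ ≤ ‖fastPhase (t ^ 100) k‖ * (16 * ((2 * ‖Λ‖⁻¹) * (h₀ / t ^ 2))) := by
          gcongr
          refine hO.trans ?_
          gcongr
      _ = (‖fastPhase (t ^ 100) k‖ * ‖Λ‖⁻¹) * (32 * (h₀ / t ^ 2)) := by ring
      _ ≤ (2 * t ^ 18) * (32 * (h₀ / t ^ 2)) := by gcongr
      _ = 64 * (h₀ * t) * t ^ 15 := by field_simp; ring
      _ ≤ 64 * (h₀ * t) * 1 := by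
          gcongr
          exact pow_le_one₀ ht.le ht1
      _ ≤ 1 / 4 := by linarith
  calc _ = ‖(steadyPart (2 * η * k) Λ x₁ x₂ y₁ y₂ - modelSteady κ η k) +
        fastPhase (t ^ 100) k * oscPart (2 * η * k) Λ x₁ x₂ y₁ y₂‖ := by congr 1; ring
    _ ≤ 1 / 4 + 1 / 4 := (norm_add_le _ _).trans (add_le_add hS' hEO)
    _ < _ := by linarith

lemma half_le_one_sub_exp_neg {v : ℝ} (hv : 0 ≤ v) (hv1 : v ≤ 1) :
    v / 2 ≤ 1 - Real.exp (-v) := by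
  have h1 : Real.exp (-v) ≤ (1 + v)⁻¹ := by
    rw [Real.exp_neg]
    apply inv_anti₀ (by linarith)
    linarith [Real.add_one_le_exp v]
  have h2 : (1 + v)⁻¹ ≤ 1 - v / 2 := by
    apply inv_le_of_inv_le₀ (by linarith)
    rw [inv_le_iff_one_le_mul₀ (by linarith)]
    nlinarith
  linarith

set_option maxHeartbeats 1600000 in
/-- Below the real axis, `D_f` is dominated by its oscillating part. -/
lemma norm_sub_modelOsc_lt {κ η : ℝ} (hκ : 0 < κ) (hη : 0 < η) :
    ∃ M > 0, ∀ t > 0, M * t ≤ 1 → ∀ k : ℂ, t ≤ ‖k‖ → k.im ≤ -(t ^ 80 / (1 + ‖k‖)) →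
      -k.im ≤ k.re → ∀ x₁ x₂ y₁ y₂ : ℂ,
      ‖x₁ - 1‖ ≤ t ^ 96 / (1 + ‖k‖) → ‖x₂ - 1‖ ≤ t ^ 96 / (1 + ‖k‖) →
      ‖y₁ - 1‖ ≤ t ^ 96 / (1 + ‖k‖) → ‖y₂ - 1‖ ≤ t ^ 96 / (1 + ‖k‖) →
      ‖steadyPart (2 * η * k) (Complex.exp (2 * κ * k * Complex.I)) x₁ x₂ y₁ y₂ +
        fastPhase (t ^ 100) k *
          oscPart (2 * η * k) (Complex.exp (2 * κ * k * Complex.I)) x₁ x₂ y₁ y₂ -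
        fastPhase (t ^ 100) k * modelOsc κ η k‖ < ‖fastPhase (t ^ 100) k * modelOsc κ η k‖ := by
  set m₀ : ℝ := 40000 * (2 * η + 34) / κ with hm₀
  have hm₀p : 0 < m₀ := by positivity
  have hκi : 0 < 120 / κ := by positivity
  refine ⟨1 + 6 * κ + 120 / κ + m₀, by positivity, ?_⟩
  intro t ht hMt k hk hy hxy x₁ x₂ y₁ y₂ hx₁ hx₂ hy₁ hy₂
  have htall : t + 6 * κ * t + 120 / κ * t + m₀ * t ≤ 1 := by linarith
  have p1 := mul_pos hκ ht
  have p2 := mul_pos hκi ht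
  have p3 := mul_pos hm₀p ht
  have ht1 : t ≤ 1 := by linarith
  have htκ : 6 * κ * t ≤ 1 := by linarith
  have htκ' : 120 * t ≤ κ := by
    have : 120 / κ * t ≤ 1 := by linarith
    rwa [div_mul_eq_mul_div, div_le_one hκ] at this
  have htm : 40000 * (2 * η + 34) * t < κ := by
    have : m₀ * t < 1 := by linarith
    rwa [hm₀, div_mul_eq_mul_div, div_lt_one hκ] at this
  have hkp : 0 < ‖k‖ := ht.trans_le hk
  have hk0 : k ≠ 0 := norm_pos_iff.1 hkp
  set y₀ := t ^ 80 / (1 + ‖k‖) with hy₀_def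
  have hy₀ : 0 < y₀ := by positivity
  have hyn : k.im < 0 := by linarith
  have hK0 : 2 * (η : ℂ) * k ≠ 0 := mul_ne_zero (mul_ne_zero two_ne_zero
    (by exact_mod_cast hη.ne')) hk0
  have hKn : ‖2 * (η : ℂ) * k‖ = 2 * η * ‖k‖ := by
    rw [norm_mul, norm_mul, Complex.norm_ofNat, Complex.norm_real, Real.norm_of_nonneg hη.le]
  set Λ := Complex.exp (2 * κ * k * Complex.I) with hΛ_def
  set H := 1 / ‖2 * (η : ℂ) * k‖ + 1 / ‖2 * (η : ℂ) * k‖ ^ 2 with hH_def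
  have hKp : 0 < ‖2 * (η : ℂ) * k‖ := norm_pos_iff.2 hK0
  have hHp : 0 < H := by positivity
  have hΛn : ‖Λ‖ = Real.exp (-(2 * κ * k.im)) := norm_exp_two_mul_I κ k
  have hΛ1 : 1 ≤ ‖Λ‖ := by
    rw [hΛn]
    apply Real.one_le_exp
    have := mul_neg_of_pos_of_neg hκ hyn
    linarith
  have hΛp : 0 < ‖Λ‖ := by linarith
  have hd16 : t ^ 96 / (1 + ‖k‖) = t ^ 16 * y₀ := by rw [hy₀_def]; ring
  have hd : t ^ 96 / (1 + ‖k‖) ≤ t ^ 96 := div_le_self (by positivity) (by linarith)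
  have hd1 : t ^ 96 / (1 + ‖k‖) ≤ 1 := hd.trans (pow_le_one₀ ht.le ht1)
  have hy₀t : y₀ ≤ t := by
    calc y₀ ≤ t ^ 80 := div_le_self (by positivity) (by linarith)
      _ ≤ t := pow_le_of_le_one ht.le ht1 (by norm_num)
  have hB : κ * y₀ * (‖Λ‖ * H) ≤ ‖modelOsc κ η k‖ := by
    have h1 := le_norm_oscPart_one hK0 (by
      rw [show 2 * (η : ℂ) * k = ((2 * η : ℝ) : ℂ) * k by push_cast; ring,
        Complex.im_ofReal_mul]
      nlinarith) hΛ1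
    refine le_trans ?_ h1
    have h2 : 4 * κ * y₀ / 2 ≤ 1 - Real.exp (-(4 * κ * y₀)) :=
      half_le_one_sub_exp_neg (by positivity) (by nlinarith)
    have h3 : (‖Λ‖ ^ 2)⁻¹ ≤ Real.exp (-(4 * κ * y₀)) := by
      rw [hΛn, ← Real.exp_nat_mul, ← Real.exp_neg]
      apply Real.exp_le_exp.2
      push_cast
      have := mul_le_mul_of_nonneg_left hy hκ.le
      linarith
    have h4 : 2 * κ * y₀ ≤ 1 - (‖Λ‖ ^ 2)⁻¹ := by linarith
    calc κ * y₀ * (‖Λ‖ * H) = ‖Λ‖ * (2 * κ * y₀) * (H / 2) := by ring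
      _ ≤ _ := by gcongr
  have hO := norm_oscPart_sub_le (K := 2 * η * k) (Λ := Λ) hd1 hx₁ hx₂ hy₁ hy₂
  have hΛinv : ‖Λ‖⁻¹ ≤ 1 := inv_le_one_of_one_le₀ hΛ1
  have hO' : ‖oscPart (2 * η * k) Λ x₁ x₂ y₁ y₂ - modelOsc κ η k‖ ≤ ‖modelOsc κ η k‖ / 4 := by
    have h1 : ‖Λ‖⁻¹ + ‖Λ‖ ≤ 2 * ‖Λ‖ := by linarith
    have h2 : 120 * t ^ 16 ≤ κ := by
      have : t ^ 16 ≤ t := pow_le_of_le_one ht.le ht1 (by norm_num)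
      linarith
    calc _ ≤ 15 * (t ^ 16 * y₀) * ((2 * ‖Λ‖) * H) := by
          refine hO.trans ?_
          rw [hd16]
          gcongr
      _ = (120 * t ^ 16) * y₀ * (‖Λ‖ * H) / 4 := by ring
      _ ≤ κ * y₀ * (‖Λ‖ * H) / 4 := by gcongr
      _ ≤ _ := by gcongr
  have hS := norm_steadyPart_le (K := 2 * η * k) (Λ := Λ) (hx₁.trans hd1) (hx₂.trans hd1)
    (hy₁.trans hd1) (hy₂.trans hd1)
  set v := t ^ 80 / (1 + ‖k‖) * (‖k‖ ^ 2 / t ^ 100) with hv_def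
  have hvp : 0 < v := by positivity
  have hE : Real.exp v * ‖Λ‖ ≤ ‖fastPhase (t ^ 100) k‖ := by
    rw [norm_fastPhase, hΛn, ← Real.exp_add]
    apply Real.exp_le_exp.2
    have h1 := norm_sq_mul_abs_im_le (k := k) (by rwa [abs_of_neg hyn])
    have h0 : (k ^ 3).im ≤ 0 := by
      rw [im_cube]
      have : (-k.im) ^ 2 ≤ k.re ^ 2 := pow_le_pow_left₀ (by linarith) hxy 2
      have : 0 ≤ 3 * k.re ^ 2 - k.im ^ 2 := by nlinarith
      exact mul_nonpos_of_nonpos_of_nonneg hyn.le this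
    rw [abs_of_neg hyn, abs_of_nonpos h0] at h1
    have h2 : 6 * κ ≤ ‖k‖ ^ 2 / t ^ 100 := by
      rw [le_div_iff₀ (by positivity)]
      calc 6 * κ * t ^ 100 = (6 * κ * t) * t ^ 97 * t ^ 2 := by ring
        _ ≤ 1 * 1 * t ^ 2 := by
            gcongr
            exact pow_le_one₀ ht.le ht1
        _ ≤ ‖k‖ ^ 2 := by
            rw [one_mul, one_mul]
            gcongr
    have h3 : ‖k‖ ^ 2 * -k.im / t ^ 100 ≤ -(k ^ 3).im / t ^ 100 := by gcongr
    have h4 : v ≤ -k.im * (‖k‖ ^ 2 / t ^ 100) := by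
      rw [hv_def]
      gcongr
      linarith
    have e1 : -(4 / 3 * (k ^ 3).im / t ^ 100) = 4 / 3 * (-(k ^ 3).im / t ^ 100) := by ring
    have e2 : ‖k‖ ^ 2 * -k.im / t ^ 100 = -k.im * (‖k‖ ^ 2 / t ^ 100) := by ring
    have e3 : 6 * κ * -k.im ≤ -k.im * (‖k‖ ^ 2 / t ^ 100) := by
      rw [mul_comm]
      exact mul_le_mul_of_nonneg_left h2 (by linarith)
    rw [e1]
    rw [e2] at h3
    linarith
  have hev : (2 * η + 34) * (1 + ‖k‖) < Real.exp v * (κ * y₀) / 2 := by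
    have h1 := Real.pow_div_factorial_le_exp v hvp.le 5
    have h2 : (1 + ‖k‖) * (1 / (128 * t ^ 10)) ≤ v ^ 5 * y₀ := by
      have g1 := sq_div_one_add_ge ht ht1 hk
      have g2 : t / 2 ≤ ‖k‖ / (1 + ‖k‖) := by
        rw [div_le_div_iff₀ (by norm_num) (by linarith)]
        have := mul_le_mul_of_nonneg_right ht1 hkp.le
        linarith
      calc (1 + ‖k‖) * (1 / (128 * t ^ 10))
          = (1 + ‖k‖) * ((t ^ 2 / 2) ^ 3 * (t / 2) ^ 4 / t ^ 20) := by field_simp; norm_num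
        _ ≤ (1 + ‖k‖) * ((‖k‖ ^ 2 / (1 + ‖k‖)) ^ 3 * (‖k‖ / (1 + ‖k‖)) ^ 4 / t ^ 20) := by gcongr
        _ = v ^ 5 * y₀ := by rw [hv_def, hy₀_def]; field_simp
    have h3 : v ^ 5 / 120 ≤ Real.exp v := by simpa [Nat.factorial] using h1
    have h4 : 30720 * (2 * η + 34) * t ^ 10 < κ := by
      have : t ^ 10 ≤ t := pow_le_of_le_one ht.le ht1 (by norm_num)
      calc 30720 * (2 * η + 34) * t ^ 10 ≤ 40000 * (2 * η + 34) * t := by gcongr; norm_num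
        _ < κ := htm
    calc (2 * η + 34) * (1 + ‖k‖)
        = (30720 * (2 * η + 34) * t ^ 10) * ((1 + ‖k‖) * (1 / (128 * t ^ 10))) / 240 := by
          field_simp; norm_num
      _ < κ * ((1 + ‖k‖) * (1 / (128 * t ^ 10))) / 240 := by gcongr
      _ ≤ κ * (v ^ 5 * y₀) / 240 := by gcongr
      _ = (v ^ 5 / 120) * (κ * y₀) / 2 := by ring
      _ ≤ _ := by gcongr
  have hSE : ‖steadyPart (2 * η * k) Λ x₁ x₂ y₁ y₂‖ <
      ‖fastPhase (t ^ 100) k‖ * ‖modelOsc κ η k‖ / 2 := by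
    have h1 : 1 + 17 * ((1 + ‖Λ‖ ^ 2) * H) ≤ ‖Λ‖ ^ 2 * ((2 * η + 34) * (1 + ‖k‖) * H) := by
      have a1 : 1 ≤ 2 * η * ‖k‖ * H := by
        rw [hH_def, hKn]
        have : 2 * η * ‖k‖ * (1 / (2 * η * ‖k‖) + 1 / (2 * η * ‖k‖) ^ 2) =
          1 + 1 / (2 * η * ‖k‖) := by field_simp
        rw [this]
        have : 0 < 1 / (2 * η * ‖k‖) := by positivity
        linarith
      have a2 : 1 ≤ ‖Λ‖ ^ 2 := one_le_pow₀ hΛ1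
      calc 1 + 17 * ((1 + ‖Λ‖ ^ 2) * H)
          ≤ ‖Λ‖ ^ 2 * (2 * η * ‖k‖ * H) + 17 * ((‖Λ‖ ^ 2 + ‖Λ‖ ^ 2) * H) := by
            gcongr
            exact one_le_mul_of_one_le_of_one_le a2 a1
        _ = ‖Λ‖ ^ 2 * ((2 * η * ‖k‖ + 34) * H) := by ring
        _ ≤ _ := by
            gcongr
            have : 0 < η * ‖k‖ := by positivity
            linarith
    calc _ ≤ _ := hS
      _ ≤ _ := h1
      _ < ‖Λ‖ ^ 2 * (Real.exp v * (κ * y₀) / 2 * H) := by gcongr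
      _ = (Real.exp v * ‖Λ‖) * (κ * y₀ * (‖Λ‖ * H)) / 2 := by ring
      _ ≤ _ := by gcongr
  have hEp : 0 < ‖fastPhase (t ^ 100) k‖ := lt_of_lt_of_le (by positivity) hE
  calc _ = ‖steadyPart (2 * η * k) Λ x₁ x₂ y₁ y₂ + fastPhase (t ^ 100) k *
        (oscPart (2 * η * k) Λ x₁ x₂ y₁ y₂ - modelOsc κ η k)‖ := by congr 1; ring
    _ ≤ ‖steadyPart (2 * η * k) Λ x₁ x₂ y₁ y₂‖ + ‖fastPhase (t ^ 100) k‖ *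
        (‖modelOsc κ η k‖ / 4) := by
        refine (norm_add_le _ _).trans ?_
        rw [norm_mul]
        gcongr
    _ < _ := by
        rw [norm_mul]
        have : 0 ≤ ‖fastPhase (t ^ 100) k‖ * ‖modelOsc κ η k‖ := by positivity
        linarith

/-- Moving the base wave number of the steady and oscillating parts amounts to changing the
amplitude corrections. -/
lemma exists_rebase {κ η d : ℝ} {k k₁ : ℂ} (hκ : 0 < κ) (hη : 0 < η) (hk : k ≠ 0)
    (hd : d ≤ 1 / 2) (hkk : ‖k - k₁‖ / ‖k‖ + κ * ‖k - k₁‖ ≤ d) {x₁ x₂ y₁ y₂ : ℂ}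
    (hx₁ : ‖x₁ - 1‖ ≤ d) (hx₂ : ‖x₂ - 1‖ ≤ d) (hy₁ : ‖y₁ - 1‖ ≤ d) (hy₂ : ‖y₂ - 1‖ ≤ d) :
    ∃ a₁ a₂ b₁ b₂ : ℂ, ‖a₁ - 1‖ ≤ 5 * d ∧ ‖a₂ - 1‖ ≤ 5 * d ∧ ‖b₁ - 1‖ ≤ 5 * d ∧
      ‖b₂ - 1‖ ≤ 5 * d ∧
      steadyPart (2 * η * k) (Complex.exp (2 * κ * k * Complex.I)) x₁ x₂ y₁ y₂ =
        steadyPart (2 * η * k₁) (Complex.exp (2 * κ * k₁ * Complex.I)) a₁ a₂ b₁ b₂ ∧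
      oscPart (2 * η * k) (Complex.exp (2 * κ * k * Complex.I)) x₁ x₂ y₁ y₂ =
        oscPart (2 * η * k₁) (Complex.exp (2 * κ * k₁ * Complex.I)) a₁ a₂ b₁ b₂ := by
  set μ : ℂ := (k - k₁) / k with hμ_def
  have hμn : ‖μ‖ = ‖k - k₁‖ / ‖k‖ := norm_div _ _
  have hκn : 0 ≤ κ * ‖k - k₁‖ := by positivity
  have hμ2 : ‖μ‖ ≤ 1 / 2 := by rw [hμn]; linarith
  set m := Complex.log (1 - μ) / 2 with hm_def
  have hm : ‖m‖ ≤ ‖μ‖ := norm_half_log_le hμ2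
  set n : ℂ := κ * (k - k₁) * Complex.I with hn_def
  have hn : ‖n‖ = κ * ‖k - k₁‖ := by
    rw [hn_def, norm_mul, norm_mul, Complex.norm_I, Complex.norm_real,
      Real.norm_of_nonneg hκ.le, mul_one]
  have hp : ‖m + n‖ ≤ d := by
    refine (norm_add_le _ _).trans ?_
    rw [hn]; rw [hμn] at hm; linarith
  have hq : ‖m - n‖ ≤ d := by
    refine (norm_sub_le _ _).trans ?_
    rw [hn]; rw [hμn] at hm; linarith
  set s := Complex.exp m with hs_def
  set l := Complex.exp n with hl_def
  have hl0 : l ≠ 0 := Complex.exp_ne_zero _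
  have hs0 : s ≠ 0 := Complex.exp_ne_zero _
  have hs2 : s ^ 2 * k = k₁ := by
    rw [hs_def, exp_half_log_sq hμ2, hμ_def]; field_simp; ring
  have hΛ : Complex.exp (2 * κ * k * Complex.I) = Complex.exp (2 * κ * k₁ * Complex.I) * l ^ 2 := by
    rw [hl_def, ← Complex.exp_nat_mul, ← Complex.exp_add]
    congr 1
    rw [hn_def]; push_cast; ring
  have hbound : ∀ {x : ℂ}, ‖x - 1‖ ≤ d → ‖s * l * x - 1‖ ≤ 5 * d ∧ ‖s * l⁻¹ * x - 1‖ ≤ 5 * d := by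
    intro x hx
    constructor
    · have := norm_exp_mul_one_add_sub_one_le hp hx (by linarith)
      rwa [add_sub_cancel, Complex.exp_add] at this
    · have := norm_exp_mul_one_add_sub_one_le hq hx (by linarith)
      rwa [add_sub_cancel, Complex.exp_sub, div_eq_mul_inv] at this
  refine ⟨s * l⁻¹ * x₁, s * l * x₂, s * l * y₁, s * l⁻¹ * y₂, (hbound hx₁).2, (hbound hx₂).1,
    (hbound hy₁).1, (hbound hy₂).2, ?_, ?_⟩
  · have hη0 : (η : ℂ) ≠ 0 := by exact_mod_cast hη.ne'
    rw [hΛ, ← hs2, steadyPart, steadyPart]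
    field_simp
  · have hη0 : (η : ℂ) ≠ 0 := by exact_mod_cast hη.ne'
    have hL0 := Complex.exp_ne_zero (2 * κ * k₁ * Complex.I)
    rw [hΛ]
    generalize Complex.exp (2 * κ * k₁ * Complex.I) = L at hL0 ⊢
    rw [← hs2, oscPart, oscPart]
    field_simp

lemma re_div_pos_of_norm_sub_lt {a b : ℂ} (h : ‖a - b‖ < ‖b‖) : 0 < (a / b).re := by
  have hb : b ≠ 0 := by
    rintro rfl
    simp at h
    linarith [norm_nonneg a]
  have h1 : ‖a / b - 1‖ < 1 := by
    rw [show a / b - 1 = (a - b) / b by field_simp, norm_div, div_lt_one (norm_pos_iff.2 hb)]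
    exact h
  have h2 := (abs_lt.1 ((Complex.abs_re_le_norm _).trans_lt h1)).1
  simp at h2
  linarith

lemma re_mul_div_mul_pos {a b c e : ℂ} (ha : ‖a - 1‖ ≤ 1 / 10) (hb : ‖b - 1‖ ≤ 1 / 10)
    (hc : ‖c - 1‖ ≤ 1 / 10) (he : ‖e - 1‖ ≤ 1 / 10) : 0 < (a * b / (c * e)).re := by
  apply re_div_pos_of_norm_sub_lt
  have h1 := norm_mul_sub_one_le ha hb
  have h2 := norm_mul_sub_one_le hc he
  have h3 := norm_sub_norm_le (1 : ℂ) (1 - c * e)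
  rw [sub_sub_cancel, norm_one, norm_sub_rev] at h3
  have h4 : ‖a * b - c * e‖ ≤ ‖a * b - 1‖ + ‖c * e - 1‖ := by
    rw [show a * b - c * e = (a * b - 1) - (c * e - 1) by ring]
    exact norm_sub_le _ _
  linarith

/-- If the two competing parts are in phase, their sum has positive real part relative to
either one. -/
lemma re_div_pos_of_in_phase {S O A B E A₁ B₁ E₁ u : ℂ} {P ρ : ℝ} (hA₁ : A₁ ≠ 0) (hB₁ : B₁ ≠ 0)
    (hE₁ : E₁ ≠ 0) (hP : 0 < P) (hρ : 0 < ρ) (hPh : E₁ * B₁ = P * A₁) (hE : E = E₁ * (ρ * u))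
    (hu : ‖u - 1‖ ≤ 1 / 10) (hS : ‖S - A₁‖ ≤ 1 / 10 * ‖A₁‖) (hA : ‖A - A₁‖ ≤ 1 / 10 * ‖A₁‖)
    (hO : ‖O - B₁‖ ≤ 1 / 10 * ‖B₁‖) (hB : ‖B - B₁‖ ≤ 1 / 10 * ‖B₁‖) :
    0 < ((S + E * O) / A).re ∧ 0 < ((S + E * O) / (E * B)).re := by
  have key : ∀ {x y : ℂ}, y ≠ 0 → ‖x - y‖ ≤ 1 / 10 * ‖y‖ → ‖x / y - 1‖ ≤ 1 / 10 := by
    intro x y hy h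
    rw [show x / y - 1 = (x - y) / y by field_simp, norm_div, div_le_iff₀ (norm_pos_iff.2 hy)]
    exact h
  have hS' := key hA₁ hS
  have hA' := key hA₁ hA
  have hO' := key hB₁ hO
  have hB' := key hB₁ hB
  have h1 : ‖(1 : ℂ) - 1‖ ≤ 1 / 10 := by norm_num
  have hne : ∀ {x : ℂ}, ‖x - 1‖ ≤ 1 / 10 → x ≠ 0 := by
    rintro x hx rfl
    norm_num at hx
  have hA0 : A ≠ 0 := fun h => hne hA' (by simp [h])
  have hB0 : B ≠ 0 := fun h => hne hB' (by simp [h])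
  have hu0 := hne hu
  have hρ0 : (ρ : ℂ) ≠ 0 := by exact_mod_cast hρ.ne'
  have hP0 : (P : ℂ) ≠ 0 := by exact_mod_cast hP.ne'
  have e1 : (S + E * O) / A = (S / A₁) * 1 / ((A / A₁) * 1) +
      ((ρ * P : ℝ) : ℂ) * (u * (O / B₁) / ((A / A₁) * 1)) := by
    rw [hE]
    push_cast
    field_simp
    linear_combination (u * ρ * O) * hPh
  have e2 : (S + E * O) / (E * B) = (((ρ * P)⁻¹ : ℝ) : ℂ) * ((S / A₁) * 1 / (u * (B / B₁))) +
      (O / B₁) * 1 / ((B / B₁) * 1) := by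
    rw [hE]
    push_cast
    field_simp
    linear_combination (-S) * hPh
  constructor
  · rw [e1, Complex.add_re, Complex.re_ofReal_mul]
    have := re_mul_div_mul_pos hS' h1 hA' h1
    have := re_mul_div_mul_pos hu hO' hA' h1
    positivity
  · rw [e2, Complex.add_re, Complex.re_ofReal_mul]
    have := re_mul_div_mul_pos hS' h1 hu hB'
    have := re_mul_div_mul_pos hO' h1 hB' h1
    positivity

/-- A radius at which the two competing parts of `D_f` (with `f = t^100`) are in phase near the
real axis. -/
def GoodRadius (κ η t r : ℝ) : Prop :=
  ∃ r₁ : ℝ, t ≤ r₁ ∧ r₁ ≤ r ∧ r - r₁ ≤ 2 * t ^ 100 / r₁ ^ 2 ∧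
    κ * t ^ 2 / 2 * (1 / (2 * η * r₁) + 1 / (2 * η * r₁) ^ 2) ≤ ‖modelOsc κ η r₁‖ ∧
    ∃ P > (0 : ℝ), fastPhase (t ^ 100) r * modelOsc κ η r₁ = P * modelSteady κ η r₁

lemma norm_sub_norm_self_le {k : ℂ} (hk : 0 < k.re) : ‖k - ‖k‖‖ ≤ 2 * |k.im| := by
  have hr := Complex.re_le_norm k
  have hsq : ‖k‖ ^ 2 = k.re ^ 2 + k.im ^ 2 := by
    rw [← Complex.normSq_eq_norm_sq, Complex.normSq_apply]; ring
  have h1 : ‖k‖ - k.re ≤ |k.im| := by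
    have := Complex.norm_le_abs_re_add_abs_im k
    rw [abs_of_pos hk] at this
    linarith
  calc ‖k - ‖k‖‖ ≤ |(k - ‖k‖).re| + |(k - ‖k‖).im| := Complex.norm_le_abs_re_add_abs_im _
    _ ≤ 2 * |k.im| := by
        have : |(k - ‖k‖).re| = ‖k‖ - k.re := by
          rw [Complex.sub_re, Complex.ofReal_re, abs_sub_comm, abs_of_nonneg (by linarith)]
        rw [this, Complex.sub_im, Complex.ofReal_im, sub_zero]
        linarith

lemma abs_norm_cube_sub_re_cube_le {k : ℂ} (hk : 0 < k.re) :
    |‖k‖ ^ 3 - (k ^ 3).re| ≤ 5 * ‖k‖ * k.im ^ 2 := by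
  have hr := Complex.re_le_norm k
  have hsq : ‖k‖ ^ 2 = k.re ^ 2 + k.im ^ 2 := by
    rw [← Complex.normSq_eq_norm_sq, Complex.normSq_apply]; ring
  have hre : (k ^ 3).re = k.re * (‖k‖ ^ 2 - 4 * k.im ^ 2) := by
    rw [hsq]; simp [pow_succ]; ring
  set r := ‖k‖
  have hrp : 0 < r := by linarith
  have e : r ^ 3 - (k ^ 3).re = r ^ 2 * (r - k.re) + 4 * k.re * k.im ^ 2 := by
    rw [hre]; ring
  have h1 : r * (r - k.re) ≤ k.im ^ 2 := by nlinarith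
  have h2 : r * (r * (r - k.re)) ≤ r * k.im ^ 2 := by gcongr
  have h3 : 4 * k.re * k.im ^ 2 ≤ 4 * r * k.im ^ 2 := by gcongr
  have h4 : 0 ≤ r ^ 2 * (r - k.re) := mul_nonneg (by positivity) (by linarith)
  have h5 : 0 ≤ 4 * k.re * k.im ^ 2 := by positivity
  rw [e, abs_of_nonneg (by linarith)]
  linarith

/-- On a good circle and near the real axis the fast phase agrees, up to a positive factor and a
small correction, with its value at the radius. -/
lemma exists_fastPhase_eq {f : ℝ} (hf : 0 < f) {k : ℂ} (hk : 0 < k.re)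
    (hsmall : 7 * ‖k‖ * k.im ^ 2 ≤ f / 20) :
    ∃ ρ > (0 : ℝ), ∃ u : ℂ, ‖u - 1‖ ≤ 1 / 10 ∧
      fastPhase f k = fastPhase f ‖k‖ * (ρ * u) := by
  have hf0 : (f : ℂ) ≠ 0 := by exact_mod_cast hf.ne'
  set φ : ℝ := 4 / 3 * ((k ^ 3).re - ‖k‖ ^ 3) / f with hφ_def
  refine ⟨Real.exp (-(4 / 3 * (k ^ 3).im / f)), Real.exp_pos _, Complex.exp (φ * Complex.I), ?_, ?_⟩
  · have h1 : |φ| ≤ 1 / 20 := by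
      rw [hφ_def, abs_div, abs_mul, abs_sub_comm, abs_of_pos hf, div_le_iff₀ hf]
      have := abs_norm_cube_sub_re_cube_le hk
      rw [abs_of_pos (by norm_num : (0 : ℝ) < 4 / 3)]
      have : 0 ≤ ‖k‖ * k.im ^ 2 := by positivity
      linarith
    have h2 : ‖(φ * Complex.I : ℂ)‖ = |φ| := by simp
    have h3 := Complex.norm_exp_sub_one_le (x := φ * Complex.I) (by rw [h2]; linarith)
    rw [h2] at h3
    linarith
  · rw [fastPhase, fastPhase, Complex.ofReal_exp, ← Complex.exp_add, ← Complex.exp_add]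
    congr 1
    have hk3 : k ^ 3 = ((k ^ 3).re : ℂ) + (k ^ 3).im * Complex.I := (Complex.re_add_im _).symm
    rw [hφ_def]
    push_cast
    field_simp
    linear_combination Complex.I * hk3 + ((k ^ 3).im : ℂ) * Complex.I_sq

set_option maxHeartbeats 1000000 in
/-- On a good circle, near the real axis, `D_f` has positive real part relative to either of its
two competing parts. -/
lemma re_div_pos_of_goodRadius {κ η : ℝ} (hκ : 0 < κ) (hη : 0 < η) :
    ∃ M > 0, ∀ t > 0, M * t ≤ 1 → ∀ k : ℂ, GoodRadius κ η t ‖k‖ →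
      |k.im| ≤ t ^ 80 / (1 + ‖k‖) → 0 < k.re → ∀ x₁ x₂ y₁ y₂ : ℂ,
      ‖x₁ - 1‖ ≤ t ^ 96 / (1 + ‖k‖) → ‖x₂ - 1‖ ≤ t ^ 96 / (1 + ‖k‖) →
      ‖y₁ - 1‖ ≤ t ^ 96 / (1 + ‖k‖) → ‖y₂ - 1‖ ≤ t ^ 96 / (1 + ‖k‖) →
      0 < ((steadyPart (2 * η * k) (Complex.exp (2 * κ * k * Complex.I)) x₁ x₂ y₁ y₂ +
        fastPhase (t ^ 100) k * oscPart (2 * η * k) (Complex.exp (2 * κ * k * Complex.I))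
          x₁ x₂ y₁ y₂) / modelSteady κ η k).re ∧
      0 < ((steadyPart (2 * η * k) (Complex.exp (2 * κ * k * Complex.I)) x₁ x₂ y₁ y₂ +
        fastPhase (t ^ 100) k * oscPart (2 * η * k) (Complex.exp (2 * κ * k * Complex.I))
          x₁ x₂ y₁ y₂) / (fastPhase (t ^ 100) k * modelOsc κ η k)).re := by
  set h₀ : ℝ := 1 / (2 * η) + 1 / (4 * η ^ 2) with hh₀
  have hh₀p : 0 < h₀ := by positivity
  have hκi : 0 < 600 / κ := by positivity
  refine ⟨140 + 4 * κ + 300 * h₀ + 600 / κ, by positivity, ?_⟩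
  intro t ht hMt k hgood hy hre x₁ x₂ y₁ y₂ hx₁ hx₂ hy₁ hy₂
  have htall : 140 * t + 4 * κ * t + 300 * h₀ * t + 600 / κ * t ≤ 1 := by linarith
  have p1 := mul_pos hκ ht
  have p2 := mul_pos hκi ht
  have p3 := mul_pos hh₀p ht
  have ht1 : t ≤ 1 := by linarith
  have ht140 : 140 * t ≤ 1 := by linarith
  have htκ4 : 4 * κ * t ≤ 1 := by linarith
  have hth : 300 * h₀ * t ≤ 1 := by linarith
  have htκ' : 600 * t ≤ κ := by
    have : 600 / κ * t ≤ 1 := by linarith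
    rwa [div_mul_eq_mul_div, div_le_one hκ] at this
  obtain ⟨r₁, hr₁, hr₁r, hrr₁, hB₁, P, hP, hPh⟩ := hgood
  have hr₁p : 0 < r₁ := ht.trans_le hr₁
  have hrp : 0 < ‖k‖ := hr₁p.trans_le hr₁r
  have hk0 : k ≠ 0 := norm_pos_iff.1 hrp
  have hpow : ∀ n : ℕ, t ^ n ≤ 1 := fun n => pow_le_one₀ ht.le ht1
  have hpow1 : ∀ n : ℕ, n ≠ 0 → t ^ n ≤ t := fun n hn => pow_le_of_le_one ht.le ht1 hn
  have hy80 : |k.im| ≤ t ^ 80 := hy.trans (div_le_self (by positivity) (by linarith))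
  have hdist : ‖k - r₁‖ ≤ 4 * t ^ 80 := by
    have h1 := norm_sub_norm_self_le hre
    have h2 : ‖k - (r₁ : ℂ)‖ ≤ ‖k - ‖k‖‖ + ‖((‖k‖ - r₁ : ℝ) : ℂ)‖ := by
      rw [show k - (r₁ : ℂ) = (k - ‖k‖) + ((‖k‖ - r₁ : ℝ) : ℂ) by push_cast; ring]
      exact norm_add_le _ _
    rw [Complex.norm_real, Real.norm_of_nonneg (by linarith)] at h2
    have h3 : 2 * t ^ 100 / r₁ ^ 2 ≤ 2 * t ^ 80 := by
      rw [div_le_iff₀ (by positivity)]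
      calc 2 * t ^ 100 = 2 * t ^ 80 * (t ^ 2 * t ^ 18) := by ring
        _ ≤ 2 * t ^ 80 * (r₁ ^ 2 * 1) := by
            gcongr
            exact hpow 18
        _ = _ := by ring
    linarith
  have hd : ‖k - r₁‖ / ‖k‖ + κ * ‖k - r₁‖ ≤ t ^ 78 := by
    have h1 : ‖k - r₁‖ / ‖k‖ ≤ 4 * t ^ 79 := by
      rw [div_le_iff₀ hrp]
      calc ‖k - r₁‖ ≤ 4 * t ^ 80 := hdist
        _ = 4 * t ^ 79 * t := by ring
        _ ≤ 4 * t ^ 79 * ‖k‖ := by gcongr; linarith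
    have h2 : κ * ‖k - r₁‖ ≤ κ * (4 * t ^ 80) := by gcongr
    have h3 : 4 * t ^ 79 + κ * (4 * t ^ 80) = (4 * t + 4 * κ * t * t) * t ^ 78 := by ring
    have h4 : 4 * t + 4 * κ * t * t ≤ 1 := by nlinarith
    have h5 : (4 * t + 4 * κ * t * t) * t ^ 78 ≤ 1 * t ^ 78 := by gcongr
    linarith
  have hd2 : t ^ 78 ≤ 1 / 2 := by linarith [hpow1 78 (by norm_num)]
  have hδ : t ^ 96 / (1 + ‖k‖) ≤ t ^ 78 :=
    (div_le_self (by positivity) (by linarith)).trans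
      (pow_le_pow_of_le_one ht.le ht1 (by norm_num))
  have h5d : 5 * t ^ 78 ≤ 1 := by linarith [hpow1 78 (by norm_num)]
  have hK₁ : ‖2 * (η : ℂ) * r₁‖ = 2 * η * r₁ := by
    rw [norm_mul, norm_mul, Complex.norm_ofNat, Complex.norm_real, Complex.norm_real,
      Real.norm_of_nonneg hη.le, Real.norm_of_nonneg hr₁p.le]
  set H := 1 / (2 * η * r₁) + 1 / (2 * η * r₁) ^ 2 with hH_def
  have hHp : 0 < H := by positivity
  have hH : H ≤ h₀ / t ^ 2 := by
    have := inv_wave_le (k := (r₁ : ℂ)) hη ht ht1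
      (by rwa [Complex.norm_real, Real.norm_of_nonneg hr₁p.le])
    rwa [hK₁] at this
  have hΛ₁ : ‖Complex.exp (2 * κ * (r₁ : ℂ) * Complex.I)‖ = 1 := by
    rw [norm_exp_two_mul_I]; simp
  have hK0 : 2 * (η : ℂ) * r₁ ≠ 0 := by
    rw [← norm_pos_iff, hK₁]; positivity
  have hA₁ : 1 ≤ ‖modelSteady κ η r₁‖ := by
    apply one_le_norm_steadyPart_one hK0 _ hΛ₁.le
    rw [show 2 * (η : ℂ) * r₁ = ((2 * η * r₁ : ℝ) : ℂ) by push_cast; ring, Complex.ofReal_im]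
  have hB₁p : 0 < ‖modelOsc κ η r₁‖ := lt_of_lt_of_le (by positivity) hB₁
  have hclose : ∀ x₁ x₂ y₁ y₂ : ℂ, ‖x₁ - 1‖ ≤ t ^ 78 → ‖x₂ - 1‖ ≤ t ^ 78 →
      ‖y₁ - 1‖ ≤ t ^ 78 → ‖y₂ - 1‖ ≤ t ^ 78 →
      ‖steadyPart (2 * η * k) (Complex.exp (2 * κ * k * Complex.I)) x₁ x₂ y₁ y₂ -
        modelSteady κ η r₁‖ ≤ 1 / 10 * ‖modelSteady κ η r₁‖ ∧
      ‖oscPart (2 * η * k) (Complex.exp (2 * κ * k * Complex.I)) x₁ x₂ y₁ y₂ -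
        modelOsc κ η r₁‖ ≤ 1 / 10 * ‖modelOsc κ η r₁‖ := by
    intro x₁ x₂ y₁ y₂ hx₁ hx₂ hy₁ hy₂
    obtain ⟨a₁, a₂, b₁, b₂, ha₁, ha₂, hb₁, hb₂, hSe, hOe⟩ :=
      exists_rebase hκ hη hk0 hd2 hd hx₁ hx₂ hy₁ hy₂
    rw [hSe, hOe]
    have hS := norm_steadyPart_sub_le (K := 2 * η * r₁)
      (Λ := Complex.exp (2 * κ * (r₁ : ℂ) * Complex.I)) h5d ha₁ ha₂ hb₁ hb₂
    have hO := norm_oscPart_sub_le (K := 2 * η * r₁)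
      (Λ := Complex.exp (2 * κ * (r₁ : ℂ) * Complex.I)) h5d ha₁ ha₂ hb₁ hb₂
    rw [hΛ₁, hK₁] at hS hO
    constructor
    · refine hS.trans ?_
      calc 15 * (5 * t ^ 78) * ((1 + 1 ^ 2) * H) ≤ 15 * (5 * t ^ 78) * ((1 + 1 ^ 2) * (h₀ / t ^ 2)) := by
            gcongr
        _ = 300 * h₀ * t * t ^ 75 / 2 := by field_simp; ring
        _ ≤ 1 * t ^ 75 / 2 := by gcongr
        _ ≤ 1 / 10 := by linarith [hpow1 75 (by norm_num)]
        _ ≤ _ := by linarith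
    · refine hO.trans ?_
      calc 15 * (5 * t ^ 78) * ((1⁻¹ + 1) * H) = 600 * t * (t ^ 2 * H / 2) * (t ^ 75 / 2) := by ring
        _ ≤ κ * (t ^ 2 * H / 2) * (1 / 10) := by
            have h75 : t ^ 75 / 2 ≤ 1 / 10 := by linarith [hpow1 75 (by norm_num)]
            gcongr ?_ * _ * ?_
        _ = 1 / 10 * (κ * t ^ 2 / 2 * H) := by ring
        _ ≤ _ := by gcongr
  have hone : ‖(1 : ℂ) - 1‖ ≤ t ^ 78 := by
    rw [sub_self, norm_zero]; positivity
  have hmodel := hclose 1 1 1 1 hone hone hone hone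
  have hfull := hclose x₁ x₂ y₁ y₂ (hx₁.trans hδ) (hx₂.trans hδ) (hy₁.trans hδ) (hy₂.trans hδ)
  obtain ⟨ρ, hρ, u, hu, hE⟩ := exists_fastPhase_eq (f := t ^ 100) (by positivity) hre (by
    have h1 : k.im ^ 2 ≤ (t ^ 80 / (1 + ‖k‖)) ^ 2 := by
      rw [← sq_abs]; gcongr
    have h2 : ‖k‖ / (1 + ‖k‖) ^ 2 ≤ 1 := by
      rw [div_le_one (by positivity)]
      nlinarith
    calc 7 * ‖k‖ * k.im ^ 2 ≤ 7 * ‖k‖ * (t ^ 80 / (1 + ‖k‖)) ^ 2 := by gcongr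
      _ = 140 * t ^ 60 * (‖k‖ / (1 + ‖k‖) ^ 2) * (t ^ 100 / 20) := by rw [div_pow]; ring
      _ ≤ 1 * 1 * (t ^ 100 / 20) := by
          gcongr
          linarith [hpow1 60 (by norm_num)]
      _ = _ := by ring)
  exact re_div_pos_of_in_phase (norm_pos_iff.1 (by linarith)) (norm_pos_iff.1 hB₁p)
    (Complex.exp_ne_zero _) hP hρ hPh hE hu hfull.1 hmodel.1 hfull.2 hmodel.2

lemma mul_cos_add_sin_eq (K x : ℝ) :
    K * Real.cos x + Real.sin x = √(1 + K ^ 2) * Real.sin (x + Real.arctan K) := by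
  have h : √(1 + K ^ 2) ≠ 0 := by positivity
  rw [Real.sin_add, Real.sin_arctan, Real.cos_arctan]
  field_simp
  ring

lemma modelOsc_ofReal (κ : ℝ) {η r : ℝ} (hη : 0 < η) (hr : 0 < r) :
    modelOsc κ η r = ((2 * (2 * η * r * Real.cos (2 * κ * r) + Real.sin (2 * κ * r)) /
      (2 * η * r) ^ 2 : ℝ) : ℂ) := by
  have hK : (2 * η * (r : ℂ)) ≠ 0 := by
    exact_mod_cast (by positivity : (2 * η * r) ≠ 0)
  rw [modelOsc, oscPart_one _ _ hK, ← Complex.exp_neg]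
  rw [show -(2 * κ * r * Complex.I : ℂ) = ((-(2 * κ * r) : ℝ) : ℂ) * Complex.I by push_cast; ring,
    show (2 * κ * r * Complex.I : ℂ) = ((2 * κ * r : ℝ) : ℂ) * Complex.I by push_cast; ring,
    Complex.exp_mul_I, Complex.exp_mul_I, ← Complex.ofReal_cos, ← Complex.ofReal_sin,
    ← Complex.ofReal_cos, ← Complex.ofReal_sin, Real.cos_neg, Real.sin_neg]
  push_cast
  congr 1
  linear_combination (-2 * (Complex.sin (2 * κ * r))) * Complex.I_sq

lemma norm_modelOsc_ofReal_ge {κ η r s : ℝ} (hη : 0 < η) (hr : 0 < r)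
    (hs : s ≤ |Real.sin (2 * κ * r + Real.arctan (2 * η * r))|) :
    s * (1 / (2 * η * r) + 1 / (2 * η * r) ^ 2) ≤ ‖modelOsc κ η r‖ := by
  have hK : 0 < 2 * η * r := by positivity
  rw [modelOsc_ofReal κ hη hr, Complex.norm_real, mul_cos_add_sin_eq, Real.norm_eq_abs]
  set K := 2 * η * r
  have hsq : (1 + K) / 2 ≤ √(1 + K ^ 2) := by
    apply Real.le_sqrt_of_sq_le
    nlinarith [sq_nonneg (1 - K)]
  rw [abs_div, abs_mul, abs_mul, abs_of_pos (by positivity : 0 < √(1 + K ^ 2)),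
    abs_of_pos (by norm_num : (0 : ℝ) < 2), abs_of_pos (by positivity : 0 < K ^ 2),
    le_div_iff₀ (by positivity)]
  calc s * (1 / K + 1 / K ^ 2) * K ^ 2 = s * (1 + K) := by field_simp; ring
    _ ≤ |Real.sin (2 * κ * r + Real.arctan K)| * (1 + K) := by gcongr
    _ = 2 * ((1 + K) / 2 * |Real.sin (2 * κ * r + Real.arctan K)|) := by ring
    _ ≤ _ := by gcongr

lemma abs_sin_sub_le (x y : ℝ) : |Real.sin (x - y)| ≤ |Real.sin x| + |Real.sin y| := by
  rw [Real.sin_sub]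
  refine (abs_sub _ _).trans ?_
  rw [abs_mul, abs_mul]
  have h1 := Real.abs_cos_le_one y
  have h2 := Real.abs_cos_le_one x
  nlinarith [abs_nonneg (Real.sin x), abs_nonneg (Real.sin y)]

lemma arctan_sub_le {x y : ℝ} (h : x ≤ y) : Real.arctan y - Real.arctan x ≤ y - x := by
  have := Convex.norm_image_sub_le_of_norm_deriv_le (f := Real.arctan) (C := 1) (s := Set.univ)
    (fun z _ => Real.differentiableAt_arctan z) (fun z _ => by
      rw [Real.deriv_arctan, Real.norm_eq_abs, abs_of_pos (by positivity)]
      rw [div_le_one (by positivity)]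
      nlinarith [sq_nonneg z]) convex_univ (Set.mem_univ x) (Set.mem_univ y)
  rw [Real.norm_eq_abs, Real.norm_eq_abs, one_mul, abs_of_nonneg (sub_nonneg.2 h)] at this
  exact (le_abs_self _).trans this

/-- Every radius can be moved up slightly so that its phase is prescribed. -/
lemma exists_fastPhase_mul_eq {f r₁ : ℝ} (hf : 0 < f) (hr₁ : 0 < r₁) {A B : ℂ} (hA : A ≠ 0)
    (hB : B ≠ 0) :
    ∃ r, r₁ ≤ r ∧ r - r₁ ≤ 2 * f / r₁ ^ 2 ∧
      ∃ P > (0 : ℝ), fastPhase f r * B = P * A := by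
  set θ := Complex.arg (A / B) with hθ
  set ψ := toIcoMod Real.two_pi_pos 0 (θ - 4 / 3 * r₁ ^ 3 / f) with hψ
  have hψ0 : 0 ≤ ψ := left_le_toIcoMod _ _ _
  have hψ2 : ψ < 2 * π := by
    have := toIcoMod_lt_right Real.two_pi_pos 0 (θ - 4 / 3 * r₁ ^ 3 / f)
    simpa using this
  obtain ⟨n, hn⟩ : ∃ n : ℤ, ψ = θ - 4 / 3 * r₁ ^ 3 / f - n * (2 * π) := by
    refine ⟨toIcoDiv Real.two_pi_pos 0 (θ - 4 / 3 * r₁ ^ 3 / f), ?_⟩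
    rw [hψ, toIcoMod, zsmul_eq_mul]
  have hc : 0 ≤ r₁ ^ 3 + 3 * f / 4 * ψ := by positivity
  set r := (r₁ ^ 3 + 3 * f / 4 * ψ) ^ (((3 : ℕ) : ℝ)⁻¹) with hr
  have hr0 : 0 ≤ r := Real.rpow_nonneg hc _
  have hr3 : r ^ 3 = r₁ ^ 3 + 3 * f / 4 * ψ := Real.rpow_inv_natCast_pow hc (by norm_num)
  have hle : r₁ ≤ r := by
    refine le_of_pow_le_pow_left₀ (n := 3) (by norm_num) hr0 ?_
    rw [hr3]
    have : 0 ≤ 3 * f / 4 * ψ := by positivity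
    linarith
  refine ⟨r, hle, ?_, 1 / ‖A / B‖, one_div_pos.2 (norm_pos_iff.2 (div_ne_zero hA hB)), ?_⟩
  · rw [le_div_iff₀ (by positivity)]
    have h1 : (r - r₁) * (3 * r₁ ^ 2) ≤ 3 * f / 4 * ψ := by
      have h2 : 3 * r₁ ^ 2 ≤ r ^ 2 + r * r₁ + r₁ ^ 2 := by nlinarith
      have h3 := mul_le_mul_of_nonneg_left h2 (sub_nonneg.2 hle)
      nlinarith
    have h4 : f * ψ ≤ f * (2 * π) := by gcongr
    have h5 : f * (2 * π) ≤ f * 8 := by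
      gcongr
      linarith [Real.pi_le_four]
    linarith
  · have hE : fastPhase f r = Complex.exp (θ * Complex.I) := by
      rw [fastPhase, Complex.exp_eq_exp_iff_exists_int]
      refine ⟨-n, ?_⟩
      have hr3' : (r : ℂ) ^ 3 = r₁ ^ 3 + 3 * f / 4 * (θ - 4 / 3 * r₁ ^ 3 / f - n * (2 * π)) := by
        rw [hn] at hr3
        have := congrArg (fun x : ℝ => (x : ℂ)) hr3
        push_cast at this
        exact this
      have hf0 : (f : ℂ) ≠ 0 := by exact_mod_cast hf.ne'
      rw [hr3']
      push_cast
      field_simp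
      ring
    have hpol := Complex.norm_mul_exp_arg_mul_I (A / B)
    have hn0 : (‖A / B‖ : ℂ) ≠ 0 := by
      exact_mod_cast norm_ne_zero_iff.2 (div_ne_zero hA hB)
    rw [hE]
    push_cast
    rw [div_mul_eq_mul_div, one_mul, eq_div_iff hn0]
    calc Complex.exp (θ * Complex.I) * B * ‖A / B‖
        = (‖A / B‖ * Complex.exp (Complex.arg (A / B) * Complex.I)) * B := by rw [hθ]; ring
      _ = A := by rw [hpol]; exact div_mul_cancel₀ _ hB

/-- Good radii are dense on the scale `t²`. -/
lemma exists_goodRadius {κ η : ℝ} (hκ : 0 < κ) (hη : 0 < η) :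
    ∃ M > 0, ∀ t > 0, M * t ≤ 1 → ∀ r₀, t ≤ r₀ →
      ∃ r, r₀ ≤ r ∧ r ≤ r₀ + 2 * t ^ 2 ∧ GoodRadius κ η t r := by
  refine ⟨2 + 2 * κ + 2 * η, by positivity, ?_⟩
  intro t ht hMt r₀ hr₀
  have p1 := mul_pos hκ ht
  have p2 := mul_pos hη ht
  have hM' : 2 * t + 2 * (κ * t) + 2 * (η * t) ≤ 1 := by linarith
  have ht2 : t ≤ 1 / 2 := by linarith
  have hr₀p : 0 < r₀ := ht.trans_le hr₀
  set y : ℝ → ℝ := fun r => 2 * κ * r + Real.arctan (2 * η * r) with hy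
  have hh : 0 < t ^ 2 := by positivity
  obtain ⟨r₁, hr₁, hr₁', hs⟩ : ∃ r₁, r₀ ≤ r₁ ∧ r₁ ≤ r₀ + t ^ 2 ∧ κ * t ^ 2 / 2 ≤ |Real.sin (y r₁)| := by
    have hKle : 2 * η * r₀ ≤ 2 * η * (r₀ + t ^ 2) := by gcongr; linarith
    have hd1 : 2 * κ * t ^ 2 ≤ y (r₀ + t ^ 2) - y r₀ := by
      have := Real.arctan_strictMono.monotone hKle
      simp only [hy]; linarith
    have hd2 : y (r₀ + t ^ 2) - y r₀ ≤ (2 * κ + 2 * η) * t ^ 2 := by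
      have := arctan_sub_le hKle
      simp only [hy]; linarith
    have hd3 : (2 * κ + 2 * η) * t ^ 2 ≤ 1 := by
      have : (2 * (κ * t) + 2 * (η * t)) * t ≤ 1 * 1 := by gcongr <;> linarith
      linarith
    set d := y (r₀ + t ^ 2) - y r₀ with hd
    have hd0 : 0 ≤ d := le_trans (by positivity) hd1
    have hpi := Real.pi_gt_three
    have hsin := Real.mul_le_sin hd0 (by linarith)
    have h1 : κ * t ^ 2 ≤ Real.sin d := by
      refine le_trans ?_ hsin
      rw [div_mul_eq_mul_div, le_div_iff₀ Real.pi_pos]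
      have := mul_le_mul_of_nonneg_left Real.pi_le_four (mul_pos hκ hh).le
      linarith
    have h2 := abs_sin_sub_le (y (r₀ + t ^ 2)) (y r₀)
    rw [← hd] at h2
    have h3 := le_abs_self (Real.sin d)
    by_cases hcase : κ * t ^ 2 / 2 ≤ |Real.sin (y r₀)|
    · exact ⟨r₀, le_rfl, by linarith, hcase⟩
    · exact ⟨r₀ + t ^ 2, by linarith, le_rfl, by linarith⟩
  have hr₁p : 0 < r₁ := hr₀p.trans_le hr₁
  have hB := norm_modelOsc_ofReal_ge hη hr₁p hs
  have hBpos : 0 < κ * t ^ 2 / 2 * (1 / (2 * η * r₁) + 1 / (2 * η * r₁) ^ 2) := by positivity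
  have hB0 : modelOsc κ η r₁ ≠ 0 := norm_pos_iff.1 (hBpos.trans_le hB)
  have hA0 : modelSteady κ η r₁ ≠ 0 := by
    have hK : (2 * η * (r₁ : ℂ)) ≠ 0 := by
      exact_mod_cast (by positivity : (2 * η * r₁) ≠ 0)
    have := one_le_norm_steadyPart_one (K := 2 * η * (r₁ : ℂ))
      (Λ := Complex.exp (2 * κ * r₁ * Complex.I)) hK (by simp) (by
        rw [norm_exp_two_mul_I]; simp)
    exact norm_pos_iff.1 (one_pos.trans_le this)
  obtain ⟨r, hr, hrr, hP⟩ := exists_fastPhase_mul_eq (f := t ^ 100) (by positivity) hr₁p hA0 hB0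
  refine ⟨r, hr₁.trans hr, ?_, r₁, hr₀.trans hr₁, hr, hrr, hB, hP⟩
  have h1 : 2 * t ^ 100 / r₁ ^ 2 ≤ t ^ 2 := by
    rw [div_le_iff₀ (by positivity)]
    have h2 : t ^ 2 ≤ r₁ ^ 2 := by
      have := hr₀.trans hr₁
      gcongr
    have h3 : t ^ 96 ≤ t := pow_le_of_le_one ht.le (by linarith) (by norm_num)
    calc 2 * t ^ 100 = t ^ 2 * (2 * t ^ 96 * t ^ 2) := by ring
      _ ≤ t ^ 2 * (1 * r₁ ^ 2) := by gcongr; linarith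
      _ = _ := by ring
  linarith

lemma relError_pow_le {t r : ℝ} (ht : 0 < t) (ht1 : t ≤ 1) (hr : t ≤ r) :
    relError (t ^ 100) r ≤ 6 * t ^ 97 / (1 + r) := by
  have hrp : 0 < r := ht.trans_le hr
  have hu : t / r ≤ 1 := (div_le_one hrp).2 hr
  have hu0 : 0 ≤ t / r := by positivity
  rw [relError, le_div_iff₀ (by positivity)]
  have e : (t ^ 100 / r + t ^ 100 / r ^ 2 + t ^ 100 / r ^ 3) * (1 + r) =
      t ^ 97 * (t ^ 3 + 2 * (t / r) * t ^ 2 + 2 * (t / r) ^ 2 * t + (t / r) ^ 3) := by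
    field_simp
    ring
  rw [e, mul_comm 6]
  gcongr
  have h1 : t ^ 3 ≤ 1 := pow_le_one₀ ht.le ht1
  have h2 : 2 * (t / r) * t ^ 2 ≤ 2 * 1 * 1 := by
    gcongr
    exact pow_le_one₀ ht.le ht1
  have h3 : 2 * (t / r) ^ 2 * t ≤ 2 * 1 * 1 := by
    gcongr
    exact pow_le_one₀ hu0 hu
  have h4 : (t / r) ^ 3 ≤ 1 := pow_le_one₀ hu0 hu
  linarith

lemma abs_sin_le_cos {θ : ℝ} (hθ : |θ| ≤ π / 4) : |Real.sin θ| ≤ Real.cos θ := by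
  have hpi := Real.pi_pos
  rw [← Real.cos_abs θ, Real.abs_sin_eq_sin_abs_of_abs_le_pi (by linarith)]
  have h1 : Real.sin |θ| ≤ Real.sin (π / 4) :=
    Real.sin_le_sin_of_le_of_le_pi_div_two (by linarith [abs_nonneg θ]) (by linarith) hθ
  have h2 : Real.cos (π / 4) ≤ Real.cos |θ| :=
    Real.cos_le_cos_of_nonneg_of_le_pi (abs_nonneg θ) (by linarith) hθ
  rw [Real.sin_pi_div_four] at h1
  rw [Real.cos_pi_div_four] at h2
  exact h1.trans h2

/-- The wave number `exp p` lies in the sector `|arg| ≤ π/4`. -/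
lemma abs_exp_im_le_exp_re {p : ℂ} (hp : |p.im| ≤ π / 4) :
    |(Complex.exp p).im| ≤ (Complex.exp p).re := by
  rw [Complex.exp_re, Complex.exp_im, abs_mul, abs_of_pos (Real.exp_pos _)]
  gcongr
  exact abs_sin_le_cos hp

lemma exp_re_pos {p : ℂ} (hp : |p.im| ≤ π / 4) : 0 < (Complex.exp p).re := by
  rw [Complex.exp_re]
  have := abs_le.1 hp
  have hpi := Real.pi_pos
  exact mul_pos (Real.exp_pos _) (Real.cos_pos_of_mem_Ioo ⟨by linarith, by linarith⟩)

/-- Decomposition of `D_f` for `f = t^100` with the error rate used in the sector estimates. -/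
lemma Df_pow_eq_parts {κ η : ℝ} (hκ : 0 < κ) (hη : 0 < η) :
    ∃ M > 0, ∀ t > 0, M * t ≤ 1 → ∀ p : ℂ, |p.im| ≤ π / 4 → t ≤ ‖Complex.exp p‖ →
      ∃ x₁ x₂ y₁ y₂ : ℂ,
        ‖x₁ - 1‖ ≤ t ^ 96 / (1 + ‖Complex.exp p‖) ∧ ‖x₂ - 1‖ ≤ t ^ 96 / (1 + ‖Complex.exp p‖) ∧
        ‖y₁ - 1‖ ≤ t ^ 96 / (1 + ‖Complex.exp p‖) ∧ ‖y₂ - 1‖ ≤ t ^ 96 / (1 + ‖Complex.exp p‖) ∧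
        Df κ η (t ^ 100) (Complex.exp p ^ 2) =
          steadyPart (2 * η * Complex.exp p) (Complex.exp (2 * κ * Complex.exp p * Complex.I))
            x₁ x₂ y₁ y₂ + fastPhase (t ^ 100) (Complex.exp p) *
          oscPart (2 * η * Complex.exp p) (Complex.exp (2 * κ * Complex.exp p * Complex.I))
            x₁ x₂ y₁ y₂ := by
  obtain ⟨C, hC, c, hc, H⟩ := Df_eq_steadyPart_add_oscPart hκ hη
  refine ⟨1 + 6 * C + 6 / c, by positivity, fun t ht hMt p hp htp => ?_⟩
  rw [Complex.norm_exp] at htp ⊢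
  have q1 := mul_pos hC ht
  have q2 := mul_pos (div_pos (by norm_num : (0 : ℝ) < 6) hc) ht
  have hM' : t + 6 * (C * t) + 6 / c * t ≤ 1 := by linarith
  have ht1 : t ≤ 1 := by linarith
  have hrel := relError_pow_le ht ht1 htp
  set r := Real.exp p.re with hr
  have hrp : 0 < r := Real.exp_pos _
  have hrelc : relError (t ^ 100) r ≤ c := by
    refine hrel.trans ?_
    have h1 : 6 / c * t ≤ 1 := by linarith
    rw [div_mul_eq_mul_div, div_le_one hc] at h1
    have h2 : t ^ 97 ≤ t := pow_le_of_le_one ht.le ht1 (by norm_num)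
    have h3 : 6 * t ^ 97 / (1 + r) ≤ 6 * t ^ 97 := div_le_self (by positivity) (by linarith)
    linarith
  have hrelC : C * relError (t ^ 100) r ≤ t ^ 96 / (1 + r) := by
    calc C * relError (t ^ 100) r ≤ C * (6 * t ^ 97 / (1 + r)) := by gcongr
      _ = 6 * (C * t) * t ^ 96 / (1 + r) := by ring
      _ ≤ 1 * t ^ 96 / (1 + r) := by
          gcongr
          linarith
      _ = _ := by ring
  obtain ⟨x₁, x₂, y₁, y₂, h1, h2, h3, h4, hD⟩ := H (t ^ 100) (by positivity) p hp hrelc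
  exact ⟨x₁, x₂, y₁, y₂, h1.trans hrelC, h2.trans hrelC, h3.trans hrelC, h4.trans hrelC, hD⟩

/-- On the upper half of the boundary of a sector with good radii, `D_f` stays in the right
half-plane relative to its steady model; on the lower half, relative to its oscillating model. -/
lemma re_Df_div_model_pos {κ η : ℝ} (hκ : 0 < κ) (hη : 0 < η) :
    ∃ M > 0, ∀ t > 0, M * t ≤ 1 → ∀ p : ℂ, |p.im| ≤ π / 4 → t ≤ ‖Complex.exp p‖ →
      (GoodRadius κ η t ‖Complex.exp p‖ ∨ |p.im| = π / 4) →
      (0 ≤ p.im → 0 < (Df κ η (t ^ 100) (Complex.exp p ^ 2) /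
        modelSteady κ η (Complex.exp p)).re) ∧
      (p.im ≤ 0 → 0 < (Df κ η (t ^ 100) (Complex.exp p ^ 2) /
        (fastPhase (t ^ 100) (Complex.exp p) * modelOsc κ η (Complex.exp p))).re) := by
  obtain ⟨M₀, hM₀, H₀⟩ := Df_pow_eq_parts hκ hη
  obtain ⟨M₁, hM₁, H₁⟩ := norm_sub_modelSteady_lt hκ hη
  obtain ⟨M₂, hM₂, H₂⟩ := norm_sub_modelOsc_lt hκ hη
  obtain ⟨M₃, hM₃, H₃⟩ := re_div_pos_of_goodRadius hκ hη
  refine ⟨2 + M₀ + M₁ + M₂ + M₃, by positivity, fun t ht hMt p hp htp hcase => ?_⟩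
  have q0 := mul_pos hM₀ ht
  have q1 := mul_pos hM₁ ht
  have q2 := mul_pos hM₂ ht
  have q3 := mul_pos hM₃ ht
  have hM' : 2 * t + M₀ * t + M₁ * t + M₂ * t + M₃ * t ≤ 1 := by linarith
  have ht2 : t ≤ 1 / 2 := by linarith
  obtain ⟨x₁, x₂, y₁, y₂, h1, h2, h3, h4, hD⟩ := H₀ t ht (by linarith) p hp htp
  have hsec := abs_exp_im_le_exp_re hp
  have hrepos := exp_re_pos hp
  have hpi := Real.pi_pos
  have hsign : 0 ≤ p.im → 0 ≤ (Complex.exp p).im := fun h => by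
    rw [Complex.exp_im]
    exact mul_nonneg (Real.exp_pos _).le (Real.sin_nonneg_of_nonneg_of_le_pi h
      (by linarith [le_abs_self p.im]))
  have hsign' : p.im ≤ 0 → (Complex.exp p).im ≤ 0 := fun h => by
    rw [Complex.exp_im]
    exact mul_nonpos_of_nonneg_of_nonpos (Real.exp_pos _).le (Real.sin_nonpos_of_nonpos_of_neg_pi_le h
      (by linarith [neg_abs_le p.im]))
  have hedge : |p.im| = π / 4 → t ^ 80 / (1 + ‖Complex.exp p‖) ≤ |(Complex.exp p).im| := fun h => by
    have e : |(Complex.exp p).im| = ‖Complex.exp p‖ * (√2 / 2) := by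
      rw [Complex.exp_im, abs_mul, abs_of_pos (Real.exp_pos _), Complex.norm_exp,
        Real.abs_sin_eq_sin_abs_of_abs_le_pi (by linarith), h, Real.sin_pi_div_four]
    rw [e]
    have h80 : t ^ 80 = t * t ^ 79 := by ring
    have h79 : t ^ 79 ≤ t := pow_le_of_le_one ht.le (by linarith) (by norm_num)
    have hs2 : 1 ≤ √2 := Real.one_le_sqrt.2 (by norm_num)
    calc t ^ 80 / (1 + ‖Complex.exp p‖) ≤ t ^ 80 :=
          div_le_self (by positivity) (by linarith [norm_nonneg (Complex.exp p)])
      _ = t * t ^ 79 := h80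
      _ ≤ ‖Complex.exp p‖ * (√2 / 2) := by
          gcongr
          linarith
  rw [hD]
  constructor
  · intro hpos
    rcases le_or_gt (t ^ 80 / (1 + ‖Complex.exp p‖)) (|(Complex.exp p).im|) with hbig | hsmall
    · rw [abs_of_nonneg (hsign hpos)] at hbig
      exact re_div_pos_of_norm_sub_lt (H₁ t ht (by linarith) _ htp hbig
        ((le_abs_self _).trans hsec) _ _ _ _ h1 h2 h3 h4)
    · rcases hcase with hg | he
      · exact (H₃ t ht (by linarith) _ hg hsmall.le hrepos _ _ _ _ h1 h2 h3 h4).1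
      · exact absurd (hedge he) (not_le.2 hsmall)
  · intro hneg
    rcases le_or_gt (t ^ 80 / (1 + ‖Complex.exp p‖)) (|(Complex.exp p).im|) with hbig | hsmall
    · rw [abs_of_nonpos (hsign' hneg)] at hbig
      exact re_div_pos_of_norm_sub_lt (H₂ t ht (by linarith) _ htp (by linarith)
        ((neg_le_abs _).trans hsec) _ _ _ _ h1 h2 h3 h4)
    · rcases hcase with hg | he
      · exact (H₃ t ht (by linarith) _ hg hsmall.le hrepos _ _ _ _ h1 h2 h3 h4).2
      · exact absurd (hedge he) (not_le.2 hsmall)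

/-- The boundary of the rectangle `[a, b] × [-c, c]`. -/
def rectBoundary (a b c : ℝ) : Set ℂ :=
  {p | a ≤ p.re ∧ p.re ≤ b ∧ |p.im| ≤ c ∧ (p.re = a ∨ p.re = b ∨ |p.im| = c)}

lemma integral_horizontal {L F : ℂ → ℂ} {a b y : ℝ} (hab : a ≤ b)
    (hL : ∀ x ∈ Set.Icc a b, HasDerivAt L (F (x + y * Complex.I)) (x + y * Complex.I))
    (hF : ContinuousOn (fun x : ℝ => F (x + y * Complex.I)) (Set.Icc a b)) :
    ∫ x in a..b, F (x + y * Complex.I) = L (b + y * Complex.I) - L (a + y * Complex.I) := by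
  rw [← Set.uIcc_of_le hab] at hL hF
  exact intervalIntegral.integral_eq_sub_of_hasDerivAt
    (f := fun x : ℝ => L (x + y * Complex.I))
    (fun x hx => ((hL x hx).comp_add_const _ _).comp_ofReal) hF.intervalIntegrable

lemma integral_vertical {L F : ℂ → ℂ} {x c d : ℝ} (hcd : c ≤ d)
    (hL : ∀ y ∈ Set.Icc c d, HasDerivAt L (F (x + y * Complex.I)) (x + y * Complex.I))
    (hF : ContinuousOn (fun y : ℝ => F (x + y * Complex.I)) (Set.Icc c d)) :
    Complex.I • ∫ y in c..d, F (x + y * Complex.I) =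
      L (x + d * Complex.I) - L (x + c * Complex.I) := by
  rw [← Set.uIcc_of_le hcd] at hL hF
  rw [← intervalIntegral.integral_smul]
  refine intervalIntegral.integral_eq_sub_of_hasDerivAt
    (f := fun y : ℝ => L (x + y * Complex.I)) (fun y hy => ?_)
    (hF.const_smul Complex.I).intervalIntegrable
  have h1 : HasDerivAt (fun z : ℂ => (x : ℂ) + z * Complex.I) Complex.I (y : ℂ) := by
    simpa using ((hasDerivAt_id (y : ℂ)).mul_const Complex.I).const_add (x : ℂ)
  have h2 := HasDerivAt.comp (y : ℂ) (h₂ := L) (h := fun z : ℂ => (x : ℂ) + z * Complex.I)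
    (hL y hy) h1
  have h3 := h2.comp_ofReal
  rw [smul_eq_mul, mul_comm]
  exact h3

/-- Cauchy's theorem on a rectangle, with the boundary integral evaluated by one primitive near the
lower half of the boundary and one near the upper half. -/
lemma primitive_sub_eq_zero {L₁ L₂ F : ℂ → ℂ} {a b c : ℝ} (hab : a ≤ b) (hc : 0 ≤ c)
    (hF : DifferentiableOn ℂ F {p | a ≤ p.re ∧ p.re ≤ b ∧ |p.im| ≤ c})
    (h₁ : ∀ p ∈ rectBoundary a b c, p.im ≤ 0 → HasDerivAt L₁ (F p) p)
    (h₂ : ∀ p ∈ rectBoundary a b c, 0 ≤ p.im → HasDerivAt L₂ (F p) p) :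
    L₁ b - L₁ a + (L₂ a - L₂ b) = 0 := by
  have hcc : -c ≤ c := by linarith
  have hcauchy := Complex.integral_boundary_rect_eq_zero_of_differentiableOn F
    (a + (-c : ℝ) * Complex.I) (b + (c : ℝ) * Complex.I) (hF.mono (by
      intro p hp
      rw [Complex.mem_reProdIm] at hp
      simp only [Complex.add_re, Complex.ofReal_re, Complex.re_ofReal_mul, Complex.I_re, mul_zero,
        add_zero, Complex.add_im, Complex.ofReal_im, Complex.im_ofReal_mul, Complex.I_im, mul_one,
        zero_add, Set.uIcc_of_le hab, Set.uIcc_of_le hcc] at hp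
      exact ⟨hp.1.1, hp.1.2, abs_le.2 hp.2⟩))
  simp only [Complex.add_re, Complex.ofReal_re, Complex.re_ofReal_mul, Complex.I_re, mul_zero,
    add_zero, Complex.add_im, Complex.ofReal_im, Complex.im_ofReal_mul, Complex.I_im, mul_one,
    zero_add] at hcauchy
  have hmem : ∀ x y : ℝ, a ≤ x → x ≤ b → |y| ≤ c → (x = a ∨ x = b ∨ |y| = c) →
      ((x : ℂ) + y * Complex.I) ∈ rectBoundary a b c := fun x y h1 h2 h3 h4 => by
    simpa [rectBoundary] using ⟨h1, h2, h3, h4⟩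
  have him : ∀ x y : ℝ, ((x : ℂ) + y * Complex.I).im = y := fun x y => by simp
  have hFc : ∀ {g : ℝ → ℂ} {s : Set ℝ}, Continuous g →
      (∀ x ∈ s, a ≤ (g x).re ∧ (g x).re ≤ b ∧ |(g x).im| ≤ c) →
      ContinuousOn (fun x => F (g x)) s := fun hg hs => hF.continuousOn.comp hg.continuousOn hs
  have hhor : ∀ y : ℝ, |y| ≤ c →
      ContinuousOn (fun x : ℝ => F (x + y * Complex.I)) (Set.Icc a b) := fun y hy =>
    hFc (by fun_prop) fun x hx => by simpa using ⟨hx.1, hx.2, hy⟩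
  have hver : ∀ x y z : ℝ, a ≤ x → x ≤ b → -c ≤ y → z ≤ c →
      ContinuousOn (fun y : ℝ => F (x + y * Complex.I)) (Set.Icc y z) := fun x y z h1 h2 h3 h4 =>
    hFc (by fun_prop) fun w hw => by
      simpa using ⟨h1, h2, abs_le.2 ⟨h3.trans hw.1, hw.2.trans h4⟩⟩
  have hbot := integral_horizontal (L := L₁) (F := F) (y := -c) hab (fun x hx =>
    h₁ _ (hmem x (-c) hx.1 hx.2 (by rw [abs_neg, abs_of_nonneg hc])
      (Or.inr (Or.inr (by rw [abs_neg, abs_of_nonneg hc])))) (by rw [him]; linarith))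
    (hhor _ (by rw [abs_neg, abs_of_nonneg hc]))
  have htop := integral_horizontal (L := L₂) (F := F) (y := c) hab (fun x hx =>
    h₂ _ (hmem x c hx.1 hx.2 (by rw [abs_of_nonneg hc])
      (Or.inr (Or.inr (by rw [abs_of_nonneg hc])))) (by rw [him]; linarith))
    (hhor _ (by rw [abs_of_nonneg hc]))
  have hside : ∀ x, a ≤ x → x ≤ b → (x = a ∨ x = b) →
      Complex.I • ∫ y in (-c)..c, F (x + y * Complex.I) =
        (L₁ x - L₁ (x + ((-c : ℝ) : ℂ) * Complex.I)) + (L₂ (x + c * Complex.I) - L₂ x) := by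
    intro x hxa hxb hx
    rw [← intervalIntegral.integral_add_adjacent_intervals (b := 0), smul_add,
      integral_vertical (L := L₁) (by linarith) (fun y hy => h₁ _ (hmem x y hxa hxb
        (abs_le.2 ⟨hy.1, by linarith [hy.2]⟩) (by tauto)) (by rw [him]; exact hy.2))
        (hver x _ _ hxa hxb le_rfl hc),
      integral_vertical (L := L₂) hc (fun y hy => h₂ _ (hmem x y hxa hxb
        (abs_le.2 ⟨by linarith [hy.1], hy.2⟩) (by tauto)) (by rw [him]; exact hy.1))
        (hver x _ _ hxa hxb (by linarith) le_rfl)]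
    · simp
    · exact (Set.uIcc_of_le (by linarith : -c ≤ 0) ▸ hver x _ _ hxa hxb le_rfl hc :
        ContinuousOn _ (Set.uIcc (-c) 0)).intervalIntegrable
    · exact (Set.uIcc_of_le hc ▸ hver x _ _ hxa hxb (by linarith) le_rfl :
        ContinuousOn _ (Set.uIcc 0 c)).intervalIntegrable
  rw [hbot, htop, hside b hab le_rfl (Or.inr rfl), hside a le_rfl hab (Or.inl rfl)] at hcauchy
  linear_combination hcauchy

lemma log_sub_log_neg {v : ℂ} (hv : 0 < v.im) :
    Complex.log v - Complex.log (-v) = π * Complex.I := by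
  rw [Complex.log, Complex.log, norm_neg, Complex.arg_neg_eq_arg_sub_pi_of_im_pos hv]
  push_cast
  ring

lemma hasDerivAt_log_const_mul_sub {ρ m p : ℂ} (hm : m ≠ 0)
    (h : m * (p - ρ) ∈ Complex.slitPlane) :
    HasDerivAt (fun q => Complex.log (m * (q - ρ))) (1 / (p - ρ)) p := by
  have h0 := Complex.slitPlane_ne_zero h
  have h1 : HasDerivAt (fun q => m * (q - ρ)) m p := by
    simpa using ((hasDerivAt_id p).sub_const ρ).const_mul m
  convert h1.clog h using 1
  have := right_ne_zero_of_mul h0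
  field_simp

/-- Splitting off finitely many zeros of an entire function. -/
lemma exists_eq_prod_mul {g : ℂ → ℂ} (hg : Differentiable ℂ g) (S : Finset ℂ)
    (hS : ∀ ρ ∈ S, analyticOrderAt g ρ ≠ ⊤) :
    ∃ h : ℂ → ℂ, Differentiable ℂ h ∧ (∀ ρ ∈ S, h ρ ≠ 0) ∧
      ∀ p, g p = (∏ ρ ∈ S, (p - ρ) ^ analyticOrderNatAt g ρ) * h p := by
  classical
  induction S using Finset.induction_on with
  | empty => exact ⟨g, hg, by simp, by simp⟩
  | insert σ S hσ ih =>
    obtain ⟨h, hh, hne, he⟩ := ih fun ρ hρ => hS ρ (Finset.mem_insert_of_mem hρ)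
    have hprod : Differentiable ℂ fun p => ∏ ρ ∈ S, (p - ρ) ^ analyticOrderNatAt g ρ := by fun_prop
    have hprod0 : ∏ ρ ∈ S, (σ - ρ) ^ analyticOrderNatAt g ρ ≠ 0 :=
      Finset.prod_ne_zero_iff.2 fun ρ hρ => pow_ne_zero _ (sub_ne_zero.2 fun h => hσ (h ▸ hρ))
    have hord : analyticOrderAt g σ = analyticOrderAt h σ := by
      have : g = (fun p => ∏ ρ ∈ S, (p - ρ) ^ analyticOrderNatAt g ρ) * h := funext he
      conv_lhs => rw [this]
      rw [analyticOrderAt_mul (hprod.analyticAt σ) (hh.analyticAt σ),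
        (hprod.analyticAt σ).analyticOrderAt_eq_zero.2 hprod0, zero_add]
    set n := analyticOrderNatAt g σ with hn
    have hn' : analyticOrderAt h σ = n := by
      rw [← hord, hn, Nat.cast_analyticOrderNatAt (hS σ (Finset.mem_insert_self _ _))]
    obtain ⟨u, hu, hu0, hue⟩ := (hh.analyticAt σ).analyticOrderAt_eq_natCast.1 hn'
    set h₂ := Function.update (fun p => h p / (p - σ) ^ n) σ (u σ) with hh₂
    have hev : h₂ =ᶠ[nhds σ] u := by
      filter_upwards [hue] with p hp
      by_cases hpσ : p = σ
      · rw [hpσ, hh₂, Function.update_self]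
      · rw [hh₂, Function.update_of_ne hpσ, hp, smul_eq_mul,
          mul_div_cancel_left₀ _ (pow_ne_zero _ (sub_ne_zero.2 hpσ))]
    have hfac : ∀ p, h p = (p - σ) ^ n * h₂ p := by
      intro p
      by_cases hpσ : p = σ
      · have := hue.self_of_nhds
        rw [hpσ, this, smul_eq_mul, hev.self_of_nhds]
      · rw [hh₂, Function.update_of_ne hpσ, mul_div_cancel₀]
        exact pow_ne_zero _ (sub_ne_zero.2 hpσ)
    refine ⟨h₂, fun p => ?_, ?_, fun p => ?_⟩
    · by_cases hpσ : p = σ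
      · rw [hpσ]
        exact hu.differentiableAt.congr_of_eventuallyEq hev
      · have : h₂ =ᶠ[nhds p] fun p => h p / (p - σ) ^ n := by
          filter_upwards [isOpen_ne.mem_nhds hpσ] with q hq
          rw [hh₂, Function.update_of_ne hq]
        refine DifferentiableAt.congr_of_eventuallyEq ?_ this
        exact (hh p).div (by fun_prop) (pow_ne_zero _ (sub_ne_zero.2 hpσ))
    · intro ρ hρ
      rcases Finset.mem_insert.1 hρ with rfl | hρ
      · rw [hev.self_of_nhds]
        exact hu0
      · exact right_ne_zero_of_mul (hfac ρ ▸ hne ρ hρ)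
    · rw [Finset.prod_insert hσ, he p, hfac p]
      ring

/-- The argument principle on a rectangle, with the boundary integral of the logarithmic derivative evaluated by one
logarithm of `g` near the lower half of the boundary and one near the upper half. -/
lemma two_pi_I_mul_sum_order {g L₁ L₂ : ℂ → ℂ} {a b c : ℝ} (hab : a ≤ b) (hc : 0 ≤ c)
    (hg : Differentiable ℂ g) (hne : ∀ p ∈ rectBoundary a b c, g p ≠ 0)
    (h₁ : ∀ p ∈ rectBoundary a b c, p.im ≤ 0 → HasDerivAt L₁ (deriv g p / g p) p)
    (h₂ : ∀ p ∈ rectBoundary a b c, 0 ≤ p.im → HasDerivAt L₂ (deriv g p / g p) p)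
    (S : Finset ℂ) (hS : ∀ ρ, ρ ∈ S ↔ a < ρ.re ∧ ρ.re < b ∧ |ρ.im| < c ∧ g ρ = 0) :
    L₁ b - L₁ a + (L₂ a - L₂ b) =
      2 * π * Complex.I * ∑ ρ ∈ S, (analyticOrderNatAt g ρ : ℂ) := by
  have hcorner : (a : ℂ) ∈ rectBoundary a b c := by simp [rectBoundary, hab, hc]
  have htop : ∀ ρ ∈ S, analyticOrderAt g ρ ≠ ⊤ := by
    intro ρ _ htop
    rw [analyticOrderAt_eq_top] at htop
    have := AnalyticOnNhd.eqOn_zero_of_preconnected_of_eventuallyEq_zero (𝕜 := ℂ) (f := g)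
      (U := Set.univ) (fun z _ => hg.analyticAt z) isPreconnected_univ (Set.mem_univ ρ) htop
    exact hne _ hcorner (this (Set.mem_univ _))
  obtain ⟨h, hh, hh0, hfac⟩ := exists_eq_prod_mul hg S htop
  have hhne : ∀ p : ℂ, a ≤ p.re → p.re ≤ b → |p.im| ≤ c → h p ≠ 0 := by
    intro p h1 h2 h3 hp
    have hgp : g p = 0 := by rw [hfac, hp, mul_zero]
    by_cases hpb : p ∈ rectBoundary a b c
    · exact hne p hpb hgp
    · simp only [rectBoundary, Set.mem_ofPred_eq, not_and, not_or] at hpb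
      obtain ⟨q1, q2, q3⟩ := hpb h1 h2 h3
      exact hh0 p ((hS p).2 ⟨lt_of_le_of_ne h1 (Ne.symm q1), lt_of_le_of_ne h2 q2,
        lt_of_le_of_ne h3 q3, hgp⟩) hp
  have hlog : ∀ p ∈ rectBoundary a b c, deriv h p / h p =
      deriv g p / g p - ∑ ρ ∈ S, (analyticOrderNatAt g ρ : ℂ) * (1 / (p - ρ)) := by
    intro p hp
    have hp0 : ∏ ρ ∈ S, (p - ρ) ^ analyticOrderNatAt g ρ ≠ 0 :=
      left_ne_zero_of_mul (hfac p ▸ hne p hp)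
    have e : g = fun p => (∏ ρ ∈ S, (p - ρ) ^ analyticOrderNatAt g ρ) * h p := funext hfac
    have e1 : logDeriv g p = logDeriv (fun p => ∏ ρ ∈ S, (p - ρ) ^ analyticOrderNatAt g ρ) p +
        logDeriv h p := by
      conv_lhs => rw [e]
      exact logDeriv_mul p hp0 (hhne p hp.1 hp.2.1 hp.2.2.1) (by fun_prop) (hh p)
    have e2 : logDeriv (fun p => ∏ ρ ∈ S, (p - ρ) ^ analyticOrderNatAt g ρ) p =
        ∑ ρ ∈ S, (analyticOrderNatAt g ρ : ℂ) * (1 / (p - ρ)) := by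
      rw [logDeriv_prod (f := fun ρ p => (p - ρ) ^ analyticOrderNatAt g ρ)
        (fun ρ hρ => Finset.prod_ne_zero_iff.1 hp0 ρ hρ) (fun ρ _ => by fun_prop)]
      refine Finset.sum_congr rfl fun ρ hρ => ?_
      rw [logDeriv_fun_pow (by fun_prop)]
      simp [logDeriv_apply]
    rw [← logDeriv_apply, ← logDeriv_apply, e1, e2]
    ring
  have hslit : ∀ ρ ∈ S, ∀ p ∈ rectBoundary a b c,
      (p.im ≤ 0 → Complex.I * (p - ρ) ∈ Complex.slitPlane) ∧
      (0 ≤ p.im → -Complex.I * (p - ρ) ∈ Complex.slitPlane) := by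
    intro ρ hρ p hp
    obtain ⟨r1, r2, r3, -⟩ := (hS ρ).1 hρ
    obtain ⟨-, -, -, hb⟩ := hp
    simp only [Complex.mem_slitPlane_iff, Complex.mul_re, Complex.mul_im, Complex.I_re,
      Complex.I_im, Complex.sub_re, Complex.sub_im, Complex.neg_re, Complex.neg_im]
    have hρc := abs_lt.1 r3
    constructor
    · intro hp0
      rcases hb with hb | hb | hb
      · right; rw [hb]; intro hcontra; linarith
      · right; rw [hb]; intro hcontra; linarith
      · left; rw [abs_of_nonpos hp0] at hb; linarith
    · intro hp0
      rcases hb with hb | hb | hb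
      · right; rw [hb]; intro hcontra; linarith
      · right; rw [hb]; intro hcontra; linarith
      · left; rw [abs_of_nonneg hp0] at hb; linarith
  have key := primitive_sub_eq_zero (F := fun p => deriv h p / h p)
    (L₁ := fun p => L₁ p - ∑ ρ ∈ S, (analyticOrderNatAt g ρ : ℂ) *
      Complex.log (Complex.I * (p - ρ)))
    (L₂ := fun p => L₂ p - ∑ ρ ∈ S, (analyticOrderNatAt g ρ : ℂ) *
      Complex.log (-Complex.I * (p - ρ))) hab hc
    (fun p hp => ((hh.deriv p).div (hh p) (hhne p hp.1 hp.2.1 hp.2.2)).differentiableWithinAt)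
    (fun p hp hp0 => by
      rw [hlog p hp]
      exact (h₁ p hp hp0).sub (HasDerivAt.fun_sum fun ρ hρ =>
        (hasDerivAt_log_const_mul_sub Complex.I_ne_zero ((hslit ρ hρ p hp).1 hp0)).const_mul _))
    (fun p hp hp0 => by
      rw [hlog p hp]
      exact (h₂ p hp hp0).sub (HasDerivAt.fun_sum fun ρ hρ =>
        (hasDerivAt_log_const_mul_sub (neg_ne_zero.2 Complex.I_ne_zero)
          ((hslit ρ hρ p hp).2 hp0)).const_mul _))
  have hsum : ∑ ρ ∈ S, (analyticOrderNatAt g ρ : ℂ) * Complex.log (Complex.I * (b - ρ)) -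
      ∑ ρ ∈ S, (analyticOrderNatAt g ρ : ℂ) * Complex.log (Complex.I * (a - ρ)) +
      (∑ ρ ∈ S, (analyticOrderNatAt g ρ : ℂ) * Complex.log (-Complex.I * (a - ρ)) -
      ∑ ρ ∈ S, (analyticOrderNatAt g ρ : ℂ) * Complex.log (-Complex.I * (b - ρ))) =
      2 * π * Complex.I * ∑ ρ ∈ S, (analyticOrderNatAt g ρ : ℂ) := by
    rw [Finset.mul_sum, ← Finset.sum_sub_distrib, ← Finset.sum_sub_distrib,
      ← Finset.sum_add_distrib]
    refine Finset.sum_congr rfl fun ρ hρ => ?_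
    obtain ⟨r1, r2, -, -⟩ := (hS ρ).1 hρ
    have hb := log_sub_log_neg (v := Complex.I * (b - ρ)) (by simpa using r2)
    have ha := log_sub_log_neg (v := -Complex.I * (a - ρ)) (by simpa using r1)
    rw [← neg_mul] at hb
    rw [neg_mul, neg_neg, ← neg_mul] at ha
    linear_combination (analyticOrderNatAt g ρ : ℂ) * (ha + hb)
  linear_combination key + hsum

lemma hasDerivAt_of_exp_eventuallyEq {L g : ℂ → ℂ} {p : ℂ} (hL : DifferentiableAt ℂ L p)
    (h : ∀ᶠ q in nhds p, Complex.exp (L q) = g q) : HasDerivAt L (deriv g p / g p) p := by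
  have h1 := hL.hasDerivAt.cexp
  have h2 : deriv g p = Complex.exp (L p) * deriv L p := by
    rw [← h1.deriv]
    exact (Filter.EventuallyEq.deriv_eq h).symm
  rw [h2, ← h.self_of_nhds, mul_div_cancel_left₀ _ (Complex.exp_ne_zero _)]
  exact hL.hasDerivAt

lemma mem_slitPlane_of_re_pos {z : ℂ} (h : 0 < z.re) : z ∈ Complex.slitPlane :=
  Complex.mem_slitPlane_iff.2 (Or.inl h)

lemma eventually_ne_zero_of_re_pos {u : ℂ → ℂ} {p : ℂ} (hu : DifferentiableAt ℂ u p)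
    (h : 0 < (u p).re) : ∀ᶠ q in nhds p, u q ≠ 0 :=
  hu.continuousAt.eventually_ne (Complex.slitPlane_ne_zero (mem_slitPlane_of_re_pos h))

lemma abs_log_im_le {z : ℂ} (h : 0 < z.re) : |(Complex.log z).im| ≤ π / 2 := by
  rw [Complex.log_im]
  exact (Complex.abs_arg_lt_pi_div_two_iff.2 (Or.inl h)).le

/-- A logarithm of `g` (as a function of `p`), relative to the steady model. -/
noncomputable def steadyLog (κ η : ℝ) (g : ℂ → ℂ) (p : ℂ) : ℂ :=
  2 * Complex.log ((2 * η * Complex.exp p + Complex.I) / (2 * η * Complex.exp p)) +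
    Complex.log (1 + (Complex.exp (2 * κ * Complex.exp p * Complex.I) /
      (2 * η * Complex.exp p + Complex.I)) ^ 2) +
    Complex.log (g p / modelSteady κ η (Complex.exp p))

/-- A logarithm of `g` (as a function of `p`), relative to the oscillating model. -/
noncomputable def oscLog (κ η f : ℝ) (g : ℂ → ℂ) (p : ℂ) : ℂ :=
  4 / 3 * Complex.exp p ^ 3 / f * Complex.I + 2 * κ * Complex.exp p * Complex.I - p -
    Real.log (2 * η) +
    Complex.log ((2 * η * Complex.exp p - Complex.I) / (2 * η * Complex.exp p)) +
    Complex.log (1 + (2 * η * Complex.exp p + Complex.I) /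
      (Complex.exp (2 * κ * Complex.exp p * Complex.I) ^ 2 *
        (2 * η * Complex.exp p - Complex.I))) +
    Complex.log (g p / (fastPhase f (Complex.exp p) * modelOsc κ η (Complex.exp p)))

lemma modelSteady_eq (κ : ℝ) {η : ℝ} (hη : 0 < η) (p : ℂ) :
    modelSteady κ η (Complex.exp p) = ((2 * η * Complex.exp p + Complex.I) ^ 2 +
      Complex.exp (2 * κ * Complex.exp p * Complex.I) ^ 2) / (2 * η * Complex.exp p) ^ 2 := by
  have hη' : (η : ℂ) ≠ 0 := by exact_mod_cast hη.ne'
  exact steadyPart_one _ _ (by simp [hη'])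

lemma modelOsc_eq (κ : ℝ) {η : ℝ} (hη : 0 < η) (p : ℂ) :
    modelOsc κ η (Complex.exp p) = ((Complex.exp (2 * κ * Complex.exp p * Complex.I))⁻¹ *
      (2 * η * Complex.exp p + Complex.I) + Complex.exp (2 * κ * Complex.exp p * Complex.I) *
      (2 * η * Complex.exp p - Complex.I)) / (2 * η * Complex.exp p) ^ 2 := by
  have hη' : (η : ℂ) ≠ 0 := by exact_mod_cast hη.ne'
  exact oscPart_one _ _ (by simp [hη'])

lemma differentiable_modelSteady_exp (κ : ℝ) {η : ℝ} (hη : 0 < η) :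
    Differentiable ℂ fun p => modelSteady κ η (Complex.exp p) := by
  have hη' : (η : ℂ) ≠ 0 := by exact_mod_cast hη.ne'
  simp only [modelSteady_eq κ hη]
  intro p
  refine DifferentiableAt.div (by fun_prop) (by fun_prop) (by simp [hη'])

lemma differentiable_modelOsc_exp (κ : ℝ) {η : ℝ} (hη : 0 < η) :
    Differentiable ℂ fun p => modelOsc κ η (Complex.exp p) := by
  have hη' : (η : ℂ) ≠ 0 := by exact_mod_cast hη.ne'
  simp only [modelOsc_eq κ hη]
  intro p
  refine DifferentiableAt.div ?_ (by fun_prop) (by simp [hη'])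
  refine DifferentiableAt.add (DifferentiableAt.mul (DifferentiableAt.inv (by fun_prop)
    (Complex.exp_ne_zero _)) (by fun_prop)) (by fun_prop)

lemma one_le_re_add_I_div {K : ℂ} (hK : K ≠ 0) (h : 0 ≤ K.im) :
    1 ≤ ((K + Complex.I) / K).re := by
  rw [add_div, div_self hK, Complex.add_re, Complex.one_re, Complex.div_re]
  simp only [Complex.I_re, Complex.I_im, zero_mul, zero_div, one_mul, zero_add]
  have := div_nonneg h (Complex.normSq_nonneg K)
  linarith

lemma one_le_re_sub_I_div {K : ℂ} (hK : K ≠ 0) (h : K.im ≤ 0) :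
    1 ≤ ((K - Complex.I) / K).re := by
  rw [sub_div, div_self hK, Complex.sub_re, Complex.one_re, Complex.div_re]
  simp only [Complex.I_re, Complex.I_im, zero_mul, zero_div, one_mul, zero_add]
  have := div_nonpos_of_nonpos_of_nonneg h (Complex.normSq_nonneg K)
  linarith

lemma re_one_add_sq_pos {a : ℂ} (ha : ‖a‖ < 1) : 0 < (1 + a ^ 2).re := by
  have h1 := (abs_le.1 (Complex.abs_re_le_norm (a ^ 2))).1
  rw [norm_pow] at h1
  have : ‖a‖ ^ 2 < 1 := pow_lt_one₀ (norm_nonneg a) ha (by norm_num)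
  rw [Complex.add_re, Complex.one_re]
  linarith

lemma re_one_add_pos {b : ℂ} (hb : ‖b‖ ≤ 1) (h : 1 + b ≠ 0) : 0 < (1 + b).re := by
  have hsq : b.re ^ 2 + b.im ^ 2 ≤ 1 := by
    have := pow_le_one₀ (n := 2) (norm_nonneg b) hb
    rw [← Complex.normSq_eq_norm_sq, Complex.normSq_apply] at this
    nlinarith
  rw [Complex.add_re, Complex.one_re]
  by_contra hcon
  have h1 : b.re = -1 := by nlinarith [sq_nonneg b.im, sq_nonneg (b.re + 1)]
  have h2 : b.im = 0 := by
    rw [h1] at hsq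
    have : b.im ^ 2 = 0 := by nlinarith [sq_nonneg b.im]
    simpa using this
  exact h (Complex.ext (by simp [h1]) (by simp [h2]))

lemma one_lt_norm_add_I {K : ℂ} (hr : 0 < K.re) (hi : 0 ≤ K.im) : 1 < ‖K + Complex.I‖ := by
  have hsq : ‖K + Complex.I‖ ^ 2 = K.re ^ 2 + (K.im + 1) ^ 2 := by
    rw [← Complex.normSq_eq_norm_sq, Complex.normSq_apply]
    simp; ring
  by_contra hcon
  have := pow_le_one₀ (n := 2) (norm_nonneg (K + Complex.I)) (not_lt.1 hcon)
  nlinarith [sq_pos_of_pos hr]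

/-- The factors of the steady model in the upper half of the sector. -/
lemma steadyLog_factors_re_pos {κ η : ℝ} (hκ : 0 < κ) (hη : 0 < η) {p : ℂ}
    (hr : 0 < (Complex.exp p).re) (hi : 0 ≤ (Complex.exp p).im) :
    2 * η * Complex.exp p + Complex.I ≠ 0 ∧
    0 < ((2 * η * Complex.exp p + Complex.I) / (2 * η * Complex.exp p)).re ∧
    0 < (1 + (Complex.exp (2 * κ * Complex.exp p * Complex.I) /
      (2 * η * Complex.exp p + Complex.I)) ^ 2).re := by
  have hη' : (η : ℂ) ≠ 0 := by exact_mod_cast hη.ne'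
  have hK : 2 * η * Complex.exp p ≠ 0 := by simp [hη']
  have e : 2 * η * Complex.exp p = ((2 * η : ℝ) : ℂ) * Complex.exp p := by push_cast; ring
  have hKr : 0 < (2 * η * Complex.exp p).re := by
    rw [e, Complex.re_ofReal_mul]; positivity
  have hKi : 0 ≤ (2 * η * Complex.exp p).im := by
    rw [e, Complex.im_ofReal_mul]; positivity
  have hn := one_lt_norm_add_I hKr hKi
  refine ⟨norm_pos_iff.1 (by linarith), one_pos.trans_le (one_le_re_add_I_div hK hKi),
    re_one_add_sq_pos ?_⟩
  rw [norm_div, div_lt_one (by linarith), norm_exp_two_mul_I]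
  refine lt_of_le_of_lt (Real.exp_le_one_iff.2 ?_) hn
  have : 0 ≤ 2 * κ * (Complex.exp p).im := by positivity
  linarith

/-- The factors of the oscillating model in the lower half of the sector. -/
lemma oscLog_factors_re_pos {κ η : ℝ} (hκ : 0 < κ) (hη : 0 < η) {p : ℂ}
    (hr : 0 < (Complex.exp p).re) (hi : (Complex.exp p).im ≤ 0)
    (hB : modelOsc κ η (Complex.exp p) ≠ 0) :
    2 * η * Complex.exp p - Complex.I ≠ 0 ∧
    0 < ((2 * η * Complex.exp p - Complex.I) / (2 * η * Complex.exp p)).re ∧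
    0 < (1 + (2 * η * Complex.exp p + Complex.I) /
      (Complex.exp (2 * κ * Complex.exp p * Complex.I) ^ 2 *
        (2 * η * Complex.exp p - Complex.I))).re := by
  have hη' : (η : ℂ) ≠ 0 := by exact_mod_cast hη.ne'
  have hK : 2 * η * Complex.exp p ≠ 0 := by simp [hη']
  have e : 2 * η * Complex.exp p = ((2 * η : ℝ) : ℂ) * Complex.exp p := by push_cast; ring
  have hKr : 0 < (2 * η * Complex.exp p).re := by
    rw [e, Complex.re_ofReal_mul]; positivity
  have hKi : (2 * η * Complex.exp p).im ≤ 0 := by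
    rw [e, Complex.im_ofReal_mul]
    exact mul_nonpos_of_nonneg_of_nonpos (by positivity) hi
  have hΛ0 := Complex.exp_ne_zero (2 * κ * Complex.exp p * Complex.I)
  have hΛ : 1 ≤ ‖Complex.exp (2 * κ * Complex.exp p * Complex.I)‖ := by
    rw [norm_exp_two_mul_I]
    refine Real.one_le_exp ?_
    have : 2 * κ * (Complex.exp p).im ≤ 0 := mul_nonpos_of_nonneg_of_nonpos (by positivity) hi
    linarith
  rw [modelOsc_eq κ hη] at hB
  set K := 2 * η * Complex.exp p
  set Λ := Complex.exp (2 * κ * Complex.exp p * Complex.I)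
  have hK1 : K - Complex.I ≠ 0 := fun h => by
    have := congrArg Complex.re h
    simp at this
    linarith
  refine ⟨hK1, one_pos.trans_le (one_le_re_sub_I_div hK hKi), re_one_add_pos ?_ ?_⟩
  · have h1 := norm_add_I_le_norm_sub_I hKi
    have h2 : 0 < ‖K - Complex.I‖ := norm_pos_iff.2 hK1
    rw [norm_div, norm_mul, norm_pow, div_le_one (by positivity)]
    have h3 : 1 ≤ ‖Λ‖ ^ 2 := one_le_pow₀ hΛ
    nlinarith
  · intro h0
    refine hB ?_
    have : Λ⁻¹ * (K + Complex.I) + Λ * (K - Complex.I) =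
        Λ * (K - Complex.I) * (1 + (K + Complex.I) / (Λ ^ 2 * (K - Complex.I))) := by
      field_simp
      ring
    rw [this, h0]
    simp

lemma steadyModel_factorization {K Λ : ℂ} (hK : K ≠ 0) (hKI : K + Complex.I ≠ 0) :
    (K + Complex.I) / K * ((K + Complex.I) / K) * (1 + (Λ / (K + Complex.I)) ^ 2) =
      ((K + Complex.I) ^ 2 + Λ ^ 2) / K ^ 2 := by
  field_simp

lemma oscModel_factorization (E : ℂ) {K Λ : ℂ} (hK : K ≠ 0) (hKI : K - Complex.I ≠ 0)
    (hΛ : Λ ≠ 0) :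
    E * Λ / K * ((K - Complex.I) / K) * (1 + (K + Complex.I) / (Λ ^ 2 * (K - Complex.I))) =
      E * ((Λ⁻¹ * (K + Complex.I) + Λ * (K - Complex.I)) / K ^ 2) := by
  field_simp
  ring

lemma hasDerivAt_steadyLog {κ η : ℝ} (hκ : 0 < κ) (hη : 0 < η) {g : ℂ → ℂ}
    (hg : Differentiable ℂ g) {p : ℂ}
    (hr : 0 < (Complex.exp p).re) (hi : 0 ≤ (Complex.exp p).im)
    (hpos : 0 < (g p / modelSteady κ η (Complex.exp p)).re) :
    HasDerivAt (steadyLog κ η g) (deriv g p / g p) p := by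
  obtain ⟨h0, h1, h2⟩ := steadyLog_factors_re_pos hκ hη hr hi
  have hη' : (η : ℂ) ≠ 0 := by exact_mod_cast hη.ne'
  have hK : ∀ q, 2 * η * Complex.exp q ≠ 0 := by simp [hη']
  have hA0 : modelSteady κ η (Complex.exp p) ≠ 0 := fun h => by simp [h] at hpos
  have d1 : DifferentiableAt ℂ (fun q => (2 * η * Complex.exp q + Complex.I) /
      (2 * η * Complex.exp q)) p :=
    DifferentiableAt.div (by fun_prop) (by fun_prop) (hK p)
  have d2 : DifferentiableAt ℂ (fun q => 1 + (Complex.exp (2 * κ * Complex.exp q * Complex.I) /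
      (2 * η * Complex.exp q + Complex.I)) ^ 2) p := by
    have : DifferentiableAt ℂ (fun q => Complex.exp (2 * κ * Complex.exp q * Complex.I) /
        (2 * η * Complex.exp q + Complex.I)) p :=
      DifferentiableAt.fun_div (by fun_prop) (by fun_prop) h0
    exact (this.fun_pow 2).const_add 1
  have d3 : DifferentiableAt ℂ (fun q => g q / modelSteady κ η (Complex.exp q)) p :=
    (hg p).div (differentiable_modelSteady_exp κ hη p) hA0
  refine hasDerivAt_of_exp_eventuallyEq ?_ ?_
  · unfold steadyLog
    exact (((d1.clog (mem_slitPlane_of_re_pos h1)).const_mul 2).fun_add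
      (d2.clog (mem_slitPlane_of_re_pos h2))).fun_add (d3.clog (mem_slitPlane_of_re_pos hpos))
  · filter_upwards [eventually_ne_zero_of_re_pos d1 h1, eventually_ne_zero_of_re_pos d2 h2,
      eventually_ne_zero_of_re_pos d3 hpos] with q q1 q2 q3
    have hA : modelSteady κ η (Complex.exp q) ≠ 0 := fun h => by simp [h] at q3
    have hKI : 2 * η * Complex.exp q + Complex.I ≠ 0 := fun h => by simp [h] at q1
    rw [steadyLog, Complex.exp_add, Complex.exp_add, two_mul, Complex.exp_add,
      Complex.exp_log q1, Complex.exp_log q2, Complex.exp_log q3]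
    rw [steadyModel_factorization (hK q) hKI, ← modelSteady_eq κ hη, mul_div_cancel₀ _ hA]

lemma hasDerivAt_oscLog {κ η f : ℝ} (hκ : 0 < κ) (hη : 0 < η) {g : ℂ → ℂ}
    (hg : Differentiable ℂ g) {p : ℂ}
    (hr : 0 < (Complex.exp p).re) (hi : (Complex.exp p).im ≤ 0)
    (hpos : 0 < (g p / (fastPhase f (Complex.exp p) * modelOsc κ η (Complex.exp p))).re) :
    HasDerivAt (oscLog κ η f g) (deriv g p / g p) p := by
  have hB0 : fastPhase f (Complex.exp p) * modelOsc κ η (Complex.exp p) ≠ 0 := fun h => by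
    simp [h] at hpos
  obtain ⟨h0, h1, h2⟩ := oscLog_factors_re_pos hκ hη hr hi (right_ne_zero_of_mul hB0)
  have hη' : (η : ℂ) ≠ 0 := by exact_mod_cast hη.ne'
  have hK : ∀ q, 2 * η * Complex.exp q ≠ 0 := by simp [hη']
  have d1 : DifferentiableAt ℂ (fun q => (2 * η * Complex.exp q - Complex.I) /
      (2 * η * Complex.exp q)) p :=
    DifferentiableAt.div (by fun_prop) (by fun_prop) (hK p)
  have d2 : DifferentiableAt ℂ (fun q => 1 + (2 * η * Complex.exp q + Complex.I) /
      (Complex.exp (2 * κ * Complex.exp q * Complex.I) ^ 2 *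
        (2 * η * Complex.exp q - Complex.I))) p := by
    have : DifferentiableAt ℂ (fun q => (2 * η * Complex.exp q + Complex.I) /
        (Complex.exp (2 * κ * Complex.exp q * Complex.I) ^ 2 *
          (2 * η * Complex.exp q - Complex.I))) p :=
      DifferentiableAt.fun_div (by fun_prop) (by fun_prop)
        (mul_ne_zero (pow_ne_zero _ (Complex.exp_ne_zero _)) h0)
    exact this.const_add 1
  have d3 : DifferentiableAt ℂ (fun q => g q / (fastPhase f (Complex.exp q) *
      modelOsc κ η (Complex.exp q))) p := by
    refine (hg p).div (DifferentiableAt.mul ?_ (differentiable_modelOsc_exp κ hη p)) hB0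
    unfold fastPhase
    fun_prop
  have d0 : DifferentiableAt ℂ (fun q => 4 / 3 * Complex.exp q ^ 3 / f * Complex.I +
      2 * κ * Complex.exp q * Complex.I - q - Real.log (2 * η)) p := by fun_prop
  refine hasDerivAt_of_exp_eventuallyEq ?_ ?_
  · unfold oscLog
    exact ((d0.fun_add (d1.clog (mem_slitPlane_of_re_pos h1))).fun_add
      (d2.clog (mem_slitPlane_of_re_pos h2))).fun_add (d3.clog (mem_slitPlane_of_re_pos hpos))
  · filter_upwards [eventually_ne_zero_of_re_pos d1 h1, eventually_ne_zero_of_re_pos d2 h2,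
      eventually_ne_zero_of_re_pos d3 hpos] with q q1 q2 q3
    have hB : fastPhase f (Complex.exp q) * modelOsc κ η (Complex.exp q) ≠ 0 := fun h => by
      simp [h] at q3
    have hKI : 2 * η * Complex.exp q - Complex.I ≠ 0 := fun h => by simp [h] at q1
    rw [oscLog, Complex.exp_add, Complex.exp_add, Complex.exp_add, Complex.exp_sub,
      Complex.exp_sub, Complex.exp_add, Complex.exp_log q1, Complex.exp_log q2,
      Complex.exp_log q3, ← Complex.ofReal_exp, Real.exp_log (by positivity)]
    have e : Complex.exp q * ((2 * η : ℝ) : ℂ) = 2 * η * Complex.exp q := by push_cast; ring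
    rw [show Complex.exp (4 / 3 * Complex.exp q ^ 3 / f * Complex.I) =
      fastPhase f (Complex.exp q) from rfl, div_div, e,
      oscModel_factorization _ (hK q) hKI (Complex.exp_ne_zero _), ← modelOsc_eq κ hη,
      mul_div_cancel₀ _ hB]

lemma abs_steadyLog_im_le {κ η : ℝ} (hκ : 0 < κ) (hη : 0 < η) {g : ℂ → ℂ} {p : ℂ}
    (hr : 0 < (Complex.exp p).re) (hi : 0 ≤ (Complex.exp p).im)
    (hpos : 0 < (g p / modelSteady κ η (Complex.exp p)).re) :
    |(steadyLog κ η g p).im| ≤ 2 * π := by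
  obtain ⟨-, h1, h2⟩ := steadyLog_factors_re_pos hκ hη hr hi
  have i1 := abs_le.1 (abs_log_im_le h1)
  have i2 := abs_le.1 (abs_log_im_le h2)
  have i3 := abs_le.1 (abs_log_im_le hpos)
  rw [steadyLog, Complex.add_im, Complex.add_im, two_mul, Complex.add_im]
  rw [abs_le]
  constructor <;> linarith [i1.1, i1.2, i2.1, i2.2, i3.1, i3.2]

lemma abs_oscLog_im_sub_le {κ η f : ℝ} (hκ : 0 < κ) (hη : 0 < η) {g : ℂ → ℂ} {s : ℝ}
    (hpos : 0 < (g s / (fastPhase f (Complex.exp s) * modelOsc κ η (Complex.exp s))).re) :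
    |(oscLog κ η f g s).im - (4 / 3 * Real.exp s ^ 3 / f + 2 * κ * Real.exp s)| ≤ 3 * π / 2 := by
  have hB0 : fastPhase f (Complex.exp s) * modelOsc κ η (Complex.exp s) ≠ 0 := fun h => by
    simp [h] at hpos
  obtain ⟨-, h1, h2⟩ := oscLog_factors_re_pos (p := s) hκ hη
    (by rw [← Complex.ofReal_exp, Complex.ofReal_re]; positivity)
    (by rw [← Complex.ofReal_exp, Complex.ofReal_im]) (right_ne_zero_of_mul hB0)
  have i1 := abs_le.1 (abs_log_im_le h1)
  have i2 := abs_le.1 (abs_log_im_le h2)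
  have i3 := abs_le.1 (abs_log_im_le hpos)
  have hmain : (4 / 3 * Complex.exp s ^ 3 / f * Complex.I +
      2 * κ * Complex.exp s * Complex.I - s - Real.log (2 * η)).im =
      4 / 3 * Real.exp s ^ 3 / f + 2 * κ * Real.exp s := by
    rw [← Complex.ofReal_exp, show (4 / 3 * ((Real.exp s : ℝ) : ℂ) ^ 3 / f * Complex.I +
      2 * κ * (Real.exp s : ℝ) * Complex.I - s - Real.log (2 * η) : ℂ) =
      ((4 / 3 * Real.exp s ^ 3 / f + 2 * κ * Real.exp s : ℝ) : ℂ) * Complex.I -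
        ((s + Real.log (2 * η) : ℝ) : ℂ) by push_cast; ring]
    rw [Complex.sub_im, Complex.im_ofReal_mul, Complex.ofReal_im, Complex.I_im]
    ring
  rw [oscLog, Complex.add_im, Complex.add_im, Complex.add_im, hmain, abs_le]
  constructor <;> linarith [i1.1, i1.2, i2.1, i2.2, i3.1, i3.2]

lemma differentiable_Df (κ η f : ℝ) : Differentiable ℂ (Df κ η f) := by
  have hcomp : ∀ u : ℂ → ℂ, Differentiable ℂ u → Differentiable ℂ fun z => Ai (u z) :=
    fun u hu => differentiable_Ai.comp hu
  have hα₁ : Differentiable ℂ (alphaP κ f) :=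
    (hcomp _ (by fun_prop)).fun_mul (hcomp _ (by fun_prop))
  have hα₂ : Differentiable ℂ (alphaM κ f) :=
    (hcomp _ (by fun_prop)).fun_mul (hcomp _ (by fun_prop))
  have hβ₁ : Differentiable ℂ (betaP κ f) :=
    (hcomp _ (by fun_prop)).fun_mul (hcomp _ (by fun_prop))
  have hβ₂ : Differentiable ℂ (betaM κ f) :=
    (hcomp _ (by fun_prop)).fun_mul (hcomp _ (by fun_prop))
  unfold Df
  fun_prop

lemma analyticOrderAt_ne_top_of_ne_zero {g : ℂ → ℂ} (hg : Differentiable ℂ g) {w : ℂ}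
    (hw : g w ≠ 0) (z : ℂ) : analyticOrderAt g z ≠ ⊤ := by
  intro htop
  rw [analyticOrderAt_eq_top] at htop
  have := AnalyticOnNhd.eqOn_zero_of_preconnected_of_eventuallyEq_zero (𝕜 := ℂ) (f := g)
    (U := Set.univ) (fun z _ => hg.analyticAt z) isPreconnected_univ (Set.mem_univ z) htop
  exact hw (this (Set.mem_univ _))

lemma finite_zeros_closedBall {g : ℂ → ℂ} (hg : Differentiable ℂ g) {w : ℂ} (hw : g w ≠ 0)
    (R : ℝ) : {z | ‖z‖ ≤ R ∧ g z = 0}.Finite := by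
  by_contra hinf
  obtain ⟨x, -, hx⟩ := Set.Infinite.exists_accPt_of_subset_isCompact hinf
    (isCompact_closedBall (0 : ℂ) R) (fun z hz => by simpa using hz.1)
  rw [accPt_iff_frequently_nhdsNE] at hx
  have := AnalyticOnNhd.eqOn_zero_of_preconnected_of_frequently_eq_zero (𝕜 := ℂ) (f := g)
    (U := Set.univ) (fun z _ => hg.analyticAt z) isPreconnected_univ (Set.mem_univ x)
    (hx.mono fun y hy => hy.2)
  exact hw (this (Set.mem_univ _))

lemma vanishingOrder_eq_analyticOrderNatAt {g : ℂ → ℂ} (hg : Differentiable ℂ g) {z : ℂ}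
    (hz : analyticOrderAt g z ≠ ⊤) : vanishingOrder g z = analyticOrderNatAt g z := by
  have hN := Nat.cast_analyticOrderNatAt hz
  set N := analyticOrderNatAt g z with hN_def
  have key : ∀ n : ℕ, n ≤ N ↔ ∀ i < n, iteratedDeriv i g z = 0 := fun n => by
    rw [← natCast_le_analyticOrderAt_iff_iteratedDeriv_eq_zero (hg.analyticAt z), ← hN]
    exact Nat.cast_le.symm
  have hbelow : ∀ i < N, iteratedDeriv i g z = 0 := (key N).1 le_rfl
  have hat : iteratedDeriv N g z ≠ 0 := fun h => by
    have : N + 1 ≤ N := (key (N + 1)).2 fun i hi => by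
      rcases Nat.lt_succ_iff_lt_or_eq.1 hi with h' | h'
      · exact hbelow i h'
      · rw [h', h]
    omega
  refine le_antisymm (Nat.sInf_le hat) (le_csInf ⟨N, hat⟩ fun n hn => ?_)
  by_contra hlt
  exact hn (hbelow n (not_le.1 hlt))

lemma analyticOrderNatAt_comp_exp_sq (g : ℂ → ℂ) (p : ℂ) :
    analyticOrderNatAt (fun q => g (Complex.exp q ^ 2)) p =
      analyticOrderNatAt g (Complex.exp p ^ 2) := by
  have hd : Differentiable ℂ fun q : ℂ => Complex.exp q ^ 2 := by fun_prop
  have hder : deriv (fun q : ℂ => Complex.exp q ^ 2) p ≠ 0 := by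
    have := ((Complex.hasDerivAt_exp p).fun_pow 2).deriv
    rw [this]
    simp
  have := analyticOrderAt_comp_of_deriv_ne_zero (f := g) (hd.analyticAt p) hder
  exact congrArg ENat.toNat this

lemma mem_rectBoundary_exp {rl ru c : ℝ} (hrl : 0 < rl) (hru : 0 < ru) {p : ℂ}
    (hp : p ∈ rectBoundary (Real.log rl) (Real.log ru) c) :
    rl ≤ ‖Complex.exp p‖ ∧ |p.im| ≤ c ∧
      (‖Complex.exp p‖ = rl ∨ ‖Complex.exp p‖ = ru ∨ |p.im| = c) := by
  obtain ⟨h1, h2, h3, h4⟩ := hp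
  rw [Complex.norm_exp]
  refine ⟨(Real.log_le_iff_le_exp hrl).1 h1, h3, ?_⟩
  rcases h4 with h | h | h
  · left; rw [h, Real.exp_log hrl]
  · right; left; rw [h, Real.exp_log hru]
  · exact Or.inr (Or.inr h)

/-- Number of zeros of `D_f` in a half-annulus whose radii are good. -/
lemma abs_two_pi_mul_sum_sub_le {κ η : ℝ} (hκ : 0 < κ) (hη : 0 < η) :
    ∃ M > 0, ∀ t > 0, M * t ≤ 1 → ∀ rl ru : ℝ, t ≤ rl → rl ≤ ru →
      GoodRadius κ η t rl → GoodRadius κ η t ru →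
      ∃ hfin : {z : ℂ | 0 < z.re ∧ rl ^ 2 < ‖z‖ ∧ ‖z‖ < ru ^ 2 ∧
          Df κ η (t ^ 100) z = 0}.Finite,
        |2 * π * (∑ z ∈ hfin.toFinset, (vanishingOrder (Df κ η (t ^ 100)) z : ℝ)) -
          (4 / 3 * ru ^ 3 / t ^ 100 + 2 * κ * ru - (4 / 3 * rl ^ 3 / t ^ 100 + 2 * κ * rl))| ≤
          7 * π := by
  classical
  obtain ⟨M, hM, H⟩ := re_Df_div_model_pos hκ hη
  refine ⟨M, hM, fun t ht hMt rl ru hrl hlu hgl hgu => ?_⟩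
  have hrlp : 0 < rl := ht.trans_le hrl
  have hrup : 0 < ru := hrlp.trans_le hlu
  have hpi := Real.pi_pos
  set D := Df κ η (t ^ 100) with hD
  have hDd : Differentiable ℂ D := differentiable_Df κ η (t ^ 100)
  set g : ℂ → ℂ := fun p => D (Complex.exp p ^ 2) with hg
  have hgd : Differentiable ℂ g := hDd.comp (by fun_prop)
  set a := Real.log rl with ha
  set b := Real.log ru with hb
  have hab : a ≤ b := Real.log_le_log hrlp hlu
  have hbd : ∀ p ∈ rectBoundary a b (π / 4),
      0 < (Complex.exp p).re ∧
      (0 ≤ p.im → 0 ≤ (Complex.exp p).im ∧ 0 < (g p / modelSteady κ η (Complex.exp p)).re) ∧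
      (p.im ≤ 0 → (Complex.exp p).im ≤ 0 ∧ 0 < (g p / (fastPhase (t ^ 100) (Complex.exp p) *
        modelOsc κ η (Complex.exp p))).re) := by
    intro p hp
    obtain ⟨h1, h2, h3⟩ := mem_rectBoundary_exp hrlp hrup hp
    have h4 := H t ht hMt p h2 (hrl.trans h1) (by
      rcases h3 with h | h | h
      · left; rw [h]; exact hgl
      · left; rw [h]; exact hgu
      · exact Or.inr h)
    have h5 := abs_le.1 h2
    refine ⟨exp_re_pos h2, fun h => ⟨?_, h4.1 h⟩, fun h => ⟨?_, h4.2 h⟩⟩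
    · rw [Complex.exp_im]
      exact mul_nonneg (Real.exp_pos _).le (Real.sin_nonneg_of_nonneg_of_le_pi h (by linarith))
    · rw [Complex.exp_im]
      exact mul_nonpos_of_nonneg_of_nonpos (Real.exp_pos _).le
        (Real.sin_nonpos_of_nonpos_of_neg_pi_le h (by linarith))
  have hne : ∀ p ∈ rectBoundary a b (π / 4), g p ≠ 0 := by
    intro p hp h0
    obtain ⟨-, h1, h2⟩ := hbd p hp
    rcases le_total 0 p.im with h | h
    · have := (h1 h).2
      simp [h0] at this
    · have := (h2 h).2
      simp [h0] at this
  have hamem : (a : ℂ) ∈ rectBoundary a b (π / 4) := by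
    simp [rectBoundary, hab, (by positivity : (0 : ℝ) ≤ π / 4)]
  have hbmem : (b : ℂ) ∈ rectBoundary a b (π / 4) := by
    simp [rectBoundary, hab, (by positivity : (0 : ℝ) ≤ π / 4)]
  have hw : D (Complex.exp a ^ 2) ≠ 0 := hne _ hamem
  have hfin : {z : ℂ | 0 < z.re ∧ rl ^ 2 < ‖z‖ ∧ ‖z‖ < ru ^ 2 ∧ D z = 0}.Finite :=
    (finite_zeros_closedBall hDd hw (ru ^ 2)).subset fun z hz => ⟨hz.2.2.1.le, hz.2.2.2⟩
  refine ⟨hfin, ?_⟩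
  have hexp : ∀ z : ℂ, z ≠ 0 → Complex.exp (Complex.log z / 2) ^ 2 = z := fun z hz => by
    rw [← Complex.exp_nat_mul]
    push_cast
    rw [mul_div_cancel₀ _ (two_ne_zero), Complex.exp_log hz]
  have hne0 : ∀ z ∈ hfin.toFinset, z ≠ 0 := fun z hz h0 => by
    rw [Set.Finite.mem_toFinset] at hz
    have := hz.1
    simp [h0] at this
  set S := hfin.toFinset.image fun z => Complex.log z / 2 with hS_def
  have hlogsq : ∀ r : ℝ, 0 < r → Real.log r = Real.log (r ^ 2) / 2 := fun r _ => by
    rw [Real.log_pow]; push_cast; ring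
  have hS : ∀ ρ, ρ ∈ S ↔ a < ρ.re ∧ ρ.re < b ∧ |ρ.im| < π / 4 ∧ g ρ = 0 := by
    intro ρ
    rw [hS_def, Finset.mem_image]
    constructor
    · rintro ⟨z, hz, rfl⟩
      have hz0 := hne0 z hz
      rw [Set.Finite.mem_toFinset] at hz
      obtain ⟨z1, z2, z3, z4⟩ := hz
      have hre : (Complex.log z / 2).re = Real.log ‖z‖ / 2 := by
        rw [show (2 : ℂ) = ((2 : ℝ) : ℂ) by norm_num, Complex.div_ofReal_re, Complex.log_re]
      have him : (Complex.log z / 2).im = Complex.arg z / 2 := by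
        rw [show (2 : ℂ) = ((2 : ℝ) : ℂ) by norm_num, Complex.div_ofReal_im, Complex.log_im]
      have harg := Complex.abs_arg_lt_pi_div_two_iff.2 (Or.inl z1)
      refine ⟨?_, ?_, ?_, ?_⟩
      · rw [hre, ha, hlogsq rl hrlp]
        have := Real.log_lt_log (by positivity) z2
        linarith
      · rw [hre, hb, hlogsq ru hrup]
        have := Real.log_lt_log (norm_pos_iff.2 hz0) z3
        linarith
      · rw [him, abs_div, abs_two]
        linarith
      · simp only [hg]
        rw [hexp z hz0, z4]
    · rintro ⟨h1, h2, h3, h4⟩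
      have h3' := abs_lt.1 h3
      have e2 : Complex.exp ρ ^ 2 = Complex.exp (2 * ρ) := by
        rw [← Complex.exp_nat_mul]; push_cast; ring_nf
      have h2im : (2 * ρ).im = 2 * ρ.im := by simp
      have hnorm : ‖Complex.exp ρ ^ 2‖ = Real.exp ρ.re ^ 2 := by rw [norm_pow, Complex.norm_exp]
      refine ⟨Complex.exp ρ ^ 2, ?_, ?_⟩
      · rw [Set.Finite.mem_toFinset]
        refine ⟨?_, ?_, ?_, h4⟩
        · rw [e2, Complex.exp_re, h2im]
          exact mul_pos (Real.exp_pos _)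
            (Real.cos_pos_of_mem_Ioo ⟨by linarith [h3'.1], by linarith [h3'.2]⟩)
        · rw [hnorm]
          have := (Real.log_lt_iff_lt_exp hrlp).1 h1
          gcongr
        · rw [hnorm]
          have := (Real.lt_log_iff_exp_lt hrup).1 h2
          gcongr
      · rw [e2, Complex.log_exp (by rw [h2im]; linarith [h3'.1]) (by rw [h2im]; linarith [h3'.2])]
        ring
  have hcount := two_pi_I_mul_sum_order (L₁ := oscLog κ η (t ^ 100) g) (L₂ := steadyLog κ η g)
    hab (by positivity) hgd hne
    (fun p hp h => hasDerivAt_oscLog hκ hη hgd (hbd p hp).1 ((hbd p hp).2.2 h).1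
      ((hbd p hp).2.2 h).2)
    (fun p hp h => hasDerivAt_steadyLog hκ hη hgd (hbd p hp).1 ((hbd p hp).2.1 h).1
      ((hbd p hp).2.1 h).2) S hS
  have hsum : ∑ ρ ∈ S, (analyticOrderNatAt g ρ : ℂ) =
      ((∑ z ∈ hfin.toFinset, (vanishingOrder D z : ℝ) : ℝ) : ℂ) := by
    rw [hS_def, Finset.sum_image]
    · push_cast
      refine Finset.sum_congr rfl fun z hz => ?_
      rw [vanishingOrder_eq_analyticOrderNatAt hDd (analyticOrderAt_ne_top_of_ne_zero hDd hw z)]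
      simp only [hg]
      rw [analyticOrderNatAt_comp_exp_sq, hexp z (hne0 z hz)]
    · intro z hz w hw' hzw
      rw [← hexp z (hne0 z hz), ← hexp w (hne0 w hw')]
      exact congrArg (fun u => Complex.exp u ^ 2) hzw
  rw [hsum] at hcount
  have him := congrArg Complex.im hcount
  set N := ∑ z ∈ hfin.toFinset, (vanishingOrder D z : ℝ)
  rw [show (2 * π * Complex.I * (N : ℂ)) = ((2 * π * N : ℝ) : ℂ) * Complex.I by push_cast; ring,
    Complex.im_ofReal_mul, Complex.I_im, mul_one, Complex.add_im, Complex.sub_im,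
    Complex.sub_im] at him
  have i1 := abs_le.1 (abs_oscLog_im_sub_le hκ hη ((hbd a hamem).2.2 (by simp)).2)
  have i2 := abs_le.1 (abs_oscLog_im_sub_le hκ hη ((hbd b hbmem).2.2 (by simp)).2)
  have i3 := abs_le.1 (abs_steadyLog_im_le hκ hη (hbd a hamem).1
    ((hbd a hamem).2.1 (by simp)).1 ((hbd a hamem).2.1 (by simp)).2)
  have i4 := abs_le.1 (abs_steadyLog_im_le hκ hη (hbd b hbmem).1
    ((hbd b hbmem).2.1 (by simp)).1 ((hbd b hbmem).2.1 (by simp)).2)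
  rw [ha, Real.exp_log hrlp] at i1
  rw [hb, Real.exp_log hrup] at i2
  rw [abs_le]
  constructor <;> linarith [i1.1, i1.2, i2.1, i2.2, i3.1, i3.2, i4.1, i4.2]

lemma rpow_three_halves {x : ℝ} (hx : 0 ≤ x) : x ^ ((3 : ℝ) / 2) = √x ^ 3 := by
  rw [Real.sqrt_eq_rpow, ← Real.rpow_natCast, ← Real.rpow_mul hx]
  norm_num

lemma cube_bounds {r s : ℝ} (hs : 0 < s) (h₁ : s - s / 100000 ≤ r) (h₂ : r ≤ s + s / 100000) :
    s ^ 3 - s ^ 3 / 10000 ≤ r ^ 3 ∧ r ^ 3 ≤ s ^ 3 + s ^ 3 / 10000 := by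
  have hs3 : 0 < s ^ 3 := by positivity
  have hlo : (s - s / 100000) ^ 3 ≤ r ^ 3 := pow_le_pow_left₀ (by linarith) h₁ 3
  have hhi : r ^ 3 ≤ (s + s / 100000) ^ 3 := pow_le_pow_left₀ (by linarith) h₂ 3
  have e₁ : (s - s / 100000) ^ 3 = s ^ 3 * (1 - 1 / 100000) ^ 3 := by ring
  have e₂ : (s + s / 100000) ^ 3 = s ^ 3 * (1 + 1 / 100000) ^ 3 := by ring
  norm_num at e₁ e₂
  constructor <;> linarith

lemma mul_le_of_sq_gt {t s : ℝ} (ht : 0 < t) (ht' : t ≤ 1 / 10000) (hs : 0 < s)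
    (h : t < s ^ 2) : 100 * t ≤ s := by
  refine le_of_sq_le_sq ?_ hs.le
  nlinarith

/-- The elementary estimates turning the phase count into the stated bounds. -/
lemma count_bounds {κ t s S rl ru N : ℝ} (hκ : 0 < κ) (ht : 0 < t) (ht' : t ≤ 1 / 10000)
    (hκt : κ * t ≤ 1 / 1000) (hs : 0 < s) (hS : 0 < S) (hst : t < s ^ 2)
    (hsS : 2 * s ^ 2 < S ^ 2) (hl₁ : s - s / 100000 ≤ rl) (hl₂ : rl ≤ s + s / 100000)
    (hu₁ : S - S / 100000 ≤ ru) (hu₂ : ru ≤ S + S / 100000) (hru : rl ≤ ru)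
    (hN : |2 * π * N - (4 / 3 * ru ^ 3 / t ^ 100 + 2 * κ * ru
      - (4 / 3 * rl ^ 3 / t ^ 100 + 2 * κ * rl))| ≤ 7 * π) :
    S ^ 3 - 5 / 3 * s ^ 3 < 2 * π * t ^ 100 * N ∧
      2 * π * t ^ 100 * N < 5 / 3 * S ^ 3 - s ^ 3 := by
  have hs3 : 0 < s ^ 3 := by positivity
  have hS3 : 0 < S ^ 3 := by positivity
  have hf : 0 < t ^ 100 := by positivity
  have ht1 : t ≤ 1 := by linarith
  have hSt : t < S ^ 2 := by linarith
  have hS100 : 100 * t ≤ S := mul_le_of_sq_gt ht ht' hS hSt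
  have hf3 : t ^ 100 ≤ t ^ 3 := pow_le_pow_of_le_one ht.le ht1 (by norm_num)
  have hf2 : t ^ 100 ≤ t ^ 2 := pow_le_pow_of_le_one ht.le ht1 (by norm_num)
  have hcube : (100 * t) ^ 3 ≤ S ^ 3 := pow_le_pow_left₀ (by positivity) hS100 3
  have hπf : 7 * π * t ^ 100 ≤ S ^ 3 / 100 := by
    have h₁ : 7 * π * t ^ 100 ≤ 28 * t ^ 3 :=
      mul_le_mul (by linarith [Real.pi_le_four]) hf3 hf.le (by norm_num)
    have h₂ : 0 < t ^ 3 := by positivity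
    have h₃ : (100 * t) ^ 3 = 1000000 * t ^ 3 := by ring
    linarith
  have hκf : 2 * κ * ru * t ^ 100 ≤ S ^ 3 / 100 := by
    have h₁ : κ * t ^ 100 ≤ S ^ 2 / 1000 := by
      calc κ * t ^ 100 ≤ κ * t ^ 2 := by gcongr
        _ = κ * t * t := by ring
        _ ≤ 1 / 1000 * t := by gcongr
        _ ≤ S ^ 2 / 1000 := by linarith
    have h₂ : ru ≤ 2 * S := by linarith
    calc 2 * κ * ru * t ^ 100 = 2 * ru * (κ * t ^ 100) := by ring
      _ ≤ 2 * (2 * S) * (S ^ 2 / 1000) := by gcongr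
      _ ≤ S ^ 3 / 100 := by
        have : 2 * (2 * S) * (S ^ 2 / 1000) = S ^ 3 / 250 := by ring
        linarith
  have hκ0 : 0 ≤ 2 * κ * rl * t ^ 100 := by
    have : 0 ≤ rl := by linarith
    positivity
  have hκd : 2 * κ * rl * t ^ 100 ≤ 2 * κ * ru * t ^ 100 := by gcongr
  obtain ⟨hl₃, hl₄⟩ := cube_bounds hs hl₁ hl₂
  obtain ⟨hu₃, hu₄⟩ := cube_bounds hS hu₁ hu₂
  obtain ⟨hN₁, hN₂⟩ := abs_le.1 hN
  have e : (2 * π * N - (4 / 3 * ru ^ 3 / t ^ 100 + 2 * κ * ru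
      - (4 / 3 * rl ^ 3 / t ^ 100 + 2 * κ * rl))) * t ^ 100
      = 2 * π * t ^ 100 * N - 4 / 3 * ru ^ 3 + 4 / 3 * rl ^ 3 - 2 * κ * ru * t ^ 100
        + 2 * κ * rl * t ^ 100 := by
    field_simp
    ring
  have hN₃ := mul_le_mul_of_nonneg_right hN₁ hf.le
  have hN₄ := mul_le_mul_of_nonneg_right hN₂ hf.le
  rw [e] at hN₃ hN₄
  constructor <;> linarith

/-- Counting of the resonances of the Stark Hamiltonian in the right half-plane
annulus `{Rl ≤ |z| < Ru, Re z > 0}`: their number `N`, with multiplicity, is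
finite and comparable with `R^{3/2}/f`. -/
theorem stmt11 (κ η : ℝ) (hκ : 0 < κ) (hη : 0 < η) (ε : ℝ) (hε : 0 < ε) :
    ∃ f₀ > (0 : ℝ), ∀ f : ℝ, 0 < f → f < f₀ → ∀ Rl Ru : ℝ,
      f ^ ((1 : ℝ) / 100) < Rl → 2 * Rl < Ru →
      ∃ hfin : {z : ℂ | 0 < z.re ∧ Rl ≤ ‖z‖ ∧ ‖z‖ < Ru ∧
          Df κ η f z = 0}.Finite,
        ((1 - ε) / (2 * π * f)) * (Ru ^ ((3 : ℝ) / 2) - (5 / 3) * Rl ^ ((3 : ℝ) / 2)) <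
          (∑ z ∈ hfin.toFinset, (vanishingOrder (Df κ η f) z : ℝ)) ∧
        (∑ z ∈ hfin.toFinset, (vanishingOrder (Df κ η f) z : ℝ)) <
          ((1 + ε) / (2 * π * f)) * ((5 / 3) * Ru ^ ((3 : ℝ) / 2) - Rl ^ ((3 : ℝ) / 2)) := by
  obtain ⟨M₁, hM₁, hgood⟩ := exists_goodRadius hκ hη
  obtain ⟨M₂, hM₂, hcount⟩ := abs_two_pi_mul_sum_sub_le hκ hη
  set M : ℝ := M₁ + M₂ + 1000 * κ + 10000 with hM_def
  have hM : 0 < M := by positivity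
  refine ⟨(1 / M) ^ 100, by positivity, fun f hf hff Rl Ru hRl hRu => ?_⟩
  set t : ℝ := f ^ ((1 : ℝ) / 100) with ht_def
  have ht : 0 < t := Real.rpow_pos_of_pos hf _
  have hft : t ^ 100 = f := by
    rw [ht_def, ← Real.rpow_natCast, ← Real.rpow_mul hf.le]
    norm_num
  rw [← hft] at hff hf ⊢
  have htM : t < 1 / M := lt_of_pow_lt_pow_left₀ 100 (by positivity) hff
  have hMt : M * t ≤ 1 := by
    rw [lt_div_iff₀ hM] at htM
    linarith
  have hsplit : M₁ * t + M₂ * t + 1000 * (κ * t) + 10000 * t ≤ 1 := by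
    rw [hM_def] at hMt
    linarith
  have hM₁t : 0 < M₁ * t := by positivity
  have hM₂t : 0 < M₂ * t := by positivity
  have hκt : 0 < κ * t := by positivity
  have ht' : t ≤ 1 / 10000 := by linarith
  have hRl0 : 0 < Rl := ht.trans hRl
  have hRu0 : 0 < Ru := by linarith
  rw [rpow_three_halves hRl0.le, rpow_three_halves hRu0.le]
  set s := √Rl with hs_def
  set S := √Ru with hS_def
  have hs : 0 < s := Real.sqrt_pos.2 hRl0
  have hS : 0 < S := Real.sqrt_pos.2 hRu0
  have hs2 : s ^ 2 = Rl := Real.sq_sqrt hRl0.le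
  have hS2 : S ^ 2 = Ru := Real.sq_sqrt hRu0.le
  have hst : t < s ^ 2 := by rwa [hs2]
  have hsS : 2 * s ^ 2 < S ^ 2 := by rwa [hs2, hS2]
  have hs100 := mul_le_of_sq_gt ht ht' hs hst
  have hsS' : 5 / 4 * s ≤ S := by
    refine le_of_sq_le_sq ?_ hS.le
    nlinarith
  have htt : t ^ 2 ≤ t / 10000 := by nlinarith
  have htt0 : 0 < t ^ 2 := by positivity
  obtain ⟨a, ha₁, ha₂, ha⟩ := hgood t ht (by linarith) (s - 3 * t ^ 2) (by linarith)
  obtain ⟨b, hb₁, hb₂, hb⟩ := hgood t ht (by linarith) s (by linarith)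
  obtain ⟨c, hc₁, hc₂, hc⟩ := hgood t ht (by linarith) (S - 3 * t ^ 2) (by linarith)
  obtain ⟨d, hd₁, hd₂, hd⟩ := hgood t ht (by linarith) S (by linarith)
  obtain ⟨hfin₁, hcount₁⟩ := hcount t ht (by linarith) a d (by linarith) (by linarith) ha hd
  obtain ⟨hfin₂, hcount₂⟩ := hcount t ht (by linarith) b c (by linarith) (by linarith) hb hc
  have hκt' : κ * t ≤ 1 / 1000 := by linarith
  have hupper := (count_bounds hκ ht ht' hκt' hs hS hst hsS (by linarith) (by linarith)
    (by linarith) (by linarith) (by linarith) hcount₁).2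
  have hlower := (count_bounds hκ ht ht' hκt' hs hS hst hsS (by linarith) (by linarith)
    (by linarith) (by linarith) (by linarith) hcount₂).1
  have haRl : a ^ 2 < Rl := by
    rw [← hs2]
    exact pow_lt_pow_left₀ (by linarith) (by linarith) two_ne_zero
  have hbRl : Rl ≤ b ^ 2 := by
    rw [← hs2]
    exact pow_le_pow_left₀ hs.le hb₁ 2
  have hcRu : c ^ 2 ≤ Ru := by
    rw [← hS2]
    exact pow_le_pow_left₀ (by linarith) (by linarith) 2
  have hdRu : Ru ≤ d ^ 2 := by
    rw [← hS2]
    exact pow_le_pow_left₀ hS.le hd₁ 2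
  have hsub₁ : {z : ℂ | 0 < z.re ∧ Rl ≤ ‖z‖ ∧ ‖z‖ < Ru ∧ Df κ η (t ^ 100) z = 0} ⊆
      {z : ℂ | 0 < z.re ∧ a ^ 2 < ‖z‖ ∧ ‖z‖ < d ^ 2 ∧ Df κ η (t ^ 100) z = 0} :=
    fun z ⟨h₁, h₂, h₃, h₄⟩ => ⟨h₁, haRl.trans_le h₂, h₃.trans_le hdRu, h₄⟩
  have hsub₂ : {z : ℂ | 0 < z.re ∧ b ^ 2 < ‖z‖ ∧ ‖z‖ < c ^ 2 ∧ Df κ η (t ^ 100) z = 0} ⊆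
      {z : ℂ | 0 < z.re ∧ Rl ≤ ‖z‖ ∧ ‖z‖ < Ru ∧ Df κ η (t ^ 100) z = 0} :=
    fun z ⟨h₁, h₂, h₃, h₄⟩ => ⟨h₁, hbRl.trans h₂.le, h₃.trans_le hcRu, h₄⟩
  have hfin := hfin₁.subset hsub₁
  refine ⟨hfin, ?_⟩
  have hle₁ : (∑ z ∈ hfin.toFinset, (vanishingOrder (Df κ η (t ^ 100)) z : ℝ)) ≤
      ∑ z ∈ hfin₁.toFinset, (vanishingOrder (Df κ η (t ^ 100)) z : ℝ) :=
    Finset.sum_le_sum_of_subset_of_nonneg (Set.Finite.toFinset_subset_toFinset.2 hsub₁)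
      fun _ _ _ => Nat.cast_nonneg _
  have hle₂ : (∑ z ∈ hfin₂.toFinset, (vanishingOrder (Df κ η (t ^ 100)) z : ℝ)) ≤
      ∑ z ∈ hfin.toFinset, (vanishingOrder (Df κ η (t ^ 100)) z : ℝ) :=
    Finset.sum_le_sum_of_subset_of_nonneg (Set.Finite.toFinset_subset_toFinset.2 hsub₂)
      fun _ _ _ => Nat.cast_nonneg _
  have hpos : 0 < 2 * π * t ^ 100 := by positivity
  have hs3 : 0 < s ^ 3 := by positivity
  have hcube : (5 / 4 * s) ^ 3 ≤ S ^ 3 := pow_le_pow_left₀ (by positivity) hsS' 3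
  have hcube' : (5 / 4 * s) ^ 3 = 125 / 64 * s ^ 3 := by ring
  have hεl : 0 ≤ ε * (S ^ 3 - 5 / 3 * s ^ 3) := mul_nonneg hε.le (by linarith)
  have hεu : 0 ≤ ε * (5 / 3 * S ^ 3 - s ^ 3) := mul_nonneg hε.le (by linarith)
  have hlower' := hlower.trans_le (mul_le_mul_of_nonneg_left hle₂ hpos.le)
  have hupper' := (mul_le_mul_of_nonneg_left hle₁ hpos.le).trans_lt hupper
  constructor
  · rw [div_mul_eq_mul_div, div_lt_iff₀ hpos]
    linarith
  · rw [div_mul_eq_mul_div, lt_div_iff₀ hpos]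
    linarith
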